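/- Let R be a local Cohen–Macaulay ring with infinite residue field and let I be an R-ideal of analytic spread ℓ with ht I > 0, satisfying G_ℓ and AN_{ℓ−1}^−, universally weakly (ℓ−1)-residually S₂, and such that J : I does not depend on the minimal reduction J of I. Assume in addition that R is a normal ring and I is a normal ideal. Then for every minimal reduction J of I the ideal (J : I)·I^j is integrally closed for every j ≥ 0; in particular J : I and core(I) are integrally closed. -/

import Mathlib

open IsLocalRing

universe u v

namespace CPU

section Defs

variable {R : Type u} [CommRing R]

/-- The minimal number of generators of a submodule, as an extended natural number. -/
noncomputable def muE {M : Type v} [AddCommGroup M] [Module R M] (N : Submodule R M) : ℕ∞ :=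
  sInf {n : ℕ∞ | ∃ s : Finset M, (s.card : ℕ∞) = n ∧ Submodule.span R (s : Set M) = N}

/-- The Krull dimension of a ring, valued in `WithBot ℕ∞`. -/
noncomputable def rDim (S : Type v) [CommRing S] : WithBot ℕ∞ :=
  ringKrullDim S

/-- `J` is a reduction of `I`. -/
def IsReduction (J I : Ideal R) : Prop :=
  J ≤ I ∧ ∃ r : ℕ, I ^ (r + 1) = J * I ^ r

/-- `J` is a minimal reduction of `I`. -/
def IsMinimalReduction (J I : Ideal R) : Prop :=
  IsReduction J I ∧ ∀ J' : Ideal R, IsReduction J' I → J' ≤ J → J' = J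

/-- The core of an ideal: the intersection of all of its minimal reductions. -/
noncomputable def core (I : Ideal R) : Ideal R :=
  sInf {J : Ideal R | IsMinimalReduction J I}

/-- The reduction number of `I`. -/
noncomputable def reductionNumber (I : Ideal R) : ℕ∞ :=
  sInf {n : ℕ∞ | ∃ r : ℕ, (r : ℕ∞) = n ∧ ∃ J : Ideal R,
    IsMinimalReduction J I ∧ I ^ (r + 1) = J * I ^ r}

/-- `γ(I)`: the least number of minimal reductions whose intersection is the core. -/
noncomputable def gamma (I : Ideal R) : ℕ∞ :=
  sInf {n : ℕ∞ | ∃ t : ℕ, (t : ℕ∞) = n ∧ ∃ Js : Fin t → Ideal R,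
    (∀ i, IsMinimalReduction (Js i) I) ∧ core I = ⨅ i, Js i}

/-- The height of an ideal. -/
noncomputable def ht (I : Ideal R) : WithBot ℕ∞ :=
  ⨅ (p : PrimeSpectrum R) (_ : I ≤ p.asIdeal),
    rDim (Localization.AtPrime p.asIdeal)

/-- The Krull dimension of the special fiber ring of `I`,
i.e. the analytic spread of `I`. -/
noncomputable def fiberDim [IsLocalRing R] (I : Ideal R) : WithBot ℕ∞ :=
  rDim (↥(reesAlgebra I) ⧸
    (Ideal.map (algebraMap R ↥(reesAlgebra I)) (maximalIdeal R)))

/-- The condition `G_s`. -/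
def Gcond (I : Ideal R) (s : ℕ) : Prop :=
  ∀ p : PrimeSpectrum R, I ≤ p.asIdeal →
    rDim (Localization.AtPrime p.asIdeal) < (s : WithBot ℕ∞) →
    (muE (Ideal.map (algebraMap R (Localization.AtPrime p.asIdeal)) I) : WithBot ℕ∞) ≤
      rDim (Localization.AtPrime p.asIdeal)

/-- Depth of a module over a local ring, via lengths of regular sequences in the
maximal ideal. -/
noncomputable def mDepth (R : Type u) [CommRing R] [IsLocalRing R]
    (M : Type v) [AddCommGroup M] [Module R M] : ℕ∞ :=
  sSup {n : ℕ∞ | ∃ rs : List R, (∀ x ∈ rs, x ∈ maximalIdeal R) ∧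
    RingTheory.Sequence.IsRegular M rs ∧ (rs.length : ℕ∞) = n}

/-- Depth of the quotient `R/K` of a local ring `R`. -/
noncomputable def qDepth (R : Type u) [CommRing R] [IsLocalRing R] (K : Ideal R) : ℕ∞ :=
  mDepth R (R ⧸ K)

/-- The socle of `R/K`, for `R` local. -/
noncomputable def socle (R : Type u) [CommRing R] [IsLocalRing R] (K : Ideal R) :
    Ideal (R ⧸ K) :=
  Submodule.colon (⊥ : Ideal (R ⧸ K)) (Ideal.map (Ideal.Quotient.mk K) (maximalIdeal R))

/-- The Cohen–Macaulay type of the quotient `R/K` of a local ring `R`. -/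
noncomputable def qType (R : Type u) [CommRing R] [IsLocalRing R] (K : Ideal R) : ℕ∞ :=
  sInf {n : ℕ∞ | ∃ rs : List R, (∀ x ∈ rs, x ∈ maximalIdeal R) ∧
    RingTheory.Sequence.IsRegular (R ⧸ K) rs ∧ (rs.length : ℕ∞) = qDepth R K ∧
    muE (socle R (K ⊔ Ideal.ofList rs)) = n}

/-- Cohen–Macaulayness for a quotient `R/K` of a local ring `R`. -/
def IsCMQuot (R : Type u) [CommRing R] [IsLocalRing R] (K : Ideal R) : Prop :=
  rDim (R ⧸ K) = (qDepth R K : WithBot ℕ∞)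

/-- A Cohen–Macaulay local ring: depth equals Krull dimension. -/
def IsCMLocalRing (R : Type u) [CommRing R] [IsLocalRing R] : Prop :=
  rDim R = (qDepth R (⊥ : Ideal R) : WithBot ℕ∞)

/-- A Gorenstein local ring: Cohen–Macaulay of type one. -/
def IsGorensteinLocalRing (R : Type u) [CommRing R] [IsLocalRing R] : Prop :=
  IsCMLocalRing R ∧ qType R (⊥ : Ideal R) = 1

/-- Gorensteinness of the quotient ring `R/K` of a local ring. -/
def IsGorQuot (R : Type u) [CommRing R] [IsLocalRing R] (K : Ideal R) : Prop :=
  IsCMQuot R K ∧ qType R K = 1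

/-- A regular local ring: the maximal ideal is generated by `dim R` elements. -/
def IsRegularLocal (R : Type u) [CommRing R] [IsLocalRing R] : Prop :=
  IsNoetherianRing R ∧ (muE (maximalIdeal R) : WithBot ℕ∞) = rDim R

/-- Serre's condition `S₂` for the quotient ring `R/K`. -/
def QuotS2 (K : Ideal R) : Prop :=
  ∀ (q : Ideal R) (hq : q.IsPrime), K ≤ q →
    letI := hq
    min 2 (rDim ((Localization.AtPrime q) ⧸
        (Ideal.map (algebraMap R (Localization.AtPrime q)) K)))
      ≤ (qDepth (Localization.AtPrime q)
          (Ideal.map (algebraMap R (Localization.AtPrime q)) K) : WithBot ℕ∞)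

/-- `K` is an `s`-residual intersection of `I`. -/
def IsResidualIntersection (I K : Ideal R) (s : ℕ) : Prop :=
  K ≠ ⊤ ∧ ht I ≤ (s : WithBot ℕ∞) ∧ (s : WithBot ℕ∞) ≤ ht K ∧
    ∃ a : Ideal R, a ≤ I ∧ (∃ f : Finset R, f.card ≤ s ∧ Ideal.span (f : Set R) = a) ∧
      K = Submodule.colon a I

/-- `K` is a geometric `s`-residual intersection of `I`. -/
def IsGeometricRI (I K : Ideal R) (s : ℕ) : Prop :=
  IsResidualIntersection I K s ∧ (s : WithBot ℕ∞) + 1 ≤ ht (I ⊔ K)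

/-- `I` is weakly `s`-residually `S₂`. -/
def WeaklyResS2 (I : Ideal R) (s : ℕ) : Prop :=
  ∀ i ≤ s, ∀ K : Ideal R, IsGeometricRI I K i → QuotS2 K

/-- The condition `AN_s` for `I`. -/
def ANcond [IsLocalRing R] (I : Ideal R) (s : ℕ) : Prop :=
  ∀ i ≤ s, ∀ K : Ideal R, IsResidualIntersection I K i → IsCMQuot R K

/-- The condition `AN_s⁻` for `I`. -/
def ANminus [IsLocalRing R] (I : Ideal R) (s : ℕ) : Prop :=
  ∀ i ≤ s, ∀ K : Ideal R, IsGeometricRI I K i → IsCMQuot R K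

/-- `I` is universally weakly `s`-residually `S₂`: for every finite set of
variables, the extension of `I` to `R(x₁, …, x_n)` is weakly `s`-residually `S₂`. -/
def UnivWeaklyResS2 [IsLocalRing R] (I : Ideal R) (s : ℕ) : Prop :=
  ∀ (n : ℕ)
    (hP : (Ideal.map (MvPolynomial.C (σ := Fin n)) (maximalIdeal R)).IsPrime),
    letI := hP
    WeaklyResS2 (Ideal.map
      ((algebraMap (MvPolynomial (Fin n) R)
        (Localization.AtPrime
          (Ideal.map (MvPolynomial.C (σ := Fin n)) (maximalIdeal R)))).comp
        (MvPolynomial.C)) I) s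

/-- The `j`-th Fitting ideal of (the module) `I`. -/
noncomputable def fittingIdeal (I : Ideal R) (j : ℕ) : Ideal R :=
  ⨆ (n : ℕ) (π : (Fin n → R) →ₗ[R] R) (_ : LinearMap.range π = I),
    Ideal.span {d : R | ∃ (v : Fin (n - j) → (Fin n → R)) (r : Fin (n - j) → Fin n),
      (∀ k, π (v k) = 0) ∧ d = Matrix.det (Matrix.of fun i k => v k (r i))}

/-- The set `Q(I)` of primes containing `Fitt_ℓ(I)` at which `R` has dimension `ℓ`
and `I` has analytic spread `ℓ`. -/
def QSet [IsLocalRing R] (I : Ideal R) (l : ℕ) : Set (PrimeSpectrum R) :=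
  {p | fittingIdeal I l ≤ p.asIdeal ∧
    rDim (Localization.AtPrime p.asIdeal) = (l : WithBot ℕ∞) ∧
    fiberDim (Ideal.map (algebraMap R (Localization.AtPrime p.asIdeal)) I)
      = (l : WithBot ℕ∞)}

/-- An ideal is integrally closed if it admits no larger ideal of which it is a
reduction. -/
def IsIntClosedIdeal (I : Ideal R) : Prop :=
  ∀ J : Ideal R, IsReduction I J → J = I

/-- A normal ideal: all powers are integrally closed. -/
def IsNormalIdeal (I : Ideal R) : Prop :=
  ∀ j : ℕ, IsIntClosedIdeal (I ^ j)

/-- `φ` is a presentation matrix of the ideal `I` (with `n = μ(I)` rows). -/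
def Presents {n m : ℕ} (φ : Matrix (Fin n) (Fin m) R) (I : Ideal R) : Prop :=
  muE I = (n : ℕ∞) ∧ ∃ π : (Fin n → R) →ₗ[R] R, LinearMap.range π = I ∧
    LinearMap.range (Matrix.toLin' φ) = LinearMap.ker π

/-- The ideal of `t × t` minors of a matrix. -/
noncomputable def minorsIdeal {n m : ℕ} (t : ℕ) (φ : Matrix (Fin n) (Fin m) R) : Ideal R :=
  Ideal.span {d : R | ∃ (r : Fin t → Fin n) (c : Fin t → Fin m),
    d = (φ.submatrix r c).det}

/-- The grade of an ideal: the supremum of lengths of regular sequences contained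
in it. -/
noncomputable def grade (I : Ideal R) : ℕ∞ :=
  sSup {n : ℕ∞ | ∃ rs : List R, (∀ x ∈ rs, x ∈ I) ∧
    RingTheory.Sequence.IsRegular R rs ∧ (rs.length : ℕ∞) = n}

end Defs

/-- `M` has projective dimension at most `n` over `R`. -/
def ProjDimLE (R : Type u) [CommRing R] :
    (n : ℕ) → (M : Type u) → [AddCommGroup M] → [Module R M] → Prop
  | 0, M, _, _ => Module.Projective R M
  | n + 1, M, _, _ => ∃ (k : ℕ) (f : (Fin k → R) →ₗ[R] M), Function.Surjective f ∧
      ProjDimLE R n ↥(LinearMap.ker f)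

section Defs2

variable {R : Type u} [CommRing R]

/-- `M` has projective dimension exactly `n` over `R`. -/
def ProjDimEq (R : Type u) [CommRing R] (M : Type u) [AddCommGroup M] [Module R M]
    (n : ℕ) : Prop :=
  ProjDimLE R n M ∧ ∀ m : ℕ, ProjDimLE R m M → n ≤ m

/-- A perfect ideal: the projective dimension of `R/I` equals the grade of `I`. -/
def IsPerfectIdeal (I : Ideal R) : Prop :=
  ∃ g : ℕ, grade I = (g : ℕ∞) ∧ ProjDimEq R (R ⧸ I) g

/-- The multiplicative set which is the complement of the union of the associated
primes of `R/H`. -/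
def assComplement (H : Ideal R) : Submonoid R where
  carrier := {r : R | ∀ p ∈ associatedPrimes R (R ⧸ H), r ∉ p}
  one_mem' := fun p hp => (Ideal.ne_top_iff_one p).mp hp.1.ne_top
  mul_mem' := fun {a b} ha hb p hp hab =>
    (hp.1.mem_or_mem hab).elim (ha p hp) (hb p hp)

/-- The `j`-th symbolic power of `H`. -/
noncomputable def symbolicPower (H : Ideal R) (j : ℕ) : Ideal R :=
  Ideal.comap (algebraMap R (Localization (assComplement H)))
    (Ideal.map (algebraMap R (Localization (assComplement H))) (H ^ j))

/-- Serre's condition `S₂` for a module. -/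
def ModuleS2 (S : Type u) [CommRing S] (M : Type v) [AddCommGroup M] [Module S M] : Prop :=
  ∀ (q : Ideal S) (hq : q.IsPrime),
    letI := hq
    min 2 (rDim ((Localization.AtPrime q) ⧸
        (Module.annihilator (Localization.AtPrime q) (LocalizedModule q.primeCompl M))))
      ≤ (mDepth (Localization.AtPrime q) (LocalizedModule q.primeCompl M) : WithBot ℕ∞)

/-- `M` is a maximal Cohen–Macaulay `S`-module. -/
def IsMCM (S : Type u) [CommRing S] (M : Type v) [AddCommGroup M] [Module S M] : Prop :=
  ∀ (q : Ideal S) (hq : q.IsMaximal),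
    letI := hq.isPrime
    (mDepth (Localization.AtPrime q) (LocalizedModule q.primeCompl M) : WithBot ℕ∞) =
      rDim (Localization.AtPrime q)

end Defs2



section Depth
open RingTheory.Sequence CategoryTheory Abelian Limits Pointwise

variable {R : Type u} [CommRing R]

/-- existence of a regular sequence of length n on R/K -/
def Dp [IsLocalRing R] (K : Ideal R) (n : ℕ) : Prop :=
  ∃ rs : List R, rs.length = n ∧ (∀ r ∈ rs, r ∈ maximalIdeal R) ∧ IsRegular (R ⧸ K) rs

noncomputable def quotIso (K : Ideal R) (x : R) :
    QuotSMulTop x (R ⧸ K) ≃ₗ[R] R ⧸ (K ⊔ Ideal.span {x}) :=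
  (Submodule.quotEquivOfEq _ _ (by
    ext y
    rw [Submodule.mem_smul_pointwise_iff_exists]
    simp only [Submodule.mem_map, Ideal.mem_span_singleton']
    constructor
    · rintro ⟨b, -, rfl⟩
      obtain ⟨b, rfl⟩ := Submodule.mkQ_surjective _ b
      refine ⟨b * x, ⟨b, rfl⟩, ?_⟩
      rw [mul_comm]
      rfl
    · rintro ⟨_, ⟨b, rfl⟩, rfl⟩
      refine ⟨Submodule.mkQ K b, trivial, ?_⟩
      rw [mul_comm]
      rfl)).trans (Submodule.quotientQuotientEquivQuotientSup K (Ideal.span {x}))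

lemma isSMulRegular_quot {K : Ideal R} {x : R} :
    IsSMulRegular (R ⧸ K) x ↔ ∀ r, x * r ∈ K → r ∈ K := by
  rw [isSMulRegular_iff_right_eq_zero_of_smul]
  constructor
  · intro h r hr
    have := h (Ideal.Quotient.mk K r) (by
      rw [← Ideal.Quotient.eq_zero_iff_mem] at hr
      rw [← hr]; rfl)
    exact Ideal.Quotient.eq_zero_iff_mem.mp this
  · intro h m hm
    obtain ⟨r, rfl⟩ := Ideal.Quotient.mk_surjective m
    exact Ideal.Quotient.eq_zero_iff_mem.mpr (h r (Ideal.Quotient.eq_zero_iff_mem.mp hm))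

variable [IsLocalRing R]

lemma Dp.ne_top {K : Ideal R} {n : ℕ} (h : Dp K n) : K ≠ ⊤ := by
  obtain ⟨rs, -, -, h⟩ := h
  have := h.nontrivial
  exact Ideal.Quotient.nontrivial_iff.mp this

lemma Dp.succ {K : Ideal R} {n : ℕ} (h : Dp K (n + 1)) :
    ∃ x ∈ maximalIdeal R, (∀ r, x * r ∈ K → r ∈ K) ∧ Dp (K ⊔ Ideal.span {x}) n := by
  obtain ⟨rs, hl, hm, h⟩ := h
  match rs with
  | [] => simp at hl
  | x :: rs =>
    rw [isRegular_cons_iff] at h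
    refine ⟨x, hm x (by simp), isSMulRegular_quot.mp h.1, rs, by simpa using hl,
      fun r hr => hm r (by simp [hr]), ?_⟩
    exact ((quotIso K x).isRegular_congr rs).mp h.2

lemma Dp.zero {K : Ideal R} (h : K ≠ ⊤) : Dp K 0 := by
  have : Nontrivial (R ⧸ K) := Ideal.Quotient.nontrivial_iff.mpr h
  exact ⟨[], rfl, by simp, IsRegular.nil R (R ⧸ K)⟩

lemma Dp.cons {K : Ideal R} {n : ℕ} {x : R} (hx : x ∈ maximalIdeal R)
    (hr : ∀ r, x * r ∈ K → r ∈ K) (h : Dp (K ⊔ Ideal.span {x}) n) : Dp K (n + 1) := by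
  obtain ⟨rs, hl, hm, h⟩ := h
  refine ⟨x :: rs, by simpa, ?_, ?_⟩
  · intro r h
    rcases List.mem_cons.mp h with rfl | h
    exacts [hx, hm r h]
  · rw [isRegular_cons_iff]
    exact ⟨isSMulRegular_quot.mpr hr, ((quotIso K x).isRegular_congr rs).mpr h⟩

lemma Dp.mono {K : Ideal R} {m n : ℕ} (h : Dp K n) (hmn : m ≤ n) : Dp K m := by
  induction m generalizing K n with
  | zero => exact Dp.zero h.ne_top
  | succ m ih =>
    obtain ⟨n, rfl⟩ : ∃ k, n = k + 1 := ⟨n - 1, by omega⟩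
    obtain ⟨x, hx, hr, h'⟩ := h.succ
    exact Dp.cons hx hr (ih h' (by omega))

lemma Dp_of_depth {K : Ideal R} {n : ℕ} (hK : K ≠ ⊤) (h : (n : ℕ∞) ≤ qDepth R K) : Dp K n := by
  rcases Nat.eq_zero_or_pos n with rfl | hn
  · exact Dp.zero hK
  have h1 : ((n - 1 : ℕ) : ℕ∞) < qDepth R K :=
    lt_of_lt_of_le (by exact_mod_cast (by omega)) h
  obtain ⟨_, ⟨rs, hm, hr, rfl⟩, hlt⟩ := lt_sSup_iff.mp h1
  have : n - 1 < rs.length := by exact_mod_cast hlt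
  exact Dp.mono ⟨rs, rfl, hm, hr⟩ (by omega)

lemma Dp.exchange [IsNoetherianRing R] {K : Ideal R} {n : ℕ} (h : Dp K (n + 1)) {a : R}
    (ha : a ∈ maximalIdeal R) (hr : ∀ r, a * r ∈ K → r ∈ K) :
    Dp (K ⊔ Ideal.span {a}) n := by
  have key : ∀ L : Ideal R, L ≠ ⊤ → maximalIdeal R • (⊤ : Submodule R (R ⧸ L)) < ⊤ := by
    intro L hL
    have : Nontrivial (R ⧸ L) := Ideal.Quotient.nontrivial_iff.mpr hL
    rw [lt_top_iff_ne_top]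
    intro he
    exact Submodule.top_ne_ideal_smul_of_le_jacobson_annihilator
      (IsLocalRing.maximalIdeal_le_jacobson _) he.symm
  have hK := h.ne_top
  have e1 := ((ModuleCat.exists_isRegular_tfae (maximalIdeal R) (n + 1)
    (ModuleCat.of R (R ⧸ K)) (key K hK)).out 1 3).mpr h
  have hne : K ⊔ Ideal.span {a} ≠ ⊤ := by
    have h1 : K ⊔ Ideal.span {a} ≤ maximalIdeal R :=
      sup_le (IsLocalRing.le_maximalIdeal hK) ((Ideal.span_singleton_le_iff_mem _).mpr ha)
    exact fun h2 => (maximalIdeal.isMaximal R).ne_top (top_le_iff.mp (h2 ▸ h1))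
  have hx : IsSMulRegular (R ⧸ K) a := isSMulRegular_quot.mpr hr
  have e2 : ∀ i < n, Subsingleton (Ext (ModuleCat.of R (Shrink.{u} (R ⧸ maximalIdeal R)))
      (ModuleCat.of R (QuotSMulTop a (R ⧸ K))) i) := by
    intro i hi
    have zero1 := AddCommGrpCat.isZero_of_iff_subsingleton.mpr (e1 i (by omega))
    have zero2 := AddCommGrpCat.isZero_of_iff_subsingleton.mpr (e1 (i + 1) (by omega))
    have hx' : IsSMulRegular (ModuleCat.of R (R ⧸ K)) a := hx
    exact AddCommGrpCat.subsingleton_of_isZero <| ShortComplex.Exact.isZero_of_both_zeros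
      ((Ext.covariant_sequence_exact₃' _ hx'.smulShortComplex_shortExact) i (i + 1) rfl)
      (zero1.eq_zero_of_src _) (zero2.eq_zero_of_tgt _)
  have hlt : maximalIdeal R • (⊤ : Submodule R (QuotSMulTop a (R ⧸ K))) < ⊤ := by
    have : Nontrivial (R ⧸ (K ⊔ Ideal.span {a})) := Ideal.Quotient.nontrivial_iff.mpr hne
    have : Nontrivial (QuotSMulTop a (R ⧸ K)) := (quotIso K a).toEquiv.nontrivial
    rw [lt_top_iff_ne_top]
    intro he
    exact Submodule.top_ne_ideal_smul_of_le_jacobson_annihilator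
      (IsLocalRing.maximalIdeal_le_jacobson _) he.symm
  obtain ⟨rs, h1, h2, h3⟩ := ((ModuleCat.exists_isRegular_tfae (maximalIdeal R) n
    (ModuleCat.of R (QuotSMulTop a (R ⧸ K))) hlt).out 1 3).mp e2
  exact ⟨rs, h1, h2, ((quotIso K a).isRegular_congr rs).mp h3⟩

end Depth

section Assoc

variable {R : Type u} [CommRing R]

/-- q is an associated prime of R/L -/
def AP (L q : Ideal R) : Prop := q.IsPrime ∧ ∃ y, ∀ r, r ∈ q ↔ r * y ∈ L

lemma AP.le {L q : Ideal R} (h : AP L q) : L ≤ q := by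
  obtain ⟨_, y, hy⟩ := h
  exact fun r hr => (hy r).mpr (L.mul_mem_right _ hr)

lemma AP_exists [IsNoetherianRing R] {L N : Ideal R} (h : ¬ N ≤ L) :
    ∃ q : Ideal R, q.IsPrime ∧ ∃ y ∈ N, y ∉ L ∧ ∀ r, r ∈ q ↔ r * y ∈ L := by
  obtain ⟨z, hzN, hzL⟩ := SetLike.not_le_iff_exists.mp h
  obtain ⟨q, ⟨y, hyN, hyL, rfl⟩, hmax⟩ := set_has_maximal_iff_noetherian.mpr
    (inferInstance : IsNoetherian R R)
    {J : Ideal R | ∃ y ∈ N, y ∉ L ∧ J = L.colon {y}} ⟨_, z, hzN, hzL, rfl⟩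
  have key : ∀ r y, r ∈ L.colon {y} ↔ r * y ∈ L := by
    intro r y; simp [Submodule.mem_colon]
  refine ⟨L.colon {y}, ⟨?_, ?_⟩, y, hyN, hyL, fun r => key r y⟩
  · intro ht
    apply hyL
    have : (1 : R) ∈ L.colon {y} := ht ▸ trivial
    simpa [key] using this
  · intro a b hab
    by_contra! hcon
    rw [key] at hab
    rw [key, key] at hcon
    refine hmax (L.colon {b * y}) ⟨b * y, N.mul_mem_left _ hyN, hcon.2, rfl⟩ ?_
    refine lt_of_le_of_ne ?_ ?_
    · intro r hr
      rw [key] at hr ⊢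
      rw [mul_left_comm]
      exact L.mul_mem_left _ hr
    · intro he
      apply hcon.1
      rw [← key, he, key, ← mul_assoc]
      exact hab

lemma AP_exists' [IsNoetherianRing R] {L N : Ideal R} (h : ¬ N ≤ L) :
    ∃ q : Ideal R, AP L q ∧ ∃ y ∈ N, y ∉ L ∧ ∀ r, r ∈ q ↔ r * y ∈ L := by
  obtain ⟨q, hq, y, h1, h2, h3⟩ := AP_exists h
  exact ⟨q, ⟨hq, y, h3⟩, y, h1, h2, h3⟩

/-- membership is checked at associated primes -/
lemma mem_of_AP [IsNoetherianRing R] {L : Ideal R} {x : R}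
    (h : ∀ q, AP L q → ∃ s, s ∉ q ∧ s * x ∈ L) : x ∈ L := by
  by_contra hx
  obtain ⟨q, hq, y, hy, hyL, hr⟩ := AP_exists' (L := L) (N := Ideal.span {x})
    (by simpa using hx)
  obtain ⟨s, hs, hsx⟩ := h q hq
  apply hs
  rw [hr]
  obtain ⟨c, rfl⟩ := Ideal.mem_span_singleton'.mp hy
  rw [mul_left_comm]
  exact L.mul_mem_left _ hsx

lemma reg_of_AP [IsNoetherianRing R] {L : Ideal R} {x : R}
    (h : ∀ q, AP L q → x ∉ q) : ∀ r, x * r ∈ L → r ∈ L :=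
  fun _ hr => mem_of_AP fun q hq => ⟨x, h q hq, hr⟩

lemma AP_finite [IsNoetherianRing R] (L : Ideal R) : {q | AP L q}.Finite := by
  refine (associatedPrimes.finite R (R ⧸ L)).subset ?_
  rintro q ⟨hq, y, hy⟩
  rw [AssociatedPrimes.mem_iff, isAssociatedPrime_iff]
  refine ⟨hq, Ideal.Quotient.mk L y, ?_⟩
  ext r
  rw [hy, Submodule.mem_colon_singleton]
  simp only [Submodule.mem_bot]
  rw [← Ideal.Quotient.eq_zero_iff_mem, map_mul]
  rfl

/-- if q = L : y and L ≤ L', then q = L' : y or q = L : z with z ∈ L' -/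
lemma AP_step [IsNoetherianRing R] {L L' q : Ideal R} (h : AP L q) (hL : L ≤ L') :
    AP L' q ∨ ∃ z ∈ L', ∀ r, r ∈ q ↔ r * z ∈ L := by
  obtain ⟨hq, y, hy⟩ := h
  by_cases hc : ∃ s, s ∉ q ∧ s * y ∈ L'
  · obtain ⟨s, hs, hsy⟩ := hc
    right
    refine ⟨s * y, hsy, fun r => ?_⟩
    constructor
    · intro hr
      rw [mul_left_comm]
      exact L.mul_mem_left _ ((hy r).mp hr)
    · intro hr
      rw [← mul_assoc, ← hy] at hr
      exact (hq.mem_or_mem hr).resolve_right hs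
  · push Not at hc
    left
    refine ⟨hq, y, fun r => ⟨fun hr => hL ((hy r).mp hr), fun hr => ?_⟩⟩
    by_contra hrq
    exact hc r hrq hr

variable [IsLocalRing R] [IsNoetherianRing R]

lemma LemA {n : ℕ} : ∀ {L : Ideal R} (_ : Dp L n) (q : PrimeSpectrum R) (_ : AP L q.asIdeal),
    (n : ℕ∞) ≤ Order.coheight q := by
  induction n with
  | zero => intros; simp
  | succ n ih =>
    intro L h q hq
    obtain ⟨x, hx, hr, h'⟩ := h.succ
    obtain ⟨hqp, y, hy⟩ := hq
    have hyL : y ∉ L := by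
      intro h
      apply hqp.ne_top
      rw [Ideal.eq_top_iff_one, hy]
      simpa using h
    have hxq : x ∉ q.asIdeal := by
      intro h
      exact hyL (hr y ((hy x).mp h))
    let N : Ideal R := L.colon (q.asIdeal : Set R)
    have hN : ∀ z, z ∈ N ↔ ∀ r ∈ q.asIdeal, r * z ∈ L := by
      intro z
      simp only [N, Submodule.mem_colon, smul_eq_mul]
      exact forall₂_congr fun r _ => by rw [mul_comm]
    have hnot : ¬ N ≤ L ⊔ Ideal.span {x} := by
      intro hle
      have h1 : N ≤ L ⊔ Ideal.span {x} • N := by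
        intro z hz
        obtain ⟨ℓ, hℓ, w', hw', rfl⟩ := Submodule.mem_sup.mp (hle hz)
        obtain ⟨w, rfl⟩ := Ideal.mem_span_singleton'.mp hw'
        refine Submodule.add_mem_sup hℓ ?_
        rw [mul_comm]
        refine Submodule.smul_mem_smul (Ideal.mem_span_singleton_self x) ?_
        rw [hN] at hz ⊢
        intro r hrq
        apply hr
        have := L.sub_mem (hz r hrq) (L.mul_mem_left r hℓ)
        convert this using 1
        ring
      have h2 : N ≤ L := Submodule.le_of_le_smul_of_le_jacobson_bot (IsNoetherian.noetherian N)
        (by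
          rw [IsLocalRing.jacobson_eq_maximalIdeal _ bot_ne_top]
          exact (Ideal.span_singleton_le_iff_mem _).mpr hx) h1
      exact hyL (h2 ((hN y).mpr fun r hr => (hy r).mp hr))
    obtain ⟨q', hq', z, hzN, -, hz⟩ := AP_exists' hnot
    have hlt : q < ⟨q', hq'.1⟩ := by
      refine lt_of_le_of_ne ?_ ?_
      · intro r hr
        exact (hz r).mpr (Ideal.mem_sup_left ((hN z).mp hzN r hr))
      · intro he
        apply hxq
        rw [he]
        exact (hz x).mpr (Ideal.mem_sup_right (Ideal.mul_mem_right _ _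
          (Ideal.mem_span_singleton_self x)))
    have h3 := ih h' ⟨q', hq'.1⟩ hq'
    push_cast
    exact (add_le_add_left h3 1).trans (Order.coheight_add_one_le hlt)

lemma LemAB {n d : ℕ} (hd : ringKrullDim R = d) {L q : Ideal R} (h : Dp L n) (hq : AP L q) :
    q.height + n ≤ d := by
  have := hq.1
  have h1 := LemA h ⟨q, hq.1⟩ hq
  have h2 := PrimeSpectrum.height_eq_orderHeight ⟨q, hq.1⟩
  have h3 : ((Order.height (⟨q, hq.1⟩ : PrimeSpectrum R) +
      Order.coheight (⟨q, hq.1⟩ : PrimeSpectrum R) : ℕ∞) : WithBot ℕ∞) ≤ (d : ℕ∞) := by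
    have : Nonempty (PrimeSpectrum R) := ⟨⟨q, hq.1⟩⟩
    have h4 := Order.krullDim_eq_iSup_height_add_coheight_of_nonempty (α := PrimeSpectrum R)
    have h5 : Order.krullDim (PrimeSpectrum R) = ((d : ℕ∞) : WithBot ℕ∞) := hd
    rw [← h5, h4]
    exact_mod_cast le_iSup (fun a : PrimeSpectrum R => Order.height a + Order.coheight a) _
  have h6 := WithBot.coe_le_coe.mp h3
  simp only at h2
  rw [h2]
  exact (add_le_add_right h1 _).trans h6

lemma coheight_le_quot {K : Ideal R} (q : PrimeSpectrum R) (h : K ≤ q.asIdeal) :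
    (Order.coheight q : WithBot ℕ∞) ≤ ringKrullDim (R ⧸ K) := by
  rw [Order.coheight_eq_krullDim_Ici, ringKrullDim_quotient]
  exact Order.krullDim_le_of_strictMono (fun p : Set.Ici q =>
    (⟨p.1, fun x hx => (p.2 : q.asIdeal ≤ p.1.asIdeal) (h hx)⟩ :
      PrimeSpectrum.zeroLocus (R := R) K)) (fun a b hab => hab)

end Assoc

section Red

variable {R : Type u} [CommRing R]

lemma red_pow {J I : Ideal R} {r : ℕ} (h : I ^ (r + 1) = J * I ^ r) (n : ℕ) :
    I ^ (r + n) = J ^ n * I ^ r := by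
  induction n with
  | zero => simp
  | succ n ih =>
    calc I ^ (r + (n + 1)) = I ^ (r + n) * I := by rw [← add_assoc, pow_succ]
      _ = J ^ n * I ^ (r + 1) := by rw [ih, mul_assoc, pow_succ]
      _ = J ^ (n + 1) * I ^ r := by rw [h, ← mul_assoc, pow_succ]

lemma red_trans {J I' I : Ideal R} (h1 : IsReduction J I') (h2 : IsReduction I' I) :
    IsReduction J I := by
  obtain ⟨h1, s, hs⟩ := h1
  obtain ⟨h2, r, hr⟩ := h2
  refine ⟨h1.trans h2, r + s, ?_⟩
  rw [add_assoc, red_pow hr, hs, mul_assoc, red_pow hr]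

lemma red_of_le {J I : Ideal R} (hJ : J ≤ I) {r : ℕ} (h : I ^ (r + 1) ≤ J * I ^ r) :
    IsReduction J I :=
  ⟨hJ, r, le_antisymm h (by rw [pow_succ']; exact Ideal.mul_mono_left hJ)⟩

lemma red_mid {J J' I : Ideal R} (h : IsReduction J I) (h1 : J ≤ J') (h2 : J' ≤ I) :
    IsReduction J' I := by
  obtain ⟨_, r, hr⟩ := h
  exact red_of_le h2 (hr.le.trans (Ideal.mul_mono_left h1))

lemma sup_pow_le (b : Ideal R) (c : R) (m : ℕ) :
    (b ⊔ Ideal.span {c}) ^ (m + 1) ≤ b * (b ⊔ Ideal.span {c}) ^ m ⊔ Ideal.span {c ^ (m + 1)} := by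
  induction m with
  | zero => simp
  | succ m ih =>
    rw [pow_succ (b ⊔ Ideal.span {c}) (m + 1), Ideal.mul_sup]
    apply sup_le
    · rw [mul_comm]; exact le_sup_left
    · refine (Ideal.mul_mono_left ih).trans ?_
      rw [Ideal.sup_mul]
      apply sup_le_sup
      · rw [mul_assoc]
        refine Ideal.mul_mono_right ?_
        rw [pow_succ]
        exact Ideal.mul_mono_right le_sup_right
      · rw [Ideal.span_singleton_mul_span_singleton, ← pow_succ]

lemma red_of_pow_mem {b : Ideal R} {c : R} {m : ℕ}
    (h : c ^ (m + 1) ∈ b * (b ⊔ Ideal.span {c}) ^ m) : IsReduction b (b ⊔ Ideal.span {c}) :=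
  red_of_le le_sup_left (r := m) ((sup_pow_le b c m).trans
    (sup_le le_rfl ((Ideal.span_singleton_le_iff_mem _).mpr h)))

open Polynomial in
lemma detTrick [IsNoetherianRing R] [IsDomain R] {b I : Ideal R} (h : IsReduction b I)
    (hI : I ≠ ⊥) {c : R} (hc : c ∈ I) :
    ∃ p : R[X], p.Monic ∧ 0 < p.natDegree ∧ (∀ k, p.coeff k ∈ b ^ (p.natDegree - k)) ∧
      p.eval c = 0 := by
  obtain ⟨hle, r, hr⟩ := h
  let f : Module.End R (I ^ r : Ideal R) := LinearMap.lsmul R _ c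
  have hf : LinearMap.range f ≤ b • ⊤ := by
    rintro _ ⟨⟨x, hx⟩, rfl⟩
    have h1 : c * x ∈ b • (I ^ r : Ideal R) := by
      rw [smul_eq_mul, ← hr, pow_succ']
      exact Ideal.mul_mem_mul hc hx
    have h2 : (b • ⊤ : Submodule R (I ^ r : Ideal R)).map (Submodule.subtype _) =
      b • (I ^ r : Ideal R) := by
      rw [Submodule.map_smul'', Submodule.map_subtype_top]
    rw [← h2] at h1
    obtain ⟨y, hy, hyx⟩ := h1
    have : f ⟨x, hx⟩ = y := by
      apply Subtype.ext
      exact hyx.symm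
    rwa [this]
  obtain ⟨p, hp, -, hco, hz⟩ :=
    LinearMap.exists_monic_and_natDegree_eq_and_coeff_mem_pow_and_aeval_eq_zero R f b hf
  have hev : p.eval c = 0 := by
    obtain ⟨x, hx, hx0⟩ := Submodule.exists_mem_ne_zero_of_ne_bot (pow_ne_zero r hI)
    have h3 : aeval f p ⟨x, hx⟩ = p.eval c • (⟨x, hx⟩ : (I ^ r : Ideal R)) := by
      apply Module.End.aeval_apply_of_hasEigenvector
      constructor
      · rw [Module.End.mem_eigenspace_iff]; rfl
      · intro h0
        exact hx0 (congrArg Subtype.val h0)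
    rw [hz] at h3
    have h4 := congrArg Subtype.val h3
    simp only [LinearMap.zero_apply] at h4
    have h5 : p.eval c * x = 0 := h4.symm
    exact (mul_eq_zero.mp h5).resolve_right hx0
  refine ⟨p, hp, ?_, hco, hev⟩
  rw [Nat.pos_iff_ne_zero]
  intro h0
  rw [hp.natDegree_eq_zero.mp h0] at hev
  simp at hev

/-- the relation satisfied by c over `𝔞 + (a)`. -/
lemma Zpre [IsNoetherianRing R] [IsDomain R] {𝔞 I : Ideal R} {a c : R}
    (h : IsReduction (𝔞 ⊔ Ideal.span {a}) I) (hI : I ≠ ⊥) (hc : c ∈ I) :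
    ∃ (N : ℕ) (ρ : ℕ → R), c ^ (N + 1) + ∑ k ∈ Finset.range (N + 1),
      ρ k * a ^ (N + 1 - k) * c ^ k ∈ 𝔞 * ((𝔞 ⊔ Ideal.span {a}) ⊔ Ideal.span {c}) ^ N := by
  obtain ⟨p, hp, hpos, hco, hev⟩ := detTrick h hI hc
  obtain ⟨N, hN⟩ : ∃ N, p.natDegree = N + 1 := ⟨p.natDegree - 1, by omega⟩
  rw [hN] at hco
  have h1 : ∀ k, ∃ ρ, k ∈ Finset.range (N + 1) →
      p.coeff k - ρ * a ^ (N + 1 - k) ∈ 𝔞 * (𝔞 ⊔ Ideal.span {a}) ^ (N - k) := by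
    intro k
    by_cases hk : k ∈ Finset.range (N + 1)
    · have hk' := Finset.mem_range.mp hk
      have h2 := hco k
      have e : N + 1 - k = (N - k) + 1 := by omega
      rw [e] at h2
      obtain ⟨x, hx, y, hy, hxy⟩ := Submodule.mem_sup.mp (sup_pow_le 𝔞 a (N - k) h2)
      obtain ⟨ρ, rfl⟩ := Ideal.mem_span_singleton'.mp hy
      refine ⟨ρ, fun _ => ?_⟩
      rw [e, ← hxy]
      simpa using hx
    · exact ⟨0, fun h => absurd h hk⟩
  choose ρ hρ using h1
  refine ⟨N, ρ, ?_⟩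
  have h3 : c ^ (N + 1) = - ∑ k ∈ Finset.range (N + 1), p.coeff k * c ^ k := by
    rw [Polynomial.eval_eq_sum_range, hN, Finset.sum_range_succ] at hev
    have : p.coeff (N + 1) = 1 := by rw [← hN]; exact hp.coeff_natDegree
    rw [this, one_mul] at hev
    linear_combination hev
  rw [h3, neg_add_eq_sub, ← Finset.sum_sub_distrib]
  refine Ideal.sum_mem _ fun k hk => ?_
  have hk' := Finset.mem_range.mp hk
  have h4 := hρ k hk
  have h5 : ρ k * a ^ (N + 1 - k) * c ^ k - p.coeff k * c ^ k =
    -((p.coeff k - ρ k * a ^ (N + 1 - k)) * c ^ k) := by ring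
  rw [h5]
  refine Ideal.neg_mem_iff _ |>.mpr ?_
  have h6 : (N - k) + k = N := by omega
  have h7 := Ideal.mul_mem_mul h4 (Ideal.pow_mem_pow
    (show c ∈ (𝔞 ⊔ Ideal.span {a}) ⊔ Ideal.span {c} from
      Ideal.mem_sup_right (Ideal.mem_span_singleton_self c)) k)
  refine SetLike.le_def.mp ?_ h7
  rw [mul_assoc]
  refine Ideal.mul_mono_right ?_
  calc _ ≤ ((𝔞 ⊔ Ideal.span {a}) ⊔ Ideal.span {c}) ^ (N - k) *
        ((𝔞 ⊔ Ideal.span {a}) ⊔ Ideal.span {c}) ^ k :=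
        Ideal.mul_mono_left (Ideal.pow_right_mono le_sup_left _)
    _ = _ := by rw [← pow_add, h6]

lemma pow_sub_pow_mem {T : Ideal R} {x y : R} {B : Ideal R} (hx : x ∈ T) (hy : y ∈ T)
    (hxy : x - y ∈ B) (n : ℕ) : x ^ (n + 1) - y ^ (n + 1) ∈ B * T ^ n := by
  induction n with
  | zero => simpa using hxy
  | succ n ih =>
    have : x ^ (n + 1 + 1) - y ^ (n + 1 + 1) =
      (x ^ (n + 1) - y ^ (n + 1)) * x + (x - y) * y ^ (n + 1) := by ring
    rw [this]
    refine Ideal.add_mem _ ?_ (Ideal.mul_mem_mul hxy (Ideal.pow_mem_pow hy _))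
    rw [pow_succ, ← mul_assoc]
    exact Ideal.mul_mem_mul ih hx

lemma Zlem [IsNoetherianRing R] [IsDomain R] [IsLocalRing R] {𝔞 I : Ideal R} {a c : R}
    (h : IsReduction (𝔞 ⊔ Ideal.span {a}) I) (hI : I ≠ ⊥) (hc : c ∈ I) :
    ∃ F : Set (ResidueField R), F.Finite ∧ ∀ lam : R, residue R lam ∉ F →
      IsReduction (𝔞 ⊔ Ideal.span {a + lam * c}) I := by
  classical
  obtain ⟨N, ρ, hρ⟩ := Zpre h hI hc
  let f : Polynomial (ResidueField R) := 1 + ∑ k ∈ Finset.range (N + 1),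
    Polynomial.C (residue R (ρ k)) * (-Polynomial.X) ^ (N + 1 - k)
  have hf0 : f ≠ 0 := by
    intro h0
    have : f.eval 0 = 1 := by
      simp only [f, Polynomial.eval_add, Polynomial.eval_one, Polynomial.eval_finsetSum]
      rw [Finset.sum_eq_zero, add_zero]
      intro k hk
      have := Finset.mem_range.mp hk
      have h2 : N + 1 - k ≠ 0 := by omega
      simp [h2]
    rw [h0] at this
    simp at this
  refine ⟨(f.roots.toFinset : Set _), Finset.finite_toSet _, fun lam hlam => ?_⟩
  have hu : IsUnit (1 + ∑ k ∈ Finset.range (N + 1), ρ k * (-lam) ^ (N + 1 - k)) := by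
    rw [← residue_ne_zero_iff_isUnit]
    intro h0
    apply hlam
    simp only [Finset.mem_coe, Multiset.mem_toFinset, Polynomial.mem_roots hf0]
    rw [Polynomial.IsRoot.def, ← h0]
    simp [f, Polynomial.eval_finsetSum]
  set b := a + lam * c with hb
  set Jl := 𝔞 ⊔ Ideal.span {b} with hJl
  set T := Jl ⊔ Ideal.span {c} with hT
  have hTeq : (𝔞 ⊔ Ideal.span {a}) ⊔ Ideal.span {c} = T := by
    have hcT : c ∈ T := Ideal.mem_sup_right (Ideal.mem_span_singleton_self c)
    have hbT : b ∈ T := Ideal.mem_sup_left (Ideal.mem_sup_right (Ideal.mem_span_singleton_self b))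
    apply le_antisymm
    · refine sup_le (sup_le (le_sup_left.trans le_sup_left) ?_) le_sup_right
      rw [Ideal.span_singleton_le_iff_mem]
      have : a = b - lam * c := by rw [hb]; ring
      rw [this]
      exact T.sub_mem hbT (T.mul_mem_left _ hcT)
    · refine sup_le (sup_le (le_sup_left.trans le_sup_left) ?_) le_sup_right
      rw [Ideal.span_singleton_le_iff_mem]
      exact Ideal.add_mem _ (Ideal.mem_sup_left (Ideal.mem_sup_right
        (Ideal.mem_span_singleton_self a))) (Ideal.mul_mem_left _ _
        (Ideal.mem_sup_right (Ideal.mem_span_singleton_self c)))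
  have hcT : c ∈ T := Ideal.mem_sup_right (Ideal.mem_span_singleton_self c)
  have haT : a ∈ T := by
    rw [← hTeq]
    exact Ideal.mem_sup_left (Ideal.mem_sup_right (Ideal.mem_span_singleton_self a))
  rw [hTeq] at hρ
  have hmem : c ^ (N + 1) ∈ Jl * T ^ N := by
    have h1 : c ^ (N + 1) + ∑ k ∈ Finset.range (N + 1),
      ρ k * a ^ (N + 1 - k) * c ^ k ∈ Jl * T ^ N := Ideal.mul_mono_left le_sup_left hρ
    have h2 : ∑ k ∈ Finset.range (N + 1), (ρ k * a ^ (N + 1 - k) * c ^ k -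
        ρ k * (-lam * c) ^ (N + 1 - k) * c ^ k) ∈ Jl * T ^ N := by
      refine Ideal.sum_mem _ fun k hk => ?_
      have hk' := Finset.mem_range.mp hk
      have e : N + 1 - k = (N - k) + 1 := by omega
      have h3 : a ^ ((N - k) + 1) - (-lam * c) ^ ((N - k) + 1) ∈ Jl * T ^ (N - k) := by
        refine pow_sub_pow_mem haT (T.mul_mem_left _ hcT) ?_ _
        have : a - -lam * c = b := by rw [hb]; ring
        rw [this]
        exact Ideal.mem_sup_right (Ideal.mem_span_singleton_self b)
      have h4 : ρ k * a ^ (N + 1 - k) * c ^ k - ρ k * (-lam * c) ^ (N + 1 - k) * c ^ k =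
        ρ k * ((a ^ ((N - k) + 1) - (-lam * c) ^ ((N - k) + 1)) * c ^ k) := by
        rw [e]; ring
      rw [h4]
      refine Ideal.mul_mem_left _ _ ?_
      have h6 : (N - k) + k = N := by omega
      have := Ideal.mul_mem_mul h3 (Ideal.pow_mem_pow hcT k)
      rwa [mul_assoc, ← pow_add, h6] at this
    have h3 := Ideal.sub_mem _ h1 h2
    rw [Finset.sum_sub_distrib] at h3
    have h4 : (1 + ∑ k ∈ Finset.range (N + 1), ρ k * (-lam) ^ (N + 1 - k)) * c ^ (N + 1) ∈
        Jl * T ^ N := by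
      convert h3 using 1
      rw [add_mul, Finset.sum_mul]
      have : ∀ k ∈ Finset.range (N + 1), ρ k * (-lam) ^ (N + 1 - k) * c ^ (N + 1) =
          ρ k * (-lam * c) ^ (N + 1 - k) * c ^ k := by
        intro k hk
        have hk' := Finset.mem_range.mp hk
        have e : c ^ (N + 1) = c ^ (N + 1 - k) * c ^ k := by rw [← pow_add]; congr 1; omega
        rw [e, mul_pow]; ring
      rw [Finset.sum_congr rfl this]
      ring
    exact ((Submodule.smul_mem_iff_of_isUnit _ hu).mp h4)
  have hred : IsReduction Jl T := red_of_pow_mem hmem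
  refine red_trans hred (red_mid h ?_ ?_)
  · rw [← hTeq]; exact le_sup_left
  · rw [← hTeq]; exact sup_le h.1 ((Ideal.span_singleton_le_iff_mem _).mpr hc)

end Red

section Rees

variable {R : Type u} [CommRing R] {ι : Type} 

/-- T_i ↦ f_i X -/
noncomputable def psi (f : ι → R) : MvPolynomial ι R →ₐ[R] Polynomial R :=
  MvPolynomial.aeval (fun i => Polynomial.monomial 1 (f i))

lemma psi_monomial (f : ι → R) (d : ι →₀ ℕ) (r : R) :
    psi f (MvPolynomial.monomial d r) =
      Polynomial.monomial d.degree (MvPolynomial.eval f (MvPolynomial.monomial d r)) := by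
  classical
  rw [psi, MvPolynomial.aeval_monomial, MvPolynomial.eval_monomial]
  simp only [Finsupp.prod, Polynomial.monomial_pow, one_mul]
  rw [Finsupp.degree_apply]
  have : ∀ s : Finset ι, ∏ i ∈ s, Polynomial.monomial (d i) (f i ^ d i) =
      Polynomial.monomial (∑ i ∈ s, d i) (∏ i ∈ s, f i ^ d i) := by
    intro s
    induction s using Finset.induction_on with
    | empty => simp
    | insert a s ha ih =>
      rw [Finset.prod_insert ha, ih, Finset.sum_insert ha, Finset.prod_insert ha,
        Polynomial.monomial_mul_monomial]
  rw [this]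
  rw [Polynomial.algebraMap_apply, Polynomial.C_mul_monomial]
  rfl

lemma psi_coeff (f : ι → R) (P : MvPolynomial ι R) (n : ℕ) :
    (psi f P).coeff n = MvPolynomial.eval f (MvPolynomial.homogeneousComponent n P) := by
  classical
  induction P using MvPolynomial.induction_on' with
  | monomial d r =>
    rw [psi_monomial, Polynomial.coeff_monomial]
    have h := MvPolynomial.homogeneousComponent_of_mem (m := n)
      (MvPolynomial.isHomogeneous_monomial r (rfl : d.degree = d.degree))
    rw [h]
    by_cases hn : d.degree = n
    · simp [hn]
    · rw [if_neg hn, if_neg (fun h => hn h.symm), map_zero]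
  | add p q hp hq => simp only [map_add, Polynomial.coeff_add, hp, hq]

lemma eval_homog_mem {I : Ideal R} {f : ι → R} (hf : ∀ i, f i ∈ I) {P : MvPolynomial ι R} {n : ℕ}
    (hP : P.IsHomogeneous n) : MvPolynomial.eval f P ∈ I ^ n := by
  classical
  rw [MvPolynomial.eval_eq]
  refine Ideal.sum_mem _ fun d hd => Ideal.mul_mem_left _ _ ?_
  have h1 : d.degree = n := by
    have := hP (MvPolynomial.mem_support_iff.mp hd)
    rw [Finsupp.degree_eq_weight_one]
    exact this
  rw [← h1, Finsupp.degree_apply, ← Finset.prod_pow_eq_pow_sum]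
  exact Ideal.prod_mem_prod fun i _ => Ideal.pow_mem_pow (hf i) _

lemma psi_mem {I : Ideal R} {f : ι → R} (hf : ∀ i, f i ∈ I) (P : MvPolynomial ι R) :
    psi f P ∈ reesAlgebra I := by
  intro n
  rw [psi_coeff]
  exact eval_homog_mem hf (MvPolynomial.homogeneousComponent_isHomogeneous n P)

/-- psi landing in the Rees algebra of I -/
noncomputable def psiB {I : Ideal R} {f : ι → R} (hf : ∀ i, f i ∈ I) :
    MvPolynomial ι R →ₐ[R] reesAlgebra I :=
  (psi f).codRestrict (reesAlgebra I) (psi_mem hf)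

lemma psiB_coe {I : Ideal R} {f : ι → R} (hf : ∀ i, f i ∈ I) (P : MvPolynomial ι R) :
    (psiB hf P : Polynomial R) = psi f P := rfl

lemma rees_le_range {f : ι → R} :
    reesAlgebra (Ideal.span (Set.range f)) ≤ (psi f).range := by
  rw [← adjoin_monomial_eq_reesAlgebra]
  refine Algebra.adjoin_le ?_
  rintro _ ⟨x, hx, rfl⟩
  induction hx using Submodule.span_induction with
  | mem x h =>
    obtain ⟨i, rfl⟩ := h
    exact ⟨MvPolynomial.X i, by simp [psi]⟩
  | zero => rw [map_zero]; exact (psi f).range.zero_mem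
  | add x y _ _ hx hy =>
    rw [map_add]
    exact (psi f).range.add_mem hx hy
  | smul r x _ hx =>
    rw [map_smul]
    exact (psi f).range.smul_mem hx r

lemma psiB_isIntegral [IsNoetherianRing R] [IsDomain R] {I : Ideal R} {f : ι → R}
    (hf : ∀ i, f i ∈ I) (h : IsReduction (Ideal.span (Set.range f)) I) (hI : I ≠ ⊥) :
    (psiB hf).toRingHom.IsIntegral := by
  have key : ∀ c ∈ I, (psi f).toRingHom.IsIntegralElem (Polynomial.monomial 1 c) := by
    intro c hc
    obtain ⟨p, hp, hpos, hco, hev⟩ := detTrick h hI hc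
    have h1 : ∀ k, ∃ P : MvPolynomial ι R, psi f P =
        Polynomial.monomial (p.natDegree - k) (p.coeff k) := by
      intro k
      exact rees_le_range (reesAlgebra.monomial_mem.mpr (hco k))
    choose P hP using h1
    let q : Polynomial (MvPolynomial ι R) := Polynomial.X ^ p.natDegree +
      ∑ k ∈ Finset.range p.natDegree, Polynomial.C (P k) * Polynomial.X ^ k
    refine ⟨q, ?_, ?_⟩
    · refine Polynomial.monic_X_pow_add ?_
      refine (Polynomial.degree_sum_le _ _).trans_lt ?_
      rw [Finset.sup_lt_iff (by simp)]
      intro k hk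
      refine (Polynomial.degree_C_mul_X_pow_le _ _).trans_lt ?_
      exact_mod_cast Finset.mem_range.mp hk
    · simp only [q, Polynomial.eval₂_add, Polynomial.eval₂_pow, Polynomial.eval₂_X,
        Polynomial.eval₂_finsetSum, Polynomial.eval₂_mul, Polynomial.eval₂_C]
      have h2 : ∀ k ∈ Finset.range p.natDegree, (psi f).toRingHom (P k) *
          (Polynomial.monomial 1 c) ^ k = Polynomial.monomial p.natDegree (p.coeff k * c ^ k) := by
        intro k hk
        have hk' := Finset.mem_range.mp hk
        have : (psi f).toRingHom (P k) = Polynomial.monomial (p.natDegree - k) (p.coeff k) := hP k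
        rw [this, Polynomial.monomial_pow, one_mul, Polynomial.monomial_mul_monomial]
        congr 2
        omega
      rw [Finset.sum_congr rfl h2, Polynomial.monomial_pow, one_mul, ← map_sum, ← map_add]
      rw [Polynomial.eval_eq_sum_range, Finset.sum_range_succ, hp.coeff_natDegree, one_mul,
        add_comm] at hev
      rw [hev, map_zero]
  have key2 : ∀ g ∈ reesAlgebra I, (psi f).toRingHom.IsIntegralElem g := by
    intro g hg
    rw [← adjoin_monomial_eq_reesAlgebra] at hg
    induction hg using Algebra.adjoin_induction with
    | mem x hx =>
      obtain ⟨c, hc, rfl⟩ := hx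
      exact key c hc
    | algebraMap r =>
      have : algebraMap R (Polynomial R) r = (psi f).toRingHom (MvPolynomial.C r) :=
        ((psi f).commutes r).symm
      rw [this]
      exact RingHom.isIntegralElem_map _
    | add x y _ _ hx hy => exact RingHom.IsIntegralElem.add _ hx hy
    | mul x y _ _ hx hy => exact RingHom.IsIntegralElem.mul _ hx hy
  intro g
  obtain ⟨p, hp, hp'⟩ := key2 g.1 g.2
  refine ⟨p, hp, ?_⟩
  apply Subtype.ext
  have := Polynomial.hom_eval₂ p (psiB hf).toRingHom (reesAlgebra I).val.toRingHom g
  exact this.trans hp'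

variable [IsLocalRing R]

/-- special fiber ring -/
def Fib (I : Ideal R) : Type u := (↥(reesAlgebra I) ⧸
    (Ideal.map (algebraMap R ↥(reesAlgebra I)) (maximalIdeal R)))

noncomputable instance (I : Ideal R) : CommRing (Fib I) := Ideal.Quotient.commRing _

/-- projection to the special fiber ring -/
noncomputable def mkF (I : Ideal R) : reesAlgebra I →+* Fib I := Ideal.Quotient.mk _

lemma mkF_surj (I : Ideal R) : Function.Surjective (mkF I) := Ideal.Quotient.mk_surjective

lemma mkF_zero {I : Ideal R} {g : reesAlgebra I} : mkF I g = 0 ↔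
    g ∈ Ideal.map (algebraMap R ↥(reesAlgebra I)) (maximalIdeal R) :=
  Ideal.Quotient.eq_zero_iff_mem

/-- residue field to special fiber -/
noncomputable def kFib (I : Ideal R) : ResidueField R →+* Fib I :=
  Ideal.Quotient.lift (maximalIdeal R) ((mkF I).comp (algebraMap R (reesAlgebra I)))
    (fun _ ha => mkF_zero.mpr (Ideal.mem_map_of_mem _ ha))

lemma kFib_residue (I : Ideal R) (r : R) : kFib I (residue R r) = mkF I (algebraMap R _ r) := rfl

noncomputable def phiFib {I : Ideal R} {f : ι → R} (hf : ∀ i, f i ∈ I) :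
    MvPolynomial ι (ResidueField R) →+* Fib I :=
  MvPolynomial.eval₂Hom (kFib I) (fun i => mkF I (psiB hf (MvPolynomial.X i)))

lemma phiFib_comp {I : Ideal R} {f : ι → R} (hf : ∀ i, f i ∈ I) :
    (phiFib hf).comp (MvPolynomial.map (residue R)) = (mkF I).comp (psiB hf).toRingHom := by
  apply MvPolynomial.ringHom_ext
  · intro r
    have h1 : (psiB hf).toRingHom (MvPolynomial.C r) = algebraMap R (reesAlgebra I) r :=
      (psiB hf).commutes r
    rw [RingHom.comp_apply, RingHom.comp_apply, h1, MvPolynomial.map_C, phiFib,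
      MvPolynomial.eval₂Hom_C, kFib_residue]
  · intro i
    rw [RingHom.comp_apply, RingHom.comp_apply, MvPolynomial.map_X, phiFib,
      MvPolynomial.eval₂Hom_X']
    rfl

lemma phiFib_map {I : Ideal R} {f : ι → R} (hf : ∀ i, f i ∈ I) (G : MvPolynomial ι R) :
    phiFib hf (MvPolynomial.map (residue R) G) = mkF I (psiB hf G) :=
  congrArg (fun g => g G) (phiFib_comp hf)

lemma phiFib_isIntegral [IsNoetherianRing R] [IsDomain R] {I : Ideal R} {f : ι → R}
    (hf : ∀ i, f i ∈ I) (h : IsReduction (Ideal.span (Set.range f)) I) (hI : I ≠ ⊥) :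
    (phiFib hf).IsIntegral := by
  have h1 : ((phiFib hf).comp (MvPolynomial.map (residue R))).IsIntegral := by
    rw [phiFib_comp]
    exact (psiB_isIntegral hf h hI).trans _ _ (RingHom.isIntegral_of_surjective _ (mkF_surj I))
  exact RingHom.IsIntegral.tower_top _ _ h1

lemma krull_le_of_integral {A B : Type*} [CommRing A] [CommRing B] (f : A →+* B)
    (hf : f.IsIntegral) : ringKrullDim B ≤ ringKrullDim A := by
  let _ : Algebra A B := f.toAlgebra
  have : Algebra.IsIntegral A B := ⟨hf⟩
  refine Order.krullDim_le_of_strictMono (PrimeSpectrum.comap (algebraMap A B)) ?_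
  intro p q hpq
  exact Ideal.IsIntegral.comap_lt_comap (R := A) (I := p.asIdeal) (J := q.asIdeal) hpq

lemma krull_ge_of_integral {A B : Type*} [CommRing A] [CommRing B] (f : A →+* B)
    (hf : f.IsIntegral) (hinj : Function.Injective f) : ringKrullDim A ≤ ringKrullDim B := by
  let _ : Algebra A B := f.toAlgebra
  have : Algebra.IsIntegral A B := ⟨hf⟩
  refine iSup_le fun l => ?_
  obtain ⟨Q, -, hQ, hQl⟩ := Ideal.exists_ideal_over_prime_of_isIntegral (S := B)
    (RelSeries.head l).asIdeal ⊥ (by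
      rw [← RingHom.ker_eq_comap_bot]
      have : RingHom.ker (algebraMap A B) = ⊥ := (RingHom.injective_iff_ker_eq_bot _).mp hinj
      rw [this]; exact bot_le)
  have : Q.LiesOver (RelSeries.head l).asIdeal := ⟨hQl.symm⟩
  obtain ⟨L, hL, -⟩ := Ideal.exists_ltSeries_of_hasGoingUp l Q
  rw [← hL]
  exact le_iSup (fun p : LTSeries (PrimeSpectrum B) => (p.length : WithBot ℕ∞)) L

lemma L1 [Finite ι] [IsNoetherianRing R] [IsDomain R] {I : Ideal R} {f : ι → R}
    (h : IsReduction (Ideal.span (Set.range f)) I) (hI : I ≠ ⊥) {l : ℕ}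
    (hl : fiberDim I = (l : WithBot ℕ∞)) : l ≤ Nat.card ι := by
  have hf : ∀ i, f i ∈ I := fun i => h.1 (Ideal.subset_span ⟨i, rfl⟩)
  have h1 := krull_le_of_integral _ (phiFib_isIntegral hf h hI)
  rw [MvPolynomial.ringKrullDim_of_isNoetherianRing, ringKrullDim_eq_zero_of_field, zero_add] at h1
  have h2 : ringKrullDim (Fib I) = (l : WithBot ℕ∞) := hl
  rw [h2] at h1
  exact_mod_cast h1

lemma nak_red [IsNoetherianRing R] {J I : Ideal R} (hJ : J ≤ I) {r : ℕ}
    (h : I ^ (r + 1) ≤ J * I ^ r ⊔ maximalIdeal R * I ^ (r + 1)) : IsReduction J I := by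
  refine red_of_le hJ (r := r) ?_
  exact Submodule.le_of_le_smul_of_le_jacobson_bot (IsNoetherian.noetherian _)
    (by rw [IsLocalRing.jacobson_eq_maximalIdeal _ bot_ne_top]) h

end Rees

section MinRed

variable {R : Type u} [CommRing R] {ι : Type}

lemma eval_smul_homog {S : Type*} [CommRing S] {H : MvPolynomial ι S} {n : ℕ}
    (hH : H.IsHomogeneous n) (ν : ι → S) (c : S) :
    MvPolynomial.eval (fun j => ν j * c) H = MvPolynomial.eval ν H * c ^ n := by
  classical
  rw [MvPolynomial.eval_eq, MvPolynomial.eval_eq, Finset.sum_mul]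
  refine Finset.sum_congr rfl fun d hd => ?_
  have h1 : d.degree = n := by
    have := hH (MvPolynomial.mem_support_iff.mp hd)
    rw [Finsupp.degree_eq_weight_one]
    exact this
  simp only [mul_pow, Finset.prod_mul_distrib]
  rw [← h1, Finsupp.degree_apply, ← Finset.prod_pow_eq_pow_sum]
  ring

lemma eval_sub_mem {I J' : Ideal R} {f g : ι → R} (hf : ∀ j, f j ∈ I) (hg : ∀ j, g j ∈ I)
    (hfg : ∀ j, f j - g j ∈ J') {H : MvPolynomial ι R} {n : ℕ} (hH : H.IsHomogeneous n)
    {x : R} (hx : x ∈ I) :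
    (MvPolynomial.eval f H - MvPolynomial.eval g H) * x ∈ J' * I ^ n := by
  classical
  have hm : ∀ (f : ι → R), (∀ j, f j ∈ I) → ∀ d : ι →₀ ℕ,
      (d.prod fun j m => f j ^ m) ∈ I ^ d.degree := by
    intro f hf d
    rw [Finsupp.degree_apply, ← Finset.prod_pow_eq_pow_sum]
    exact Ideal.prod_mem_prod fun i _ => Ideal.pow_mem_pow (hf i) _
  have key : ∀ d : ι →₀ ℕ, ∀ x ∈ I, ((d.prod fun j m => f j ^ m) - (d.prod fun j m => g j ^ m)) * x
      ∈ J' * I ^ d.degree := by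
    intro d
    induction d using Finsupp.induction_linear with
    | zero => intro x hx; simp
    | add d e hd he =>
      intro x hx
      have h1 : ∀ f : ι → R, ((d + e).prod fun j m => f j ^ m) =
          (d.prod fun j m => f j ^ m) * (e.prod fun j m => f j ^ m) := by
        intro f
        exact Finsupp.prod_add_index' (by simp) (by intros; rw [pow_add])
      rw [h1, h1, map_add, pow_add]
      have e1 := Ideal.mul_mem_mul (hd x hx) (hm f hf e)
      have e2 := Ideal.mul_mem_mul (he x hx) (hm g hg d)
      rw [mul_assoc] at e1 e2
      rw [mul_comm (I ^ e.degree)] at e2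
      convert Ideal.add_mem _ e1 e2 using 1
      ring
    | single j m =>
      intro x hx
      rw [Finsupp.prod_single_index (by simp), Finsupp.prod_single_index (by simp),
        Finsupp.degree_single]
      cases m with
      | zero => simp
      | succ m =>
        have := Ideal.mul_mem_mul (pow_sub_pow_mem (hf j) (hg j) (hfg j) m) hx
        rwa [mul_assoc, ← pow_succ] at this
  rw [MvPolynomial.eval_eq, MvPolynomial.eval_eq, ← Finset.sum_sub_distrib, Finset.sum_mul]
  refine Ideal.sum_mem _ fun d hd => ?_
  have h1 : d.degree = n := by
    have := hH (MvPolynomial.mem_support_iff.mp hd)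
    rw [Finsupp.degree_eq_weight_one]
    exact this
  have := key d x hx
  rw [h1] at this
  have := Ideal.mul_mem_left _ (H.coeff d) this
  convert this using 1
  simp only [Finsupp.prod]
  ring

lemma coeff_mem_of_map {I q : Ideal R} {g : reesAlgebra I}
    (hg : g ∈ Ideal.map (algebraMap R ↥(reesAlgebra I)) q) : ∀ (n : ℕ),
    (g : Polynomial R).coeff n ∈ q * I ^ n := by
  rw [Ideal.map] at hg
  induction hg using Submodule.span_induction with
  | mem x h =>
    obtain ⟨r, hr, rfl⟩ := h
    intro n
    have : ((algebraMap R ↥(reesAlgebra I) r : reesAlgebra I) : Polynomial R) = Polynomial.C r := rfl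
    rw [this, Polynomial.coeff_C]
    split_ifs with h
    · subst h
      simpa using hr
    · exact Ideal.zero_mem _
  | zero => intro n; simp
  | add x y _ _ hx hy => intro n; simpa using Ideal.add_mem _ (hx n) (hy n)
  | smul a x _ hx =>
    intro n
    have : ((a • x : reesAlgebra I) : Polynomial R) = (a : Polynomial R) * x := rfl
    rw [this, Polynomial.coeff_mul]
    refine Ideal.sum_mem _ fun ij hij => ?_
    rw [← Finset.HasAntidiagonal.mem_antidiagonal.mp hij, pow_add, mul_left_comm]
    exact Ideal.mul_mem_mul (a.2 ij.1) (hx ij.2)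

variable [IsLocalRing R]

lemma drop_red [IsNoetherianRing R] {I : Ideal R} {a ν : ι → R} {k : ι}
    (h : IsReduction (Ideal.span (Set.range a)) I) {H : MvPolynomial ι R} {n : ℕ}
    (hH : H.IsHomogeneous (n + 1)) (hm : MvPolynomial.eval a H ∈ maximalIdeal R * I ^ (n + 1))
    (hν : IsUnit (MvPolynomial.eval ν H)) :
    IsReduction (Ideal.span (Set.range fun j => a j - ν j * a k)) I := by
  obtain ⟨hJ, r, hr⟩ := h
  set J := Ideal.span (Set.range a) with hJdef
  set J' := Ideal.span (Set.range fun j => a j - ν j * a k) with hJ'def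
  have ha : ∀ j, a j ∈ I := fun j => hJ (Ideal.subset_span ⟨j, rfl⟩)
  have hJ' : J' ≤ I := by
    rw [hJ'def, Ideal.span_le]
    rintro _ ⟨j, rfl⟩
    exact Ideal.sub_mem _ (ha j) (Ideal.mul_mem_left _ _ (ha k))
  have h1 : ∀ x ∈ I, a k ^ (n + 1) * x ∈ J' * I ^ (n + 1) ⊔ maximalIdeal R * I ^ (n + 2) := by
    intro x hx
    have e1 := eval_sub_mem (J' := J') ha (g := fun j => ν j * a k)
      (fun j => Ideal.mul_mem_left _ _ (ha k)) (fun j => Ideal.subset_span ⟨j, rfl⟩) hH hx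
    rw [eval_smul_homog hH] at e1
    have e2 : MvPolynomial.eval a H * x ∈ maximalIdeal R * I ^ (n + 2) := by
      have := Ideal.mul_mem_mul hm hx
      rwa [mul_assoc, ← pow_succ] at this
    obtain ⟨u, hu⟩ := hν
    rw [← hu] at e1
    have e3 := Ideal.mul_mem_left _ (↑u⁻¹ : R) (Ideal.sub_mem _
      ((le_sup_right : _ ≤ J' * I ^ (n + 1) ⊔ maximalIdeal R * I ^ (n + 2)) e2)
      ((le_sup_left : _ ≤ J' * I ^ (n + 1) ⊔ maximalIdeal R * I ^ (n + 2)) e1))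
    convert e3 using 1
    have : (↑u⁻¹ : R) * u = 1 := u.inv_mul
    linear_combination (-(a k ^ (n + 1) * x)) * this
  have h2 : J ≤ J' ⊔ Ideal.span {a k} := by
    rw [hJdef, Ideal.span_le]
    rintro _ ⟨j, rfl⟩
    have e1 : a j - ν j * a k ∈ J' := Ideal.subset_span ⟨j, rfl⟩
    have e2 : ν j * a k ∈ Ideal.span {a k} := Ideal.mul_mem_left _ _ (Ideal.mem_span_singleton_self _)
    have := Ideal.add_mem _ ((le_sup_left : J' ≤ J' ⊔ Ideal.span {a k}) e1)
      ((le_sup_right : _ ≤ J' ⊔ Ideal.span {a k}) e2)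
    simpa using this
  have h3 : J' ⊔ Ideal.span {a k} ≤ I := sup_le hJ' ((Ideal.span_singleton_le_iff_mem _).mpr (ha k))
  refine nak_red hJ' (r := n + 1 + r) ?_
  have h4 : I ^ (n + 1 + r + 1) = J ^ (n + 1) * I ^ (r + 1) := by
    rw [show n + 1 + r + 1 = r + (n + 1) + 1 by ring, pow_succ, red_pow hr, mul_assoc, ← pow_succ]
  rw [h4]
  calc J ^ (n + 1) * I ^ (r + 1) ≤ (J' * I ^ n ⊔ Ideal.span {a k ^ (n + 1)}) * I ^ (r + 1) := by
        refine Ideal.mul_mono_left ((Ideal.pow_right_mono h2 _).trans ((sup_pow_le _ _ _).trans ?_))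
        exact sup_le_sup_right (Ideal.mul_mono_right (Ideal.pow_right_mono h3 _)) _
    _ ≤ _ := by
        rw [Ideal.sup_mul]
        refine sup_le ?_ ?_
        · rw [mul_assoc, ← pow_add, ← h4, show n + (r + 1) = n + 1 + r by ring]
          exact le_sup_left
        · have e5 : Ideal.span {a k ^ (n + 1)} * I ≤
            J' * I ^ (n + 1) ⊔ maximalIdeal R * I ^ (n + 2) := by
            rw [Ideal.span_singleton_mul_le_iff]
            exact h1
          rw [pow_succ' I r, ← mul_assoc]
          refine (Ideal.mul_mono_left e5).trans ?_
          rw [Ideal.sup_mul, mul_assoc, mul_assoc, ← pow_add, ← pow_add, ← pow_succ', ← h4,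
            show n + 2 + r = n + 1 + r + 1 by ring]

lemma span_drop {a ν : ι → R} {k : ι} (hk : ν k = 1) :
    Ideal.span (Set.range fun j => a j - ν j * a k) =
      Ideal.span (Set.range fun j : {j // j ≠ k} => a j - ν j * a k) := by
  apply le_antisymm
  · rw [Ideal.span_le]
    rintro _ ⟨j, rfl⟩
    by_cases hj : j = k
    · subst hj; simp [hk]
    · exact Ideal.subset_span ⟨⟨j, hj⟩, rfl⟩
  · rw [Ideal.span_le]
    rintro _ ⟨j, rfl⟩
    exact Ideal.subset_span ⟨j, rfl⟩

lemma card_drop {s : ℕ} (k : Fin s) : Nat.card {j // j ≠ k} = s - 1 := by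
  rw [Nat.card_eq_fintype_card, Fintype.card_subtype_compl]
  simp

lemma Y [IsNoetherianRing R] [IsDomain R] [Infinite (ResidueField R)] {I J : Ideal R}
    (hJ : IsMinimalReduction J I) (hI : I ≠ ⊥) {l : ℕ}
    (hl : fiberDim I = (l : WithBot ℕ∞)) : ∃ a : Fin l → R, Ideal.span (Set.range a) = J := by
  classical
  have hex : ∃ s, ∃ a : Fin s → R, Ideal.span (Set.range a) = J :=
    Submodule.fg_iff_exists_fin_generating_family.mp (IsNoetherian.noetherian J)
  obtain ⟨s, hs, hmin⟩ : ∃ s, (∃ a : Fin s → R, Ideal.span (Set.range a) = J) ∧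
    ∀ s', (∃ a : Fin s' → R, Ideal.span (Set.range a) = J) → s ≤ s' :=
    ⟨_, Nat.find_spec hex, fun s' h => Nat.find_min' hex h⟩
  obtain ⟨a, ha⟩ := hs
  have hred : IsReduction (Ideal.span (Set.range a)) I := ha ▸ hJ.1
  have haI : ∀ j, a j ∈ I := fun j => hred.1 (Ideal.subset_span ⟨j, rfl⟩)
  have h1 : l ≤ s := by simpa using L1 hred hI hl
  have hinj : Function.Injective (phiFib haI) := by
    rw [injective_iff_map_eq_zero]
    intro G' hG'
    by_contra hne
    obtain ⟨G, rfl⟩ := MvPolynomial.map_surjective (residue R) residue_surjective G'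
    obtain ⟨d, hd⟩ := MvPolynomial.ne_zero_iff.mp hne
    rw [phiFib_map, mkF_zero] at hG'
    set n := d.degree with hn
    have hc := coeff_mem_of_map hG' n
    rw [psiB_coe, psi_coeff] at hc
    set H := MvPolynomial.homogeneousComponent n G with hHdef
    have hHh : H.IsHomogeneous n := MvPolynomial.homogeneousComponent_isHomogeneous n G
    have hHne : MvPolynomial.map (residue R) H ≠ 0 := by
      refine MvPolynomial.ne_zero_iff.mpr ⟨d, ?_⟩
      rw [MvPolynomial.coeff_map] at hd ⊢
      rwa [hHdef, MvPolynomial.coeff_homogeneousComponent, if_pos hn.symm]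
    clear_value n H
    cases n with
    | zero =>
      have : H = MvPolynomial.C (MvPolynomial.coeff 0 H) := by
        rw [← MvPolynomial.homogeneousComponent_zero]
        exact (MvPolynomial.homogeneousComponent_eq_self hHh).symm
      rw [this, MvPolynomial.eval_C, pow_zero, Ideal.one_eq_top, Ideal.mul_top] at hc
      apply hHne
      rw [this, MvPolynomial.map_C, (residue_eq_zero_iff _).mpr hc, map_zero]
    | succ n =>
      obtain ⟨μ, hμ⟩ : ∃ μ, MvPolynomial.eval μ (MvPolynomial.map (residue R) H) ≠ 0 := by
        by_contra hcon
        push Not at hcon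
        exact hHne (MvPolynomial.funext (by simpa using hcon))
      have hHh' := hHh.map (residue R)
      obtain ⟨k, hk⟩ : ∃ k, μ k ≠ 0 := by
        by_contra hcon
        push Not at hcon
        apply hμ
        have := eval_smul_homog hHh' μ 0
        have e : (fun j => μ j * 0) = μ := by funext j; simp [hcon]
        rw [e] at this
        simpa using this
      choose lift hlift using fun j => residue_surjective (R := R) (μ j * (μ k)⁻¹)
      let ν := Function.update lift k 1
      have hνk : ν k = 1 := Function.update_self ..
      have hν : ∀ j, residue R (ν j) = μ j * (μ k)⁻¹ := by
        intro j
        by_cases hj : j = k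
        · subst hj; rw [hνk, map_one, mul_inv_cancel₀ hk]
        · rw [← hlift]; simp only [ν, Function.update_of_ne hj]
      have hu : IsUnit (MvPolynomial.eval ν H) := by
        rw [← residue_ne_zero_iff_isUnit]
        have : residue R (MvPolynomial.eval ν H) =
            MvPolynomial.eval (fun j => μ j * (μ k)⁻¹) (MvPolynomial.map (residue R) H) := by
          rw [MvPolynomial.eval_map, ← funext hν]
          exact (MvPolynomial.eval₂_comp_left (residue R) (RingHom.id R) ν H)
        rw [this, eval_smul_homog hHh']
        exact mul_ne_zero hμ (pow_ne_zero _ (inv_ne_zero hk))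
      have hr := drop_red (k := k) hred hHh hc hu
      have hle : Ideal.span (Set.range fun j => a j - ν j * a k) ≤ J := by
        rw [← ha, Ideal.span_le]
        rintro _ ⟨j, rfl⟩
        exact Ideal.sub_mem _ (Ideal.subset_span ⟨j, rfl⟩)
          (Ideal.mul_mem_left _ _ (Ideal.subset_span ⟨k, rfl⟩))
      have heq := hJ.2 _ hr hle
      rw [span_drop hνk] at heq
      let e := (Finite.equivFin {j // j ≠ k})
      have := hmin _ ⟨_, (congrArg Ideal.span (e.symm.surjective.range_comp
        (fun j : {j // j ≠ k} => a j - ν j * a k))).trans heq⟩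
      rw [card_drop] at this
      have := k.2
      omega
  have h2 := krull_ge_of_integral _ (phiFib_isIntegral haI hred hI) hinj
  rw [MvPolynomial.ringKrullDim_of_isNoetherianRing, ringKrullDim_eq_zero_of_field, zero_add] at h2
  have h3 : ringKrullDim (Fib I) = (l : WithBot ℕ∞) := hl
  rw [h3] at h2
  have h4 : s ≤ l := by
    have : (s : WithBot ℕ∞) ≤ l := by simpa using h2
    exact_mod_cast this
  have : l = s := le_antisymm h1 h4
  rw [this]
  exact ⟨a, ha⟩

lemma M [IsNoetherianRing R] [IsDomain R] {I : Ideal R} (hI : I ≠ ⊥) {l : ℕ}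
    (hl : fiberDim I = (l : WithBot ℕ∞)) {a : Fin l → R}
    (hred : IsReduction (Ideal.span (Set.range a)) I) :
    IsMinimalReduction (Ideal.span (Set.range a)) I := by
  classical
  refine ⟨hred, fun J' hJ' hle => ?_⟩
  set J := Ideal.span (Set.range a) with hJdef
  have hmemJ : ∀ x, x ∈ J ↔ ∃ c : Fin l → R, ∑ i, c i * a i = x := by
    intro x
    rw [hJdef, Ideal.mem_span_range_iff_exists_fun]
  let W : Submodule (ResidueField R) (Fin l → ResidueField R) := Submodule.span _
    {w | ∃ c : Fin l → R, ∑ i, c i * a i ∈ J' ∧ ∀ i, w i = residue R (c i)}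
  have hW : ∀ w ∈ W, ∃ c : Fin l → R, ∑ i, c i * a i ∈ J' ∧ ∀ i, w i = residue R (c i) := by
    intro w hw
    induction hw using Submodule.span_induction with
    | mem x h => exact h
    | zero => exact ⟨0, by simp, by simp⟩
    | add x y _ _ hx hy =>
      obtain ⟨c, h1, h2⟩ := hx
      obtain ⟨c', h1', h2'⟩ := hy
      refine ⟨c + c', ?_, fun i => by simp [h2, h2']⟩
      simpa [add_mul, Finset.sum_add_distrib] using Ideal.add_mem _ h1 h1'
    | smul t x _ hx =>
      obtain ⟨c, h1, h2⟩ := hx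
      obtain ⟨t, rfl⟩ := residue_surjective (R := R) t
      refine ⟨t • c, ?_, fun i => by simp [h2]⟩
      simpa [mul_assoc, Finset.mul_sum] using Ideal.mul_mem_left _ t h1
  by_cases hWt : W = ⊤
  · refine le_antisymm hle ?_
    refine Submodule.le_of_le_smul_of_le_jacobson_bot (I := maximalIdeal R)
      (IsNoetherian.noetherian _) (by rw [IsLocalRing.jacobson_eq_maximalIdeal _ bot_ne_top]) ?_
    rw [hJdef, Ideal.span_le]
    rintro _ ⟨j, rfl⟩
    obtain ⟨c, h1, h2⟩ := hW (Pi.single j 1) (hWt ▸ Submodule.mem_top)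
    have e : a j = ∑ i, c i * a i + ∑ i, ((Pi.single j 1 : Fin l → R) i - c i) * a i := by
      rw [← Finset.sum_add_distrib]
      simp [sub_mul, Pi.single_apply]
    rw [e]
    refine Submodule.add_mem_sup h1 (Ideal.sum_mem _ fun i _ => Ideal.mul_mem_mul ?_
      (Ideal.subset_span ⟨i, rfl⟩))
    rw [← residue_eq_zero_iff, map_sub, ← h2 i]
    by_cases hij : i = j
    · subst hij; simp
    · simp [hij]
  · exfalso
    obtain ⟨f, hf, hfW⟩ := Submodule.exists_le_ker_of_lt_top W (lt_top_iff_ne_top.mpr hWt)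
    obtain ⟨k, hk⟩ : ∃ k, f (Pi.single k 1) ≠ 0 := by
      by_contra hcon
      push Not at hcon
      exact hf (LinearMap.pi_ext' fun i => by ext; simpa using hcon i)
    have hfsum : ∀ w : Fin l → ResidueField R, f w = ∑ i, w i * f (Pi.single i 1) := by
      intro w
      conv_lhs => rw [pi_eq_sum_univ' w]
      simp [map_sum]
    choose ν₀ hν₀ using fun j => residue_surjective (R := R)
      (f (Pi.single j 1) * (f (Pi.single k 1))⁻¹)
    let ν := Function.update ν₀ k 1
    have hνk : ν k = 1 := Function.update_self ..
    have hν : ∀ j, residue R (ν j) = f (Pi.single j 1) * (f (Pi.single k 1))⁻¹ := by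
      intro j
      by_cases hj : j = k
      · subst hj; rw [hνk, map_one, mul_inv_cancel₀ hk]
      · rw [← hν₀]; simp only [ν, Function.update_of_ne hj]
    set J₂ := Ideal.span (Set.range fun j => a j - ν j * a k) with hJ₂
    have hJ₂J : J₂ ≤ J := by
      rw [hJ₂, Ideal.span_le]
      rintro _ ⟨j, rfl⟩
      exact Ideal.sub_mem _ (Ideal.subset_span ⟨j, rfl⟩)
          (Ideal.mul_mem_left _ _ (Ideal.subset_span ⟨k, rfl⟩))
    have key : J' ≤ J₂ ⊔ maximalIdeal R * J := by
      intro x hx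
      obtain ⟨c, rfl⟩ := (hmemJ x).mp (hle hx)
      have h1 : (fun i => residue R (c i)) ∈ W := Submodule.subset_span ⟨c, hx, fun i => rfl⟩
      have h2 : f (fun i => residue R (c i)) = 0 := hfW h1
      rw [hfsum] at h2
      have h3 : ∑ i, c i * ν i ∈ maximalIdeal R := by
        rw [← residue_eq_zero_iff, map_sum]
        simp only [map_mul, hν, ← mul_assoc]
        rw [← Finset.sum_mul, h2, zero_mul]
      have e : ∑ i, c i * a i = ∑ i, c i * (a i - ν i * a k) + (∑ i, c i * ν i) * a k := by
        rw [Finset.sum_mul, ← Finset.sum_add_distrib]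
        exact Finset.sum_congr rfl fun i _ => by ring
      rw [e]
      exact Submodule.add_mem_sup (Ideal.sum_mem _ fun i _ => Ideal.mul_mem_left _ _
        (Ideal.subset_span ⟨i, rfl⟩)) (Ideal.mul_mem_mul h3 (Ideal.subset_span ⟨k, rfl⟩))
    have hr₂ : IsReduction J₂ I := by
      obtain ⟨h1, r, hr⟩ := hJ'
      refine nak_red (hJ₂J.trans hred.1) (r := r) ?_
      rw [hr]
      refine (Ideal.mul_mono_left key).trans ?_
      rw [Ideal.sup_mul, ← hr]
      refine sup_le_sup_left ?_ _
      rw [mul_assoc, pow_succ']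
      exact Ideal.mul_mono_right (Ideal.mul_mono_left hred.1)
    rw [hJ₂, span_drop hνk] at hr₂
    have := L1 hr₂ hI hl
    rw [card_drop] at this
    have := k.2
    omega

end MinRed

section Gen

variable {R : Type u} [CommRing R]

lemma mem_col {J I : Ideal R} {r : R} : r ∈ Submodule.colon J I ↔ ∀ x ∈ I, r * x ∈ J :=
  Submodule.mem_colon

lemma col_mono {J J' I : Ideal R} (h : J ≤ J') : Submodule.colon J I ≤ Submodule.colon J' I :=
  fun _ hr => mem_col.mpr fun x hx => h (mem_col.mp hr x hx)

lemma le_col {J I : Ideal R} : J ≤ Submodule.colon J I :=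
  fun _ hr => mem_col.mpr fun _ _ => Ideal.mul_mem_right _ _ hr

/-- genericity predicate -/
def PP (I : Ideal R) (l : ℕ) (𝔞 : Ideal R) (i : ℕ) : Prop :=
  𝔞 ≤ I ∧ (∀ q : Ideal R, q.IsPrime → Submodule.colon 𝔞 I ≤ q → (i : ℕ∞) ≤ q.height) ∧
  ∀ n, i + n < l → ∀ q : Ideal R, q.IsPrime → I ≤ q → q.height ≤ (i + n : ℕ) →
    ∃ s : Finset R, s.card ≤ n ∧ (s : Set R) ⊆ I ∧
      ¬ (Submodule.colon (𝔞 ⊔ Ideal.span (s : Set R)) I ≤ q)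

/-- elements locally in `𝔞 + qI` -/
def NN (𝔞 I q : Ideal R) : Ideal R := Ideal.span {x | ∃ τ, τ ∉ q ∧ τ * x ∈ 𝔞 ⊔ q * I}

lemma mem_NN {𝔞 I q : Ideal R} (hq : q.IsPrime) {x : R} :
    x ∈ NN 𝔞 I q ↔ ∃ τ, τ ∉ q ∧ τ * x ∈ 𝔞 ⊔ q * I := by
  refine ⟨fun h => ?_, fun h => Ideal.subset_span h⟩
  rw [NN] at h
  induction h using Submodule.span_induction with
  | mem x h => exact h
  | zero => exact ⟨1, (Ideal.ne_top_iff_one q).mp hq.ne_top, by simp⟩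
  | add x y _ _ hx hy =>
    obtain ⟨τ, h1, h2⟩ := hx
    obtain ⟨τ', h1', h2'⟩ := hy
    refine ⟨τ * τ', fun h => (hq.mem_or_mem h).elim h1 h1', ?_⟩
    have := Ideal.add_mem _ (Ideal.mul_mem_left _ τ' h2) (Ideal.mul_mem_left _ τ h2')
    convert this using 1
    ring
  | smul t x _ hx =>
    obtain ⟨τ, h1, h2⟩ := hx
    refine ⟨τ, h1, ?_⟩
    have := Ideal.mul_mem_left _ t h2
    convert this using 1
    simp only [smul_eq_mul]
    ring

lemma common_mult {I q : Ideal R} [IsNoetherianRing R] (hq : q.IsPrime) {L : Ideal R}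
    (h : ∀ x ∈ I, ∃ τ, τ ∉ q ∧ τ * x ∈ L) : ∃ τ, τ ∉ q ∧ ∀ x ∈ I, τ * x ∈ L := by
  obtain ⟨s, hs⟩ := (IsNoetherian.noetherian I : I.FG)
  have h' : ∀ x : s, ∃ τ, τ ∉ q ∧ τ * x ∈ L := fun x => h x (hs ▸ Ideal.subset_span x.2)
  choose τ h1 h2 using h'
  classical
  refine ⟨∏ x, τ x, fun hm => ?_, fun x hx => ?_⟩
  · obtain ⟨i, -, hi⟩ := (hq.prod_mem_iff).mp hm
    exact h1 i hi
  · rw [← hs] at hx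
    induction hx using Submodule.span_induction with
    | mem x h =>
      obtain ⟨r, hr⟩ := Finset.dvd_prod_of_mem τ (Finset.mem_univ (⟨x, h⟩ : s))
      rw [hr, mul_right_comm]
      exact Ideal.mul_mem_right _ _ (h2 ⟨x, h⟩)
    | zero => simp
    | add x y _ _ hx hy => rw [mul_add]; exact Ideal.add_mem _ hx hy
    | smul t x _ hx => rw [smul_eq_mul, mul_left_comm]; exact Ideal.mul_mem_left _ _ hx

lemma det_mod {Mod : Type*} [AddCommGroup Mod] [Module R Mod] [Module.Finite R Mod] {q : Ideal R}
    (hq : q.IsPrime) {τ : R} (hτ : τ ∉ q) (h : ∀ m : Mod, τ • m ∈ q • (⊤ : Submodule R Mod)) :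
    ∃ σ, σ ∉ q ∧ ∀ m : Mod, σ • m = 0 := by
  let f : Module.End R Mod := algebraMap R (Module.End R Mod) τ
  have hf : LinearMap.range f ≤ q • ⊤ := by
    rintro _ ⟨m, rfl⟩
    exact h m
  obtain ⟨p, hp, -, hco, hev⟩ :=
    LinearMap.exists_monic_and_natDegree_eq_and_coeff_mem_pow_and_aeval_eq_zero R f q hf
  refine ⟨p.eval τ, fun h5 => ?_, fun m => ?_⟩
  · rw [Polynomial.eval_eq_sum_range, Finset.sum_range_succ, hp.coeff_natDegree, one_mul] at h5
    have h6 : ∑ k ∈ Finset.range p.natDegree, p.coeff k * τ ^ k ∈ q := by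
      refine Ideal.sum_mem _ fun k hk => Ideal.mul_mem_right _ _ ?_
      exact Ideal.pow_le_self (by have := Finset.mem_range.mp hk; omega) (hco k)
    exact hτ (hq.mem_of_pow_mem _ ((Ideal.add_mem_iff_right _ h6).mp h5))
  · simp only [f] at hev
    rw [Polynomial.aeval_algebraMap_apply] at hev
    have := congrArg (fun g : Module.End R Mod => g m) hev
    simpa using this

lemma NN_proper [IsNoetherianRing R] {𝔞 I q : Ideal R} (hq : q.IsPrime)
    (h : I ≤ NN 𝔞 I q) : ¬ (Submodule.colon 𝔞 I ≤ q) := by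
  obtain ⟨τ, hτ, hI⟩ := common_mult hq (fun x hx => (mem_NN hq).mp (h hx))
  have h0 : ∀ m : Submodule.map (Submodule.mkQ 𝔞) I,
      τ • m ∈ q • (⊤ : Submodule R (Submodule.map (Submodule.mkQ 𝔞) I)) := by
    rintro ⟨_, x, hx, rfl⟩
    obtain ⟨α, hα, β, hβ, hab⟩ := Submodule.mem_sup.mp (hI x hx)
    have h1 : Submodule.map (Submodule.mkQ 𝔞) (q * I) =
        Submodule.map (Submodule.subtype _)
          (q • (⊤ : Submodule R (Submodule.map (Submodule.mkQ 𝔞) I))) := by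
      rw [Submodule.map_smul'', Submodule.map_top, Submodule.range_subtype, ← smul_eq_mul,
        Submodule.map_smul'']
    have h2 : Submodule.mkQ 𝔞 β ∈ Submodule.map (Submodule.mkQ 𝔞) (q * I) := ⟨β, hβ, rfl⟩
    rw [h1] at h2
    obtain ⟨z, hz, hzβ⟩ := h2
    refine (?_ : τ • _ = z) ▸ hz
    apply Subtype.ext
    refine Eq.trans ?_ hzβ.symm
    change τ • Submodule.mkQ 𝔞 x = _
    rw [← map_smul, ← sub_eq_zero, ← map_sub, ← LinearMap.mem_ker, Submodule.ker_mkQ, smul_eq_mul,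
      ← hab]
    simpa using hα
  obtain ⟨σ, h1, h2⟩ := det_mod hq hτ h0
  intro hle
  apply h1
  apply hle
  rw [mem_col]
  intro x hx
  have := congrArg Subtype.val (h2 ⟨_, x, hx, rfl⟩)
  have h3 : σ • Submodule.mkQ 𝔞 x = 0 := this
  rw [← map_smul, ← LinearMap.mem_ker, Submodule.ker_mkQ] at h3
  exact h3

/-- sum of colon ideals -/
def EE (𝔞 I : Ideal R) (n : ℕ) : Ideal R :=
  ⨆ (s : Finset R) (_ : s.card ≤ n ∧ (s : Set R) ⊆ I),
    Submodule.colon (𝔞 ⊔ Ideal.span (s : Set R)) I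

lemma col_le_EE {𝔞 I : Ideal R} {n : ℕ} : Submodule.colon 𝔞 I ≤ EE 𝔞 I n := by
  refine le_trans ?_ (le_iSup₂ (f := fun (s : Finset R) (_ : s.card ≤ n ∧ (s : Set R) ⊆ I) =>
    Submodule.colon (𝔞 ⊔ Ideal.span (s : Set R)) I) ∅ (by simp))
  exact col_mono le_sup_left

lemma PP_ext [IsNoetherianRing R] {I 𝔞 : Ideal R} {l i : ℕ} (h : PP I l 𝔞 i) (hi : i < l) :
    ∃ 𝒩 : Set (Ideal R), 𝒩.Finite ∧ (∀ N ∈ 𝒩, ¬ I ≤ N) ∧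
      ∀ x ∈ I, (∀ N ∈ 𝒩, x ∉ N) → PP I l (𝔞 ⊔ Ideal.span {x}) (i + 1) := by
  classical
  obtain ⟨h𝔞, h1, h2⟩ := h
  refine ⟨{N | N ∈ (Submodule.colon 𝔞 I).minimalPrimes ∧ ¬ I ≤ N} ∪
    ⋃ n ∈ Set.Iio l, {N | N ∈ NN 𝔞 I '' (I ⊔ EE 𝔞 I n).minimalPrimes ∧ ¬ I ≤ N}, ?_, ?_, ?_⟩
  · refine Set.Finite.union ?_ ?_
    · exact (Ideal.finite_minimalPrimes_of_isNoetherianRing R _).subset fun _ h => h.1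
    · refine Set.Finite.biUnion (Set.finite_Iio l) fun n _ => ?_
      exact ((Ideal.finite_minimalPrimes_of_isNoetherianRing R _).image _).subset fun _ h => h.1
  · rintro N (hN | hN)
    · exact hN.2
    · simp only [Set.mem_iUnion] at hN
      obtain ⟨n, _, hN⟩ := hN
      exact hN.2
  intro x hx hN
  refine ⟨sup_le h𝔞 ((Ideal.span_singleton_le_iff_mem _).mpr hx), ?_, ?_⟩
  · intro q hq hle
    by_contra hlt
    have hle' : Submodule.colon 𝔞 I ≤ q := (col_mono le_sup_left).trans hle
    have hiq := h1 q hq hle'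
    have hqi : q.height ≤ (i : ℕ) := by
      have := not_le.mp hlt
      push_cast at this
      exact Order.le_of_lt_add_one this
    by_cases hIq : I ≤ q
    · obtain ⟨s, hs, -, hs2⟩ := h2 0 (by omega) q hq hIq (by simpa using hqi)
      have : s = ∅ := by simpa using hs
      subst this
      apply hs2
      simpa using hle'
    · refine hN q (Or.inl ⟨?_, hIq⟩) (hle (le_col (Submodule.mem_sup_right
        (Ideal.mem_span_singleton_self x))))
      refine ⟨⟨hq, hle'⟩, ?_⟩
      rintro q' ⟨hq', hle''⟩ hqq
      by_contra hne
      have hlt' : q' < q := lt_of_le_not_ge hqq hne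
      have := Ideal.height_add_one_le_of_lt_of_isPrime hlt'
      have := (h1 q' hq' hle'')
      have h7 : (i : ℕ∞) + 1 ≤ i := (add_le_add_left this 1).trans
        ((Ideal.height_add_one_le_of_lt_of_isPrime hlt').trans hqi)
      have : i + 1 ≤ i := by exact_mod_cast h7
      omega
  · intro n hn q hq hIq hqh
    by_cases hE : EE 𝔞 I n ≤ q
    · have hmin : q ∈ (I ⊔ EE 𝔞 I n).minimalPrimes := by
        refine ⟨⟨hq, sup_le hIq hE⟩, ?_⟩
        rintro q' ⟨hq', hle''⟩ hqq
        by_contra hne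
        have hlt' : q' < q := lt_of_le_not_ge hqq hne
        have e1 : q'.height + 1 ≤ ((i + n : ℕ) : ℕ∞) + 1 :=
          (Ideal.height_add_one_le_of_lt_of_isPrime hlt').trans (hqh.trans_eq (by rw [add_right_comm i 1 n, Nat.cast_succ]))
        have e2 : q'.height ≤ ((i + n : ℕ) : ℕ∞) := by
          exact (ENat.add_le_add_iff_right (by simp)).mp e1
        obtain ⟨s, hs, hsI, hs2⟩ := h2 n (by omega) q' hq' (le_sup_left.trans hle'') e2
        apply hs2
        refine le_trans ?_ (le_sup_right.trans hle'')
        exact (le_iSup₂ (f := fun (s : Finset R) (_ : s.card ≤ n ∧ (s : Set R) ⊆ I) =>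
          Submodule.colon (𝔞 ⊔ Ideal.span (s : Set R)) I) s ⟨hs, hsI⟩)
      have hxN : x ∉ NN 𝔞 I q := by
        refine hN _ (Or.inr ?_)
        simp only [Set.mem_iUnion]
        refine ⟨n, show n < l by omega, ⟨q, hmin, rfl⟩, fun hle => ?_⟩
        exact NN_proper hq hle (col_le_EE.trans hE)
      obtain ⟨s, hs, hsI, hs2⟩ := h2 (n + 1) (by omega) q hq hIq (by
        convert hqh using 2; ring)
      obtain ⟨σ, hσ, hσq⟩ := SetLike.not_le_iff_exists.mp hs2
      obtain ⟨α, hα, β, hβ, hab⟩ := Submodule.mem_sup.mp (mem_col.mp hσ x hx)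
      obtain ⟨g, -, hg⟩ := Submodule.mem_span_finset.mp hβ
      obtain ⟨y, hys, hy⟩ : ∃ y ∈ s, g y ∉ q := by
        by_contra hcon
        push Not at hcon
        apply hxN
        refine (mem_NN hq).mpr ⟨σ, hσq, ?_⟩
        rw [← hab, ← hg]
        exact Submodule.add_mem_sup hα (Ideal.sum_mem _ fun z hz =>
          Ideal.mul_mem_mul (hcon z hz) (hsI hz))
      refine ⟨s.erase y, by rw [Finset.card_erase_of_mem hys]; omega,
        fun z hz => hsI (Finset.mem_of_mem_erase hz), fun hle => ?_⟩
      have hmem : g y * y ∈ 𝔞 ⊔ Ideal.span {x} ⊔ Ideal.span ((s.erase y : Finset R) : Set R) := by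
        have e : g y * y = (- α + σ * x) + (- ∑ z ∈ s.erase y, g z * z) := by
          rw [← hab, ← hg, ← Finset.add_sum_erase s _ hys]
          simp only [smul_eq_mul]
          ring
        rw [e]
        refine Submodule.add_mem_sup (Submodule.add_mem_sup (neg_mem hα)
          (Ideal.mul_mem_left _ _ (Ideal.mem_span_singleton_self _))) ?_
        exact neg_mem (Ideal.sum_mem _ fun z hz => Ideal.mul_mem_left _ _ (Ideal.subset_span hz))
      have : g y * σ ∈ q := by
        apply hle
        rw [mem_col]
        intro w hw
        obtain ⟨α', hα', β', hβ', hab'⟩ := Submodule.mem_sup.mp (mem_col.mp hσ w hw)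
        obtain ⟨g', -, hg'⟩ := Submodule.mem_span_finset.mp hβ'
        rw [mul_assoc, ← hab', ← hg', ← Finset.add_sum_erase s _ hys, mul_add, mul_add]
        refine Ideal.add_mem _ (Ideal.mul_mem_left _ _ (Submodule.mem_sup_left
          (Submodule.mem_sup_left hα'))) (Ideal.add_mem _ ?_ (Ideal.mul_mem_left _ _
            (Submodule.mem_sup_right ?_)))
        · rw [smul_eq_mul, mul_left_comm]
          exact Ideal.mul_mem_left _ _ hmem
        · exact Ideal.sum_mem _ fun z hz => Ideal.mul_mem_left _ _ (Ideal.subset_span hz)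
      exact (hq.mem_or_mem this).elim hy hσq
    · have : ∃ s : Finset R, (s.card ≤ n ∧ (s : Set R) ⊆ I) ∧
          ¬ (Submodule.colon (𝔞 ⊔ Ideal.span (s : Set R)) I ≤ q) := by
        by_contra hcon
        push Not at hcon
        exact hE (iSup₂_le hcon)
      obtain ⟨s, ⟨hs, hsI⟩, hs2⟩ := this
      exact ⟨s, hs, hsI, fun hle => hs2 ((col_mono (sup_le_sup_right le_sup_left _)).trans hle)⟩

end Gen

section Build

variable {R : Type u} [CommRing R]

lemma PP_base [IsNoetherianRing R] {I : Ideal R} {l : ℕ} (hG : Gcond I l) : PP I l ⊥ 0 := by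
  classical
  refine ⟨bot_le, fun _ _ _ => by simp, ?_⟩
  intro n hn q hq hIq hqh
  have hdim : rDim (Localization.AtPrime q) = (q.height : WithBot ℕ∞) :=
    IsLocalization.AtPrime.ringKrullDim_eq_height q _
  have hqh' : q.height ≤ (n : ℕ∞) := by simpa using hqh
  have h1 := hG ⟨q, hq⟩ hIq (by
    rw [hdim]
    have : q.height < (l : ℕ∞) := lt_of_le_of_lt hqh' (by exact_mod_cast (by omega : n < l))
    exact_mod_cast this)
  change ((muE (Ideal.map (algebraMap R (Localization.AtPrime q)) I) : ℕ∞) : WithBot ℕ∞) ≤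
    rDim (Localization.AtPrime q) at h1
  rw [hdim] at h1
  have h2 : muE (Ideal.map (algebraMap R (Localization.AtPrime q)) I) ≤ n :=
    (WithBot.coe_le_coe.mp h1).trans hqh'
  obtain ⟨m, hm, hmn⟩ : ∃ m ∈ {n : ℕ∞ | ∃ s : Finset (Localization.AtPrime q), (s.card : ℕ∞) = n ∧
      Submodule.span (Localization.AtPrime q) (s : Set (Localization.AtPrime q)) =
        (Ideal.map (algebraMap R (Localization.AtPrime q)) I)}, m ≤ n := by
    refine ⟨_, csInf_mem ?_, h2⟩
    obtain ⟨s, hs⟩ := (IsNoetherian.noetherian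
      (Ideal.map (algebraMap R (Localization.AtPrime q)) I))
    exact ⟨_, s, rfl, hs⟩
  obtain ⟨s, rfl, hs⟩ := hm
  have hmn : s.card ≤ n := by exact_mod_cast hmn
  have h3 : ∀ z : Localization.AtPrime q, ∃ b : R, z ∈ s → b ∈ I ∧ ∃ σ : R, σ ∉ q ∧
      algebraMap R _ σ * z = algebraMap R _ b := by
    intro z
    by_cases hz : z ∈ s
    · have : z ∈ Ideal.map (algebraMap R (Localization.AtPrime q)) I := by
        rw [← hs]; exact Submodule.subset_span hz
      obtain ⟨⟨b, σ⟩, hb⟩ := (IsLocalization.mem_map_algebraMap_iff q.primeCompl _).mp this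
      exact ⟨b, fun _ => ⟨b.2, σ, σ.2, by rw [mul_comm]; exact hb⟩⟩
    · exact ⟨0, fun h => absurd h hz⟩
  choose b hb using h3
  refine ⟨s.image b, Finset.card_image_le.trans hmn, ?_, fun hle => ?_⟩
  · intro x hx
    obtain ⟨z, hz, rfl⟩ := Finset.mem_image.mp (Finset.mem_coe.mp hx)
    exact (hb z hz).1
  · have h4 : Ideal.map (algebraMap R (Localization.AtPrime q)) I ≤
        Ideal.map (algebraMap R (Localization.AtPrime q)) (Ideal.span ((s.image b : Finset R) : Set R)) := by
      rw [← hs, Submodule.span_le]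
      intro z hz
      obtain ⟨-, σ, hσ, he⟩ := hb z hz
      have hu : IsUnit (algebraMap R (Localization.AtPrime q) σ) :=
        IsLocalization.map_units (M := q.primeCompl) _ ⟨σ, hσ⟩
      have : algebraMap R (Localization.AtPrime q) (b z) ∈ Ideal.map (algebraMap R
          (Localization.AtPrime q)) (Ideal.span ((s.image b : Finset R) : Set R)) :=
        Ideal.mem_map_of_mem _ (Ideal.subset_span (Finset.mem_coe.mpr (Finset.mem_image_of_mem b hz)))
      rw [← he] at this
      exact (Ideal.unit_mul_mem_iff_mem _ hu).mp this
    obtain ⟨τ, hτ, h5⟩ := common_mult (I := I) (L := Ideal.span ((s.image b : Finset R) : Set R)) hq (by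
      intro x hx
      have := h4 (Ideal.mem_map_of_mem _ hx)
      rw [IsLocalization.algebraMap_mem_map_algebraMap_iff q.primeCompl] at this
      obtain ⟨m, hm, hmx⟩ := this
      exact ⟨m, hm, hmx⟩)
    exact hτ (hle (mem_col.mpr fun x hx => by simpa using h5 x hx))

variable [IsLocalRing R]

lemma one_bad {N : Ideal R} {c y : R} (hy : y ∉ N) : ∃ F : Set (ResidueField R), F.Finite ∧
    ∀ lam : R, residue R lam ∉ F → c + lam * y ∉ N := by
  by_cases h : ∃ μ : R, c + μ * y ∈ N
  · obtain ⟨μ, hμ⟩ := h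
    refine ⟨{residue R μ}, Set.finite_singleton _, fun lam hl hm => hy ?_⟩
    have h1 : (lam - μ) * y ∈ N := by
      have := Ideal.sub_mem _ hm hμ
      convert this using 1; ring
    have hu : IsUnit (lam - μ) := by
      rw [← residue_ne_zero_iff_isUnit, map_sub, sub_ne_zero]
      exact hl
    exact (Ideal.unit_mul_mem_iff_mem _ hu).mp h1
  · push Not at h
    exact ⟨∅, Set.finite_empty, fun lam _ => h lam⟩

lemma fin_bad {𝒩 : Set (Ideal R)} (hf : 𝒩.Finite) {c y : R} (hy : ∀ N ∈ 𝒩, y ∉ N) :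
    ∃ F : Set (ResidueField R), F.Finite ∧
    ∀ lam : R, residue R lam ∉ F → ∀ N ∈ 𝒩, c + lam * y ∉ N := by
  have : ∀ N : 𝒩, ∃ F : Set (ResidueField R), F.Finite ∧
    ∀ lam : R, residue R lam ∉ F → c + lam * y ∉ N.1 := fun N => one_bad (hy N.1 N.2)
  choose F hF hF2 using this
  have := hf.to_subtype
  refine ⟨⋃ N, F N, Set.finite_iUnion hF, fun lam hl N hN => hF2 ⟨N, hN⟩ lam ?_⟩
  intro h
  exact hl (Set.mem_iUnion.mpr ⟨_, h⟩)

lemma exists_lam [Infinite (ResidueField R)] {F : Set (ResidueField R)} (hF : F.Finite) :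
    ∃ lam : R, residue R lam ∉ F := by
  obtain ⟨x, hx⟩ := hF.exists_notMem
  obtain ⟨lam, rfl⟩ := residue_surjective x
  exact ⟨lam, hx⟩

lemma exists_avoid [Infinite (ResidueField R)] {𝒩 : Set (Ideal R)} (hf : 𝒩.Finite) {I : Ideal R}
    (h : ∀ N ∈ 𝒩, ¬ I ≤ N) : ∃ y ∈ I, ∀ N ∈ 𝒩, y ∉ N := by
  induction 𝒩, hf using Set.Finite.induction_on with
  | empty => exact ⟨0, Ideal.zero_mem _, by simp⟩
  | @insert N 𝒩 hN hf ih =>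
    obtain ⟨y, hyI, hy⟩ := ih fun N' hN' => h N' (Or.inr hN')
    by_cases hyN : y ∈ N
    · obtain ⟨z, hzI, hz⟩ := SetLike.not_le_iff_exists.mp (h N (Or.inl rfl))
      obtain ⟨F, hF, hF2⟩ := fin_bad hf (c := z) hy
      obtain ⟨lam, hlam⟩ := exists_lam hF
      refine ⟨z + lam * y, Ideal.add_mem _ hzI (Ideal.mul_mem_left _ _ hyI), ?_⟩
      rintro N' (rfl | hN')
      · intro hm
        exact hz ((Ideal.add_mem_iff_left _ (Ideal.mul_mem_left _ _ hyN)).mp hm)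
      · exact hF2 lam hlam N' hN'
    · refine ⟨y, hyI, ?_⟩
      rintro N' (rfl | hN')
      · exact hyN
      · exact hy N' hN'

lemma build [IsNoetherianRing R] [IsDomain R] [Infinite (ResidueField R)] {I : Ideal R} {l : ℕ}
    (hG : Gcond I l) (hI : I ≠ ⊥) {a₀ : ℕ → R} (ha₀ : ∀ k, a₀ k ∈ I)
    (hr₀ : IsReduction (Ideal.span (a₀ '' Set.Iio l)) I) (t : ℕ) (ht : t ≤ l) :
    ∃ a : ℕ → R, (∀ k, a k ∈ I) ∧ IsReduction (Ideal.span (a '' Set.Iio l)) I ∧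
      ∀ S : Finset ℕ, S ⊆ Finset.range t → PP I l (Ideal.span (a '' S)) S.card := by
  classical
  induction t with
  | zero =>
    refine ⟨a₀, ha₀, hr₀, fun S hS => ?_⟩
    have : S = ∅ := by simpa using hS
    subst this
    simpa using PP_base hG
  | succ t ih =>
    obtain ⟨a, ha, hr, hP⟩ := ih (by omega)
    have h1 : ∀ S : (Finset.range t).powerset, ∃ 𝒩 : Set (Ideal R), 𝒩.Finite ∧ (∀ N ∈ 𝒩, ¬ I ≤ N) ∧
      ∀ x ∈ I, (∀ N ∈ 𝒩, x ∉ N) → PP I l (Ideal.span (a '' S.1) ⊔ Ideal.span {x}) (S.1.card + 1) := by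
      intro S
      have hS := Finset.mem_powerset.mp S.2
      refine PP_ext (hP _ hS) ?_
      have := Finset.card_le_card hS
      rw [Finset.card_range] at this
      omega
    choose 𝒩 hf hI' hx using h1
    have hfin : (⋃ S, 𝒩 S).Finite := Set.finite_iUnion hf
    obtain ⟨y, hyI, hy⟩ := exists_avoid hfin (I := I) (by
      intro N hN
      obtain ⟨S, hS⟩ := Set.mem_iUnion.mp hN
      exact hI' S N hS)
    obtain ⟨F, hF, hF2⟩ := fin_bad hfin (c := a t) hy
    have hsplit : ∀ b : ℕ → R, Ideal.span (b '' Set.Iio l) =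
        Ideal.span (b '' (Set.Iio l \ {t})) ⊔ Ideal.span {b t} := by
      intro b
      rw [← Ideal.span_union, ← Set.image_singleton, ← Set.image_union,
        Set.sdiff_union_of_subset (by simpa using ht)]
    have hr' := hr
    rw [hsplit] at hr'
    obtain ⟨F', hF', hF2'⟩ := Zlem hr' hI hyI
    obtain ⟨lam, hlam⟩ := exists_lam (hF.union hF')
    have hxI : a t + lam * y ∈ I := Ideal.add_mem _ (ha t) (Ideal.mul_mem_left _ _ hyI)
    let b := Function.update a t (a t + lam * y)
    have hbt : b t = a t + lam * y := Function.update_self ..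
    have hb : ∀ k, k ≠ t → b k = a k := fun k hk => Function.update_of_ne hk ..
    have himg : ∀ S : Set ℕ, t ∉ S → b '' S = a '' S := by
      intro S hS
      refine Set.image_congr fun k hk => hb k ?_
      rintro rfl
      exact hS hk
    refine ⟨b, ?_, ?_, ?_⟩
    · intro k
      by_cases hk : k = t
      · subst hk; rw [hbt]; exact hxI
      · rw [hb k hk]; exact ha k
    · rw [hsplit, himg _ (by simp), hbt]
      exact hF2' lam (fun h => hlam (Or.inr h))
    · intro S hS
      by_cases htS : t ∈ S
      · have hSe : S.erase t ⊆ Finset.range t := by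
          intro k hk
          have h1 := Finset.mem_range.mp (hS (Finset.mem_of_mem_erase hk))
          have h2 := Finset.ne_of_mem_erase hk
          exact Finset.mem_range.mpr (by omega)
        have := hx ⟨S.erase t, Finset.mem_powerset.mpr hSe⟩ _ hxI (fun N hN =>
          hF2 lam (fun h => hlam (Or.inl h)) N (Set.mem_iUnion.mpr ⟨_, hN⟩))
        rw [Finset.card_erase_add_one htS] at this
        convert this using 1
        rw [← hbt, ← himg _ (by simp), ← Ideal.span_union, ← Set.image_singleton,
          ← Set.image_union]
        congr 2
        ext k
        simp
        by_cases hk : k = t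
        · simp [hk, htS]
        · simp [hk]
      · rw [himg _ (by simpa using htS)]
        refine hP S fun k hk => ?_
        have h1 := Finset.mem_range.mp (hS hk)
        have h2 : k ≠ t := by rintro rfl; exact htS hk
        exact Finset.mem_range.mpr (by omega)

end Build

section Chain
set_option linter.unusedSectionVars false

variable {R : Type u} [CommRing R]

/-- ideal generated by the first elements of a sequence -/
def Aa (b : ℕ → R) (i : ℕ) : Ideal R := Ideal.span (b '' Set.Iio i)

/-- colon ideals -/
def Kk (I : Ideal R) (b : ℕ → R) (i : ℕ) : Ideal R := Submodule.colon (Aa b i) I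

lemma Aa_zero (b : ℕ → R) : Aa b 0 = ⊥ := by simp [Aa]

lemma Aa_succ (b : ℕ → R) (i : ℕ) : Aa b (i + 1) = Aa b i ⊔ Ideal.span {b i} := by
  rw [Aa, Aa, ← Ideal.span_union, ← Set.image_singleton, ← Set.image_union]
  congr 2
  ext k
  simp only [Set.mem_Iio, Set.union_singleton, Set.mem_insert_iff]
  omega

lemma Aa_mono (b : ℕ → R) {i j : ℕ} (h : i ≤ j) : Aa b i ≤ Aa b j :=
  Ideal.span_mono (Set.image_mono (Set.Iio_subset_Iio h))

lemma Kk_mono (I : Ideal R) (b : ℕ → R) {i j : ℕ} (h : i ≤ j) : Kk I b i ≤ Kk I b j :=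
  col_mono (Aa_mono b h)

lemma Aa_le_Kk (I : Ideal R) (b : ℕ → R) (i : ℕ) : Aa b i ≤ Kk I b i := le_col

lemma mem_Aa (b : ℕ → R) {i k : ℕ} (h : k < i) : b k ∈ Aa b i :=
  Ideal.subset_span ⟨k, h, rfl⟩

lemma Aa_le {I : Ideal R} {b : ℕ → R} (hb : ∀ k, b k ∈ I) (i : ℕ) : Aa b i ≤ I := by
  rw [Aa, Ideal.span_le]
  rintro _ ⟨k, -, rfl⟩
  exact hb k

lemma rDim_loc (p : PrimeSpectrum R) :
    rDim (Localization.AtPrime p.asIdeal) = (p.asIdeal.height : WithBot ℕ∞) :=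
  IsLocalization.AtPrime.ringKrullDim_eq_height p.asIdeal _

lemma le_ht {K : Ideal R} {n : ℕ} (h : ∀ q : Ideal R, q.IsPrime → K ≤ q → (n : ℕ∞) ≤ q.height) :
    (n : WithBot ℕ∞) ≤ ht K := by
  refine le_iInf₂ fun p hp => ?_
  rw [rDim_loc]
  exact_mod_cast h p.asIdeal p.2 hp

variable [IsLocalRing R]

/-- chain data -/
structure Ch (I : Ideal R) (l d : ℕ) (b : ℕ → R) : Prop where
  Im : I ≤ maximalIdeal R
  Ine : I ≠ ⊥
  dim : ringKrullDim R = d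
  CM : Dp (⊥ : Ideal R) d
  mem : ∀ k, b k ∈ I
  pp : ∀ i ≤ l, PP I l (Aa b i) i
  an : ANminus I (l - 1)
  ne : ∀ i < l, Kk I b i ≠ ⊤

variable [IsNoetherianRing R] [IsDomain R] {I : Ideal R} {l d : ℕ} {b : ℕ → R}

lemma Ch.K0 (h : Ch I l d b) : Kk I b 0 = ⊥ := by
  rw [eq_bot_iff]
  intro x hx
  rw [Kk, Aa_zero, mem_col] at hx
  obtain ⟨y, hy, hy0⟩ := Submodule.exists_mem_ne_zero_of_ne_bot h.Ine
  have := hx y hy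
  exact (mul_eq_zero.mp this).resolve_right hy0

lemma Ch.le_d (h : Ch I l d b) {i : ℕ} (hi : i < l) : i ≤ d := by
  obtain ⟨q, hq, hle⟩ := Ideal.exists_le_maximal _ (h.ne i hi)
  have h1 := (h.pp i hi.le).2.1 q hq.isPrime hle
  have := hq.isPrime
  have h2 := Ideal.height_le_ringKrullDim_of_isPrime (I := q)
  rw [h.dim] at h2
  have h3 : q.height ≤ (d : ℕ∞) := by exact_mod_cast h2
  exact_mod_cast h1.trans h3

lemma Ch.notle (h : Ch I l d b) {i : ℕ} (hi : i < l) {q : Ideal R} (hq : q.IsPrime)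
    (hIq : I ≤ q) (hh : q.height ≤ (i : ℕ∞)) : ¬ Kk I b i ≤ q := by
  obtain ⟨s, hs, -, hs2⟩ := (h.pp i hi.le).2.2 0 (by omega) q hq hIq (by simpa using hh)
  have : s = ∅ := by simpa using hs
  subst this
  simpa [Kk] using hs2

lemma Ch.reg' (h : Ch I l d b) {i : ℕ} (hi : i < l) (hD : Dp (Kk I b i) (d - i)) :
    ∀ r, b i * r ∈ Kk I b i → r ∈ Kk I b i := by
  refine reg_of_AP fun q hq hbq => ?_
  have hKq := hq.le
  have h1 := LemAB h.dim hD hq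
  have hid := h.le_d hi
  have hqi : q.height ≤ (i : ℕ∞) := by
    have e : ((d : ℕ) : ℕ∞) = (i : ℕ∞) + ((d - i : ℕ) : ℕ∞) := by
      rw [← Nat.cast_add]; congr 1; omega
    rw [e] at h1
    exact (ENat.add_le_add_iff_right (by simp)).mp h1
  by_cases hIq : I ≤ q
  · exact h.notle hi hq.1 hIq hqi hKq
  · have h2 : Kk I b (i + 1) ≤ q := by
      obtain ⟨s, hs, hsq⟩ := SetLike.not_le_iff_exists.mp hIq
      intro x hx
      have h3 : x * s ∈ Aa b (i + 1) := mem_col.mp hx s hs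
      have h4 : Aa b (i + 1) ≤ q := by
        rw [Aa_succ]
        exact sup_le ((Aa_le_Kk I b i).trans hKq) ((Ideal.span_singleton_le_iff_mem _).mpr hbq)
      exact (hq.1.mem_or_mem (h4 h3)).resolve_right hsq
    have h5 := ((h.pp (i + 1) hi).2.1 q hq.1 h2).trans hqi
    have : i + 1 ≤ i := by exact_mod_cast h5
    omega

lemma Ch.ass' (h : Ch I l d b) {i : ℕ} (hi : i < l) (hD : Dp (Kk I b i) (d - i)) {q : Ideal R}
    (hq : AP (Kk I b i ⊔ Ideal.span {b i}) q) : q.height ≤ ((i + 1 : ℕ) : ℕ∞) := by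
  have hid := h.le_d hi
  obtain hlt | heq := hid.lt_or_eq
  · obtain ⟨n, hn⟩ : ∃ n, d - i = n + 1 := ⟨d - i - 1, by omega⟩
    have hreg := h.reg' hi hD
    rw [hn] at hD
    have h1 := LemAB h.dim (hD.exchange (h.Im (h.mem i)) hreg) hq
    have e : ((d : ℕ) : ℕ∞) = ((i + 1 : ℕ) : ℕ∞) + (n : ℕ∞) := by
      rw [← Nat.cast_add]; congr 1; omega
    rw [e] at h1
    exact (ENat.add_le_add_iff_right (by simp)).mp h1
  · have := hq.1
    have h2 := Ideal.height_le_ringKrullDim_of_isPrime (I := q)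
    rw [h.dim] at h2
    have h3 : q.height ≤ (d : ℕ∞) := by exact_mod_cast h2
    exact h3.trans (by exact_mod_cast (by omega : d ≤ i + 1))

lemma Ch.main (h : Ch I l d b) : ∀ i < l, Dp (Kk I b i) (d - i) ∧ Kk I b i ⊓ I ≤ Aa b i := by
  intro i
  induction i with
  | zero =>
    intro hi
    rw [h.K0]
    exact ⟨h.CM, by simp⟩
  | succ i ih =>
    intro hi
    obtain ⟨hD, hI⟩ := ih (by omega)
    have hi' : i < l := by omega
    have hid := h.le_d hi
    have hreg := h.reg' hi' hD
    set L := Kk I b i ⊔ Ideal.span {b i} with hL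
    have hass : ∀ q, AP L q → q.height ≤ ((i + 1 : ℕ) : ℕ∞) := fun q hq => h.ass' hi' hD hq
    have hDL : Dp L (d - (i + 1)) := by
      have : d - i = d - (i + 1) + 1 := by omega
      rw [this] at hD
      exact hD.exchange (h.Im (h.mem i)) hreg
    have hLA : Aa b (i + 1) ≤ L := by
      rw [Aa_succ]
      exact sup_le_sup_right (Aa_le_Kk I b i) _
    have hLI : L ⊓ I ≤ Aa b (i + 1) := by
      rintro x ⟨hxL, hxI⟩
      obtain ⟨k, hk, z, hz, rfl⟩ := Submodule.mem_sup.mp hxL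
      have hzI : z ∈ I := (Ideal.span_singleton_le_iff_mem _).mpr (h.mem i) hz
      rw [Aa_succ]
      exact Submodule.add_mem_sup (hI ⟨hk, (Ideal.add_mem_iff_left _ hzI).mp hxI⟩) hz
    have hLK : L ≤ Kk I b (i + 1) := by
      refine sup_le (Kk_mono I b (by omega)) ?_
      rw [Ideal.span_singleton_le_iff_mem]
      exact Aa_le_Kk I b _ (mem_Aa b (by omega))
    have hnotI : ∀ x ∈ Kk I b (i + 1), ∀ q : Ideal R, ¬ I ≤ q → ∃ s, s ∉ q ∧ s * x ∈ L := by
      intro x hx q hIq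
      obtain ⟨s, hs, hsq⟩ := SetLike.not_le_iff_exists.mp hIq
      exact ⟨s, hsq, by rw [mul_comm]; exact hLA (mem_col.mp hx s hs)⟩
    constructor
    · by_cases hA : ∀ q : Ideal R, q.IsPrime → I ≤ q → ((i + 1 : ℕ) : ℕ∞) < q.height
      · have : Kk I b (i + 1) = L := by
          refine le_antisymm (fun x hx => ?_) hLK
          refine mem_of_AP fun q hq => hnotI x hx q fun hIq => ?_
          exact absurd (hass q hq) (not_le.mpr (hA q hq.1 hIq))
        rw [this]
        exact hDL
      · push Not at hA
        obtain ⟨q₀, hq₀, hIq₀, hh⟩ := hA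
        have hK := h.ne _ hi
        have hgeo : IsGeometricRI I (Kk I b (i + 1)) (i + 1) := by
          classical
          refine ⟨⟨hK, ?_, le_ht (h.pp (i + 1) hi.le).2.1, Aa b (i + 1), Aa_le h.mem _,
            ⟨(Finset.range (i + 1)).image b, ?_, ?_⟩, rfl⟩, ?_⟩
          · refine (iInf₂_le (⟨q₀, hq₀⟩ : PrimeSpectrum R) hIq₀).trans ?_
            rw [rDim_loc]
            exact_mod_cast hh
          · exact Finset.card_image_le.trans (by simp)
          · simp only [Aa, Finset.coe_image, Finset.coe_range]
          · have : ((i + 1 : ℕ) : WithBot ℕ∞) + 1 = ((i + 2 : ℕ) : WithBot ℕ∞) := by push_cast; ring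
            rw [this]
            refine le_ht fun q hq hle => ?_
            by_contra hlt
            refine h.notle hi hq (le_sup_left.trans hle) ?_ (le_sup_right.trans hle)
            have := not_le.mp hlt
            exact Order.le_of_lt_add_one (by exact_mod_cast this)
        have hcm := h.an (i + 1) (by omega) _ hgeo
        refine Dp_of_depth hK ?_
        have hnot : ¬ I ≤ L := by
          intro hle
          apply hK
          rw [Ideal.eq_top_iff_one]
          exact mem_col.mpr fun x hx => by rw [one_mul]; exact hLI ⟨hle hx, hx⟩
        obtain ⟨q, hq, y, hy, hyL, hqy⟩ := AP_exists hnot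
        have hKq : Kk I b (i + 1) ≤ q := fun x hx => (hqy x).mpr (hLA (mem_col.mp hx y hy))
        have h1 := LemA (q := ⟨q, hq⟩) hDL ⟨hq, y, hqy⟩
        have h2 := coheight_le_quot (⟨q, hq⟩ : PrimeSpectrum R) hKq
        have h3 : (((d - (i + 1) : ℕ) : ℕ∞) : WithBot ℕ∞) ≤ (qDepth R (Kk I b (i + 1)) : WithBot ℕ∞) := by
          rw [← hcm]
          exact (WithBot.coe_le_coe.mpr h1).trans h2
        exact WithBot.coe_le_coe.mp h3
    · rintro x ⟨hxK, hxI⟩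
      refine hLI ⟨mem_of_AP fun q hq => ?_, hxI⟩
      by_cases hIq : I ≤ q
      · obtain ⟨s, hs, hsq⟩ := SetLike.not_le_iff_exists.mp (h.notle hi hq.1 hIq (hass q hq))
        exact ⟨s, hsq, hLA (mem_col.mp hs x hxI)⟩
      · exact hnotI x hxK q hIq

lemma Ch.reg (h : Ch I l d b) {i : ℕ} (hi : i < l) :
    ∀ r, b i * r ∈ Kk I b i → r ∈ Kk I b i := h.reg' hi (h.main i hi).1

lemma Ch.ass (h : Ch I l d b) {i : ℕ} (hi : i < l) {q : Ideal R}
    (hq : AP (Kk I b i ⊔ Ideal.span {b i}) q) : q.height ≤ ((i + 1 : ℕ) : ℕ∞) :=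
  h.ass' hi (h.main i hi).1 hq

lemma Ch.inter (h : Ch I l d b) {i : ℕ} (hi : i < l) {x : R} (hx : x ∈ Kk I b i) (hxI : x ∈ I) :
    x ∈ Aa b i := (h.main i hi).2 ⟨hx, hxI⟩

lemma Ch.assK (h : Ch I l d b) {i : ℕ} (hi : i < l) {q : Ideal R}
    (hq : AP (Kk I b i) q) : q.height ≤ (i : ℕ∞) := by
  have h1 := LemAB h.dim (h.main i hi).1 hq
  have hid := h.le_d hi
  have e : ((d : ℕ) : ℕ∞) = (i : ℕ∞) + ((d - i : ℕ) : ℕ∞) := by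
    rw [← Nat.cast_add]; congr 1; omega
  rw [e] at h1
  exact (ENat.add_le_add_iff_right (by simp)).mp h1

end Chain

section DSsec
set_option linter.unusedSectionVars false

variable {R : Type u} [CommRing R] [IsLocalRing R] [IsNoetherianRing R] [IsDomain R]
  {I : Ideal R} {l d : ℕ} {b : ℕ → R}

lemma mem_Aa_succ_mul {b : ℕ → R} {i : ℕ} {T : Ideal R} {x : R} (h : x ∈ Aa b (i + 1) * T) :
    ∃ y ∈ Aa b i * T, ∃ z ∈ T, x = y + b i * z := by
  rw [Aa_succ, Ideal.sup_mul] at h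
  obtain ⟨y, hy, w, hw, rfl⟩ := Submodule.mem_sup.mp h
  obtain ⟨z, hz, rfl⟩ := Ideal.mem_span_singleton_mul.mp hw
  exact ⟨y, hy, z, hz, rfl⟩

lemma Ch.DS (h : Ch I l d b) : ∀ j k i : ℕ, i + k = l → ∀ x, (i < l → x ∈ Kk I b i) →
    x ∈ Aa b l ^ (j + 1) → x ∈ Aa b i * Aa b l ^ j := by
  intro j
  induction j with
  | zero =>
    intro k i hik x hx hxJ
    rw [pow_zero, mul_one]
    rw [zero_add, pow_one] at hxJ
    obtain hi | hi := (by omega : i < l ∨ i = l)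
    · exact h.inter hi (hx hi) (Aa_le h.mem _ hxJ)
    · rwa [hi]
  | succ j ihj =>
    intro k
    induction k with
    | zero =>
      intro i hik x hx hxJ
      obtain rfl : i = l := by omega
      rwa [← pow_succ']
    | succ k ihk =>
      intro i hik x hx hxJ
      have hi : i < l := by omega
      have h1 := ihk (i + 1) (by omega) x (fun _ => Kk_mono I b (by omega) (hx hi)) hxJ
      obtain ⟨y, hy, z, hz, rfl⟩ := mem_Aa_succ_mul h1
      have hyK : y ∈ Kk I b i := Aa_le_Kk I b i (Ideal.mul_le_left hy)
      have hzK : z ∈ Kk I b i := h.reg hi z ((Ideal.add_mem_iff_right _ hyK).mp (hx hi))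
      have h2 := ihj (k + 1) i hik z (fun _ => hzK) hz
      refine Ideal.add_mem _ hy ?_
      rw [pow_succ', mul_left_comm]
      exact Ideal.mul_mem_mul (mem_Aa b hi) h2

lemma Ch.ds (h : Ch I l d b) {i j : ℕ} (hi : i ≤ l) {x : R} (hx : i < l → x ∈ Kk I b i)
    (hxJ : x ∈ Aa b l ^ (j + 1)) : x ∈ Aa b i * Aa b l ^ j :=
  h.DS j (l - i) i (by omega) x hx hxJ

lemma Ch.cancel (h : Ch I l d b) {i n : ℕ} (hi : i < l) {w : R}
    (hw : b i * w ∈ Kk I b i ⊔ Aa b l ^ (n + 1)) : w ∈ Kk I b i ⊔ Aa b l ^ n := by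
  obtain ⟨κ, hκ, y, hy, e⟩ := Submodule.mem_sup.mp hw
  have hyK : y ∈ Kk I b (i + 1) := by
    have : y = w * b i - κ := by rw [mul_comm w, ← e]; ring
    rw [this]
    exact Ideal.sub_mem _ (Ideal.mul_mem_left _ _ (Aa_le_Kk I b _ (mem_Aa b (by omega))))
      (Kk_mono I b (by omega) hκ)
  obtain ⟨y', hy', z, hz, rfl⟩ := mem_Aa_succ_mul (h.ds (i := i + 1) hi (fun _ => hyK) hy)
  have h1 : w - z ∈ Kk I b i := by
    apply h.reg hi
    have : b i * (w - z) = κ + y' := by linear_combination -e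
    rw [this]
    exact Ideal.add_mem _ hκ (Aa_le_Kk I b i (Ideal.mul_le_left hy'))
  have : w = (w - z) + z := by ring
  rw [this]
  exact Submodule.add_mem_sup h1 hz

lemma Ch.cancel_iff (h : Ch I l d b) {i n : ℕ} (hi : i < l) {w : R} :
    b i * w ∈ Kk I b i ⊔ Aa b l ^ (n + 1) ↔ w ∈ Kk I b i ⊔ Aa b l ^ n := by
  refine ⟨h.cancel hi, fun hw => ?_⟩
  obtain ⟨κ, hκ, y, hy, rfl⟩ := Submodule.mem_sup.mp hw
  rw [mul_add]
  refine Submodule.add_mem_sup (Ideal.mul_mem_left _ _ hκ) ?_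
  rw [pow_succ']
  exact Ideal.mul_mem_mul (mem_Aa b hi) hy

lemma Ch.assJ' (h : Ch I l d b) : ∀ n k i : ℕ, i + k + 1 = l → ∀ q : Ideal R,
    AP (Kk I b i ⊔ Aa b l ^ n) q → q.height ≤ (l : ℕ∞) := by
  intro n
  induction n with
  | zero =>
    intro k i _ q hq
    exfalso
    apply hq.1.ne_top
    rw [eq_top_iff]
    refine le_trans ?_ hq.le
    simp
  | succ n ihn =>
    intro k
    induction k with
    | zero =>
      intro i hil q hq
      have hi : i < l := by omega
      obtain h1 | ⟨z, hz, hzq⟩ := AP_step hq (le_sup_left :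
        _ ≤ (Kk I b i ⊔ Aa b l ^ (n + 1)) ⊔ Ideal.span {b i})
      · have e : (Kk I b i ⊔ Aa b l ^ (n + 1)) ⊔ Ideal.span {b i} = Kk I b i ⊔ Ideal.span {b i} := by
          apply le_antisymm
          · refine sup_le (sup_le le_sup_left ?_) le_sup_right
            refine (Ideal.pow_le_self (by omega)).trans ?_
            rw [← hil, add_zero, Aa_succ]
            exact sup_le_sup_right (Aa_le_Kk I b i) _
          · exact sup_le_sup_right le_sup_left _
        rw [e] at h1
        rw [← hil]
        exact h.ass hi h1
      · obtain ⟨y, hy, v, hv, rfl⟩ := Submodule.mem_sup.mp hz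
        obtain ⟨w, rfl⟩ := Ideal.mem_span_singleton'.mp hv
        refine ihn 0 i hil q ⟨hq.1, w, fun r => ?_⟩
        rw [hzq, mul_add, Ideal.add_mem_iff_right _ (Ideal.mul_mem_left _ _ hy),
          show r * (w * b i) = b i * (r * w) by ring]
        exact h.cancel_iff hi
    | succ k ihk =>
      intro i hil q hq
      have hi : i < l := by omega
      obtain h1 | ⟨z, hz, hzq⟩ := AP_step hq (le_sup_left :
        _ ≤ (Kk I b i ⊔ Aa b l ^ (n + 1)) ⊔ Ideal.span {b i})
      · have hle : (Kk I b i ⊔ Aa b l ^ (n + 1)) ⊔ Ideal.span {b i} ≤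
            Kk I b (i + 1) ⊔ Aa b l ^ (n + 1) := by
          refine sup_le (sup_le_sup_right (Kk_mono I b (by omega)) _) (le_trans ?_ le_sup_left)
          rw [Ideal.span_singleton_le_iff_mem]
          exact Aa_le_Kk I b _ (mem_Aa b (by omega))
        obtain h2 | ⟨z, hz, hzq⟩ := AP_step h1 hle
        · exact ihk (i + 1) (by omega) q h2
        · obtain ⟨κ, hκ, y, hy, rfl⟩ := Submodule.mem_sup.mp hz
          have hAP : AP (Kk I b i ⊔ Ideal.span {b i}) q := by
            refine ⟨hq.1, κ, fun r => ?_⟩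
            have hy' : y ∈ (Kk I b i ⊔ Aa b l ^ (n + 1)) ⊔ Ideal.span {b i} :=
              Submodule.mem_sup_left (Submodule.mem_sup_right hy)
            rw [hzq, mul_add, Ideal.add_mem_iff_left _ (Ideal.mul_mem_left _ _ hy')]
            constructor
            · intro hr
              obtain ⟨u, hu, v, hv, e⟩ := Submodule.mem_sup.mp hr
              obtain ⟨u1, hu1, u2, hu2, rfl⟩ := Submodule.mem_sup.mp hu
              have hvK : v ∈ Kk I b (i + 1) := (Ideal.span_singleton_le_iff_mem _).mpr
                (Aa_le_Kk I b _ (mem_Aa b (by omega))) hv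
              have hu2K : u2 ∈ Kk I b (i + 1) := by
                have : u2 = r * κ - u1 - v := by rw [← e]; ring
                rw [this]
                exact Ideal.sub_mem _ (Ideal.sub_mem _ (Ideal.mul_mem_left _ _ hκ)
                  (Kk_mono I b (by omega) hu1)) hvK
              have h3 := Ideal.mul_le_left (h.ds (i := i + 1) hi (fun _ => hu2K) hu2)
              rw [Aa_succ] at h3
              have h4 : u2 ∈ Kk I b i ⊔ Ideal.span {b i} :=
                sup_le_sup_right (Aa_le_Kk I b i) _ h3
              rw [← e]
              exact Ideal.add_mem _ (Ideal.add_mem _ (Submodule.mem_sup_left hu1) h4)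
                (Submodule.mem_sup_right hv)
            · intro hr
              have hh : Kk I b i ⊔ Ideal.span {b i} ≤
                (Kk I b i ⊔ Aa b l ^ (n + 1)) ⊔ Ideal.span {b i} := sup_le_sup_right le_sup_left _
              exact hh hr
          exact (h.ass hi hAP).trans (by exact_mod_cast (by omega : i + 1 ≤ l))
      · obtain ⟨y, hy, v, hv, rfl⟩ := Submodule.mem_sup.mp hz
        obtain ⟨w, rfl⟩ := Ideal.mem_span_singleton'.mp hv
        refine ihn (k + 1) i hil q ⟨hq.1, w, fun r => ?_⟩
        rw [hzq, mul_add, Ideal.add_mem_iff_right _ (Ideal.mul_mem_left _ _ hy),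
          show r * (w * b i) = b i * (r * w) by ring]
        exact h.cancel_iff hi

lemma Ch.assJ (h : Ch I l d b) (hl : 0 < l) {n : ℕ} {q : Ideal R} (hq : AP (Aa b l ^ n) q) :
    q.height ≤ (l : ℕ∞) := by
  refine h.assJ' n (l - 1) 0 (by omega) q ?_
  rwa [h.K0, bot_sup_eq]

end DSsec

section StepTwo
set_option linter.unusedSectionVars false

variable {R : Type u} [CommRing R] [IsLocalRing R] [IsNoetherianRing R] [IsDomain R]
  {I : Ideal R} {l d : ℕ} {b : ℕ → R}

lemma Kk_mul_le (I : Ideal R) (b : ℕ → R) (i : ℕ) : Kk I b i * I ≤ Aa b i := by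
  rw [Ideal.mul_le]
  intro r hr s hs
  exact mem_col.mp hr s hs

lemma Ch.two0 (h : Ch I l d b) {i : ℕ} (hi : i < l) {x : R}
    (hx : ∀ c ∈ I, x * c ∈ Kk I b i ⊔ Aa b l ^ 1) : x ∈ Kk I b l := by
  refine mem_col.mpr fun c hc => ?_
  obtain ⟨κ, hκ, y, hy, e⟩ := Submodule.mem_sup.mp (hx c hc)
  rw [pow_one] at hy
  have hκI : κ ∈ I := by
    have : κ = x * c - y := by rw [← e]; ring
    rw [this]
    exact Ideal.sub_mem _ (Ideal.mul_mem_left _ _ hc) (Aa_le h.mem _ hy)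
  rw [← e]
  exact Ideal.add_mem _ (Aa_mono b hi.le (h.inter hi hκ hκI)) hy

/-- descend from `J^(j+1)` form when `i = l-1` -/
lemma Ch.topform (h : Ch I l d b) {i : ℕ} (hi : i + 1 = l) (j : ℕ) :
    Kk I b i ⊔ Aa b l ^ j ≤ Kk I b i ⊔ Ideal.span {b i ^ j} := by
  refine sup_le le_sup_left ?_
  rw [← hi, Aa_succ]
  induction j with
  | zero => simp
  | succ j ih =>
    rw [pow_succ', Ideal.mul_le]
    intro r hr s hs
    obtain ⟨u, hu, v, hv, rfl⟩ := Submodule.mem_sup.mp hr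
    obtain ⟨v, rfl⟩ := Ideal.mem_span_singleton'.mp hv
    obtain ⟨u', hu', v', hv', rfl⟩ := Submodule.mem_sup.mp (ih hs)
    obtain ⟨v', rfl⟩ := Ideal.mem_span_singleton'.mp hv'
    have : (u + v * b i) * (u' + v' * b i ^ j) =
      (u * (u' + v' * b i ^ j) + v * b i * u') + (v * v') * b i ^ (j + 1) := by ring
    rw [this]
    refine Submodule.add_mem_sup (Ideal.add_mem _ (Ideal.mul_mem_right _ _ (Aa_le_Kk I b i hu))
      (Ideal.mul_mem_left _ _ hu')) (Ideal.mem_span_singleton'.mpr ⟨_, rfl⟩)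

lemma Ch.cancel_pow (h : Ch I l d b) {i n : ℕ} (hi : i < l) : ∀ (j : ℕ) {w : R}
    (_ : b i ^ j * w ∈ Kk I b i ⊔ Aa b l ^ (n + j)), w ∈ Kk I b i ⊔ Aa b l ^ n := by
  intro j
  induction j with
  | zero => intro w hw; simpa using hw
  | succ j ih =>
    intro w hw
    apply ih
    apply h.cancel hi
    rw [← mul_assoc, ← pow_succ']
    exact hw

lemma Ch.two' (h : Ch I l d b) : ∀ k i j : ℕ, i + k + 1 = l → ∀ x : R,
    x ∈ Kk I b i ⊔ Aa b l ^ j → (∀ c ∈ I, x * c ∈ Kk I b i ⊔ Aa b l ^ (j + 1)) →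
    x ∈ Kk I b i ⊔ Kk I b l * Aa b l ^ j := by
  intro k
  induction k with
  | zero =>
    intro i j hil x hx hxI
    have hi : i < l := by omega
    obtain ⟨κ, hκ, y, hy, rfl⟩ := Submodule.mem_sup.mp (h.topform (by omega) j hx)
    obtain ⟨r, rfl⟩ := Ideal.mem_span_singleton'.mp hy
    refine Submodule.add_mem_sup hκ (Ideal.mul_mem_mul ?_ (Ideal.pow_mem_pow (mem_Aa b hi) _))
    refine h.two0 hi fun c hc => ?_
    apply h.cancel_pow hi j
    have := hxI c hc
    rw [add_mul, Ideal.add_mem_iff_right _ (Submodule.mem_sup_left (Ideal.mul_mem_right _ _ hκ))]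
      at this
    rw [add_comm 1 j]
    convert this using 1
    ring
  | succ k ihk =>
    intro i j
    induction j with
    | zero =>
      intro hil x hx hxI
      rw [pow_zero, mul_one]
      exact Submodule.mem_sup_right (h.two0 (i := i) (by omega) (by simpa using hxI))
    | succ j ihj =>
      intro hil x hx hxI
      have hi : i < l := by omega
      have hle : ∀ n, Kk I b i ⊔ Aa b l ^ n ≤ Kk I b (i + 1) ⊔ Aa b l ^ n :=
        fun n => sup_le_sup_right (Kk_mono I b (by omega)) _
      obtain ⟨κ, hκ, m, hm, e⟩ := Submodule.mem_sup.mp (ihk (i + 1) (j + 1) (by omega) x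
        (hle _ hx) (fun c hc => hle _ (hxI c hc)))
      have hmJ : m ∈ Aa b l ^ (j + 1) := Ideal.mul_le_right hm
      have hκ2 : κ ∈ Kk I b i ⊔ Aa b l ^ (j + 1) := by
        have : κ = x - m := by rw [← e]; ring
        rw [this]
        exact Ideal.sub_mem _ hx (Submodule.mem_sup_right hmJ)
      obtain ⟨κ', hκ', y, hy, e2⟩ := Submodule.mem_sup.mp hκ2
      have hyK : y ∈ Kk I b (i + 1) := by
        have : y = κ - κ' := by rw [← e2]; ring
        rw [this]
        exact Ideal.sub_mem _ hκ (Kk_mono I b (by omega) hκ')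
      obtain ⟨y', hy', z, hz, e3⟩ := mem_Aa_succ_mul (h.ds (i := i + 1) hi (fun _ => hyK) hy)
      have hy'K : y' ∈ Kk I b i := Aa_le_Kk I b i (Ideal.mul_le_left hy')
      have hz2 := ihj hil z (Submodule.mem_sup_right hz) (fun c hc => by
        apply h.cancel hi
        have : b i * (z * c) = x * c - m * c - (y' + κ') * c := by
          rw [← e, ← e2, e3]; ring
        rw [this]
        refine Ideal.sub_mem _ (Ideal.sub_mem _ (hxI c hc) (Submodule.mem_sup_right ?_))
          (Submodule.mem_sup_left (Ideal.mul_mem_right _ _ (Ideal.add_mem _ hy'K hκ')))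
        have hh : m * c ∈ Kk I b l * Aa b l ^ (j + 1) * I := Ideal.mul_mem_mul hm hc
        rw [mul_right_comm] at hh
        rw [pow_succ' _ (j + 1)]
        exact Ideal.mul_mono_left (Kk_mul_le I b l) hh)
      obtain ⟨κ2, hκ2, z', hz', e4⟩ := Submodule.mem_sup.mp hz2
      have : x = (y' + κ' + b i * κ2) + (m + b i * z') := by
        rw [← e, ← e2, e3, ← e4]; ring
      rw [this]
      refine Submodule.add_mem_sup (Ideal.add_mem _ (Ideal.add_mem _ hy'K hκ')
        (Ideal.mul_mem_left _ _ hκ2)) (Ideal.add_mem _ hm ?_)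
      rw [pow_succ', mul_left_comm]
      exact Ideal.mul_mem_mul (mem_Aa b hi) hz'

lemma Ch.two (h : Ch I l d b) (hl : 0 < l) {j : ℕ} {x : R} (hx : x ∈ Aa b l ^ j)
    (hxI : ∀ c ∈ I, x * c ∈ Aa b l ^ (j + 1)) : x ∈ Kk I b l * Aa b l ^ j := by
  have := h.two' (l - 1) 0 j (by omega) x (Submodule.mem_sup_right hx)
    (fun c hc => Submodule.mem_sup_right (hxI c hc))
  rwa [h.K0, bot_sup_eq] at this

end StepTwo

section CoreSec
set_option linter.unusedSectionVars false

variable {R : Type u} [CommRing R]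

lemma prod_ind {ι : Type*} [DecidableEq ι] {L : Ideal R} {a c x : R} {g : ι → R} : ∀ (m : ℕ) (s : Finset ι),
    s.card = m + 1 → (∀ i ∈ s, x ∈ L ⊔ Ideal.span {a + g i * c}) →
    (∀ i ∈ s, ∀ j ∈ s, i ≠ j → IsUnit (g i - g j)) →
    ∀ y ∈ (Ideal.span {a} ⊔ Ideal.span {c}) ^ m,
      x * y ∈ L ⊔ Ideal.span {∏ i ∈ s, (a + g i * c)} := by
  intro m
  induction m with
  | zero =>
    intro s hs h1 _ y _
    obtain ⟨i, rfl⟩ := Finset.card_eq_one.mp hs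
    rw [Finset.prod_singleton]
    exact Ideal.mul_mem_right _ _ (h1 i (by simp))
  | succ m ih =>
    intro s hs h1 h2 y hy
    obtain ⟨i, hi, j, hj, hij⟩ := Finset.one_lt_card.mp (by omega : 1 < s.card)
    have hle : Ideal.span {a} ⊔ Ideal.span {c} ≤
        Ideal.span {a + g i * c} ⊔ Ideal.span {a + g j * c} := by
      obtain ⟨w, hw⟩ := (h2 i hi j hj hij).exists_left_inv
      have hc : c ∈ Ideal.span {a + g i * c} ⊔ Ideal.span {a + g j * c} := by
        have : c = w * (a + g i * c) + (-w) * (a + g j * c) := by linear_combination -c * hw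
        have h8 := Submodule.add_mem_sup (Ideal.mem_span_singleton'.mpr
          (⟨w, rfl⟩ : ∃ z, z * (a + g i * c) = w * (a + g i * c)))
          (Ideal.mem_span_singleton'.mpr
          (⟨-w, rfl⟩ : ∃ z, z * (a + g j * c) = -w * (a + g j * c)))
        rwa [← this] at h8
      refine sup_le ?_ ?_
      · rw [Ideal.span_singleton_le_iff_mem]
        have h7 : (a + g i * c) - g i * c ∈ Ideal.span {a + g i * c} ⊔ Ideal.span {a + g j * c} :=
          Ideal.sub_mem _ (Submodule.mem_sup_left (Ideal.mem_span_singleton_self _))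
          (Ideal.mul_mem_left _ _ hc)
        rwa [add_sub_cancel_right] at h7
      · rwa [Ideal.span_singleton_le_iff_mem]
    rw [pow_succ'] at hy
    have hy2 := Ideal.mul_mono_left hle hy
    rw [Ideal.sup_mul] at hy2
    obtain ⟨u1, hu1, u2, hu2, rfl⟩ := Submodule.mem_sup.mp hy2
    obtain ⟨v1, hv1, rfl⟩ := Ideal.mem_span_singleton_mul.mp hu1
    obtain ⟨v2, hv2, rfl⟩ := Ideal.mem_span_singleton_mul.mp hu2
    have key : ∀ k ∈ s, ∀ v ∈ (Ideal.span {a} ⊔ Ideal.span {c}) ^ m,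
        x * ((a + g k * c) * v) ∈ L ⊔ Ideal.span {∏ i ∈ s, (a + g i * c)} := by
      intro k hk v hv
      have h3 := ih (s.erase k) (by rw [Finset.card_erase_of_mem hk]; omega)
        (fun i hi => h1 i (Finset.mem_of_mem_erase hi))
        (fun i hi j hj => h2 i (Finset.mem_of_mem_erase hi) j (Finset.mem_of_mem_erase hj)) v hv
      obtain ⟨κ, hκ, w, hw, e⟩ := Submodule.mem_sup.mp h3
      obtain ⟨w, rfl⟩ := Ideal.mem_span_singleton'.mp hw
      rw [← Finset.mul_prod_erase s _ hk]
      have : x * ((a + g k * c) * v) = (a + g k * c) * κ +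
        w * ((a + g k * c) * ∏ i ∈ s.erase k, (a + g i * c)) := by
        linear_combination -(a + g k * c) * e
      rw [this]
      exact Submodule.add_mem_sup (Ideal.mul_mem_left _ _ hκ)
        (Ideal.mem_span_singleton'.mpr ⟨_, rfl⟩)
    rw [mul_add]
    exact Ideal.add_mem _ (key i hi v1 hv1) (key j hj v2 hv2)

lemma prod_reg {ι : Type*} {L : Ideal R} {f : ι → R} (s : Finset ι)
    (h : ∀ i ∈ s, ∀ r, f i * r ∈ L → r ∈ L) : ∀ r, (∏ i ∈ s, f i) * r ∈ L → r ∈ L := by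
  classical
  induction s using Finset.induction_on with
  | empty => intro r hr; simpa using hr
  | insert i s hi ih =>
    intro r hr
    rw [Finset.prod_insert hi, mul_assoc] at hr
    exact ih (fun j hj => h j (Finset.mem_insert_of_mem hj)) r
      (h i (Finset.mem_insert_self _ _) _ hr)

variable [IsLocalRing R] 

lemma core_alg [Infinite (ResidueField R)] {L : Ideal R} {a c x : R} {N : ℕ} {ρ : ℕ → R}
    (hrel : c ^ (N + 1) + ∑ k ∈ Finset.range (N + 1), ρ k * a ^ (N + 1 - k) * c ^ k ∈ L)
    (hxa : x ∈ L ⊔ Ideal.span {a}) (ha : ∀ r, a * r ∈ L → r ∈ L)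
    {F : Set (ResidueField R)} (hF : F.Finite)
    (h1 : ∀ lam, residue R lam ∉ F → x ∈ L ⊔ Ideal.span {a + lam * c})
    (h2 : ∀ lam, residue R lam ∉ F → ∀ r, (a + lam * c) * r ∈ L → r ∈ L) :
    x * c ∈ L ⊔ Ideal.span {a ^ 2} := by
  classical
  have hinf : (F ∪ {0})ᶜ.Infinite := (hF.union (Set.finite_singleton 0)).infinite_compl
  obtain ⟨t, ht, htc⟩ := hinf.exists_subset_card_eq N
  have ht0 : (0 : ResidueField R) ∉ t := fun h => by simpa using ht h
  let g : ResidueField R → R := fun κ => if κ = 0 then 0 else Function.surjInv residue_surjective κ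
  have hg0 : g 0 = 0 := by simp [g]
  have hg : ∀ κ, residue R (g κ) = κ := by
    intro κ
    by_cases h : κ = 0
    · simp [g, h]
    · simp only [g, h, if_false]; exact Function.surjInv_eq _ _
  have htF : ∀ i ∈ t, residue R (g i) ∉ F := fun i hi => by
    rw [hg]; intro h; exact (ht hi) (Or.inl h)
  set P := ∏ i ∈ t, (a + g i * c) with hP
  have hA : a ∈ Ideal.span {a} ⊔ Ideal.span {c} :=
    Submodule.mem_sup_left (Ideal.mem_span_singleton_self _)
  have hC : c ∈ Ideal.span {a} ⊔ Ideal.span {c} :=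
    Submodule.mem_sup_right (Ideal.mem_span_singleton_self _)
  have hPm : P ∈ (Ideal.span {a} ⊔ Ideal.span {c}) ^ N := by
    rw [← htc, ← Finset.prod_const]
    exact Ideal.prod_mem_prod fun i _ => Ideal.add_mem _ hA (Ideal.mul_mem_left _ _ hC)
  have hPc : P * c ∈ L ⊔ Ideal.span {a} * (Ideal.span {a} ⊔ Ideal.span {c}) ^ N := by
    have h3 : P * c ∈ (Ideal.span {a} ⊔ Ideal.span {c}) ^ (N + 1) := by
      rw [pow_succ]; exact Ideal.mul_mem_mul hPm hC
    have h4 := sup_pow_le _ _ _ h3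
    revert h4
    apply SetLike.le_def.mp
    refine sup_le le_sup_right ?_
    rw [Ideal.span_singleton_le_iff_mem]
    have : c ^ (N + 1) = (c ^ (N + 1) + ∑ k ∈ Finset.range (N + 1), ρ k * a ^ (N + 1 - k) * c ^ k)
      + (- ∑ k ∈ Finset.range (N + 1), ρ k * a ^ (N + 1 - k) * c ^ k) := by ring
    rw [this]
    refine Submodule.add_mem_sup hrel (neg_mem (sum_mem fun k hk => ?_))
    have hk' : k ≤ N := by have := Finset.mem_range.mp hk; omega
    have e : ρ k * a ^ (N + 1 - k) * c ^ k = a * (ρ k * (a ^ (N - k) * c ^ k)) := by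
      rw [show N + 1 - k = (N - k) + 1 by omega]; ring
    rw [e]
    refine Ideal.mul_mem_mul (Ideal.mem_span_singleton_self _) (Ideal.mul_mem_left _ _ ?_)
    have e2 : (Ideal.span {a} ⊔ Ideal.span {c}) ^ N = (Ideal.span {a} ⊔ Ideal.span {c}) ^ (N - k) *
        (Ideal.span {a} ⊔ Ideal.span {c}) ^ k := by rw [← pow_add]; congr 1; omega
    rw [e2]
    exact Ideal.mul_mem_mul (Ideal.pow_mem_pow hA _) (Ideal.pow_mem_pow hC _)
  obtain ⟨κ, hκ, w, hw, e⟩ := Submodule.mem_sup.mp hPc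
  obtain ⟨y, hy, rfl⟩ := Ideal.mem_span_singleton_mul.mp hw
  have h5 := prod_ind (L := L) (a := a) (c := c) (x := x) (g := g) N (insert 0 t)
    (by rw [Finset.card_insert_of_notMem ht0, htc]) (by
      intro i hi
      obtain rfl | hi := Finset.mem_insert.mp hi
      · rw [hg0]; simpa using hxa
      · exact h1 _ (htF i hi)) (by
      intro i _ j _ hij
      rw [← residue_ne_zero_iff_isUnit, map_sub, hg, hg, sub_ne_zero]
      exact hij) y hy
  obtain ⟨κ2, hκ2, v, hv, e2⟩ := Submodule.mem_sup.mp h5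
  obtain ⟨v, rfl⟩ := Ideal.mem_span_singleton'.mp hv
  rw [Finset.prod_insert ht0, hg0, zero_mul, add_zero, ← hP] at e2
  have h6 : x * c - v * a ^ 2 ∈ L := by
    refine prod_reg t (fun i hi => h2 _ (htF i hi)) _ ?_
    rw [← hP]
    have : P * (x * c - v * a ^ 2) = x * κ + a * κ2 := by
      linear_combination (-x) * e - a * e2
    rw [this]
    exact Ideal.add_mem _ (Ideal.mul_mem_left _ _ hκ) (Ideal.mul_mem_left _ _ hκ2)
  have : x * c = (x * c - v * a ^ 2) + v * a ^ 2 := by ring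
  rw [this]
  exact Submodule.add_mem_sup h6 (Ideal.mem_span_singleton'.mpr ⟨_, rfl⟩)


lemma Aa_range (b : ℕ → R) (l : ℕ) : Ideal.span (Set.range fun k : Fin l => b k) = Aa b l := by
  rw [Aa]
  congr 1
  ext x
  constructor
  · rintro ⟨k, rfl⟩; exact ⟨k, k.2, rfl⟩
  · rintro ⟨k, hk, rfl⟩; exact ⟨⟨k, hk⟩, rfl⟩

variable [IsNoetherianRing R] [IsDomain R] {I : Ideal R} {l d : ℕ} {b : ℕ → R}

lemma Mn (hI : I ≠ ⊥) (hl : fiberDim I = (l : WithBot ℕ∞)) (hred : IsReduction (Aa b l) I) :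
    IsMinimalReduction (Aa b l) I := by
  rw [← Aa_range] at hred ⊢
  exact M hI hl hred

lemma Ch.core_one [Infinite (ResidueField R)] (h : Ch I l d b)
    (hl : fiberDim I = (l : WithBot ℕ∞)) (hred : IsReduction (Aa b l) I) {i : ℕ} (hi : i + 1 = l)
    {x y r : R} (hx : x ∈ core I) (hy : y ∈ Aa b i) (hxy : x = y + r * b i) : r ∈ Kk I b l := by
  have hil : i < l := by omega
  have hred' : IsReduction (Aa b i ⊔ Ideal.span {b i}) I := by rwa [← Aa_succ, hi]
  refine h.two0 hil fun c hc => ?_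
  obtain ⟨N, ρ, hρ⟩ := Zpre hred' h.Ine hc
  obtain ⟨F1, hF1, hF1'⟩ := Zlem hred' h.Ine hc
  obtain ⟨F2, hF2, hF2'⟩ := fin_bad (𝒩 := {q | AP (Kk I b i) q ∧ c ∉ q})
    ((AP_finite (Kk I b i)).subset fun q hq => hq.1) (c := b i) (y := c) (fun q hq => hq.2)
  have hreg := h.reg hil
  have hbq : ∀ q, AP (Kk I b i) q → b i ∉ q := by
    rintro q ⟨hq, y, hy⟩ hb
    have h1 := hreg _ ((hy _).mp hb)
    exact hq.ne_top ((Ideal.eq_top_iff_one q).mpr ((hy 1).mpr (by simpa using h1)))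
  have h1 := core_alg (L := Kk I b i) (a := b i) (c := c) (x := x) (N := N) (ρ := ρ)
    (Aa_le_Kk I b i (Ideal.mul_le_left hρ))
    (by rw [hxy]; exact Submodule.add_mem_sup (Aa_le_Kk I b i hy)
          (Ideal.mem_span_singleton'.mpr ⟨_, rfl⟩))
    hreg (hF1.union hF2) (by
      intro lam hlam
      have h3 := hF1' lam fun hh => hlam (Or.inl hh)
      have e : Aa b i ⊔ Ideal.span {b i + lam * c} = Aa (Function.update b i (b i + lam * c)) l := by
        rw [← hi, Aa_succ, Function.update_self]
        congr 1
        unfold Aa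
        congr 1
        refine Set.image_congr fun k hk => ?_
        have hk' : k < i := hk
        rw [Function.update_of_ne (by omega)]
      rw [e] at h3
      have h4 := Mn h.Ine hl h3
      have h5 : x ∈ _ := (sInf_le h4 : core I ≤ _) hx
      rw [← e] at h5
      exact (sup_le_sup_right (Aa_le_Kk I b i) _ : _ ≤ Kk I b i ⊔ Ideal.span {b i + lam * c}) h5)
    (by
      intro lam hlam
      refine reg_of_AP fun q hq hmem => ?_
      by_cases hcq : c ∈ q
      · exact hbq q hq ((Ideal.add_mem_iff_left _ (Ideal.mul_mem_left _ _ hcq)).mp hmem)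
      · exact hF2' lam (fun hh => hlam (Or.inr hh)) q ⟨hq, hcq⟩ hmem)
  obtain ⟨κ, hκ, v, hv, e⟩ := Submodule.mem_sup.mp h1
  obtain ⟨v, rfl⟩ := Ideal.mem_span_singleton'.mp hv
  have h2 : r * c - v * b i ∈ Kk I b i := by
    apply hreg
    have : b i * (r * c - v * b i) = κ - y * c := by rw [hxy] at e; linear_combination -e
    rw [this]
    exact Ideal.sub_mem _ hκ (Ideal.mul_mem_right _ _ (Aa_le_Kk I b i hy))
  have : r * c = (r * c - v * b i) + v * b i := by ring
  rw [this, pow_one]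
  exact Submodule.add_mem_sup h2 (Ideal.mul_mem_left _ _ (mem_Aa b hil))

lemma mkCh (hIm : I ≤ maximalIdeal R) (hI : I ≠ ⊥) (hd : ringKrullDim R = d)
    (hCM : Dp (⊥ : Ideal R) d) (han : ANminus I (l - 1)) (hl : fiberDim I = (l : WithBot ℕ∞))
    {a : ℕ → R} (ha : ∀ k, a k ∈ I)
    (hpp : ∀ S : Finset ℕ, S ⊆ Finset.range l → PP I l (Ideal.span (a '' S)) S.card)
    (σ : Equiv.Perm ℕ) (hσ : ∀ k < l, σ k < l) : Ch I l d (a ∘ σ) := by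
  refine ⟨hIm, hI, hd, hCM, fun k => ha _, fun i hi => ?_, han, fun i hi hK => ?_⟩
  · have h1 := hpp ((Finset.range i).map σ.toEmbedding) (by
      intro k hk
      obtain ⟨j, hj, rfl⟩ := Finset.mem_map.mp hk
      have := Finset.mem_range.mp hj
      exact Finset.mem_range.mpr (hσ _ (by omega)))
    rw [Finset.card_map, Finset.card_range] at h1
    rw [Aa, Set.image_comp]
    convert h1 using 3
    ext k
    simp
  · have h1 : I ≤ Aa (a ∘ σ) i := by
      intro x hx
      have : (1 : R) ∈ Kk I (a ∘ σ) i := by rw [hK]; trivial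
      simpa using mem_col.mp this x hx
    have h2 : Aa (a ∘ σ) i = I := le_antisymm (Aa_le (fun k => ha _) i) h1
    have h3 : IsReduction (Ideal.span (Set.range fun k : Fin i => (a ∘ σ) k)) I := by
      rw [Aa_range, h2]
      exact ⟨le_rfl, 0, by simp⟩
    have := L1 h3 hI hl
    rw [Nat.card_fin] at this
    omega

lemma core_le [Infinite (ResidueField R)] (hIm : I ≤ maximalIdeal R) (hI : I ≠ ⊥)
    (hd : ringKrullDim R = d)
    (hCM : Dp (⊥ : Ideal R) d) (han : ANminus I (l - 1)) (hl : fiberDim I = (l : WithBot ℕ∞))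
    {a : ℕ → R} (ha : ∀ k, a k ∈ I) (hred : IsReduction (Aa a l) I)
    (hpp : ∀ S : Finset ℕ, S ⊆ Finset.range l → PP I l (Ideal.span (a '' S)) S.card) :
    core I ≤ Kk I a l * Aa a l := by
  intro x hx
  have h1 : x ∈ Aa a l := (sInf_le (Mn hI hl hred) : core I ≤ _) hx
  have e : Aa a l = Ideal.span (a '' (Finset.range l : Finset ℕ)) := by
    rw [Aa]; congr 2; ext; simp
  rw [e, Ideal.span, Submodule.mem_span_image_finset_iff_exists_fun'] at h1
  obtain ⟨r, hr⟩ := h1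
  rw [← hr]
  refine sum_mem fun k hk => ?_
  have hkl := Finset.mem_range.mp hk
  refine Ideal.mul_mem_mul ?_ (mem_Aa a hkl)
  let σ := Equiv.swap k (l - 1)
  have hσ : ∀ j < l, σ j < l := by
    intro j hj
    simp only [σ, Equiv.swap_apply_def]
    split_ifs <;> omega
  have hCh := mkCh hIm hI hd hCM han hl ha hpp σ hσ
  have eA : Aa (a ∘ σ) l = Aa a l := by
    rw [Aa, Aa, Set.image_comp]
    congr 2
    ext j
    constructor
    · rintro ⟨j, hj, rfl⟩; exact hσ j hj
    · intro hj; exact ⟨σ j, hσ j hj, by simp [σ]⟩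
  have h2 := hCh.core_one hl (by rwa [eA]) (i := l - 1) (by omega) hx
    (y := ∑ j ∈ (Finset.range l).erase k, r j * a j) (r := r k) (by
      refine sum_mem fun j hj => Ideal.mul_mem_left _ _ ?_
      obtain ⟨hjk, hj⟩ := Finset.mem_erase.mp hj
      have hj' := Finset.mem_range.mp hj
      have : a j = (a ∘ σ) (σ j) := by simp [σ]
      rw [this]
      apply mem_Aa
      simp only [σ, Equiv.swap_apply_def]
      split_ifs <;> omega) (by
      have : (a ∘ σ) (l - 1) = a k := by simp [σ]
      rw [this, Finset.sum_erase_add _ _ hk, ← hr]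
      rfl)
  rwa [Kk, eA] at h2

end CoreSec

section USec
set_option linter.unusedSectionVars false

variable {R : Type u} [CommRing R]

/-- inductive description of leading forms not vanishing modulo `p` -/
inductive UU (p : Ideal R) (b : ℕ → R) (l : ℕ) : ℕ → ℕ → R → Prop
  | base {i e : ℕ} {r : R} (hi : i + 1 = l) (hr : r ∉ p) : UU p b l i e (r * b i ^ e)
  | stepa {i e : ℕ} {f f0 : R} (hi : i + 1 < l) (h : UU p b l (i + 1) e f0)
      (hf : f ∈ Aa b l ^ e) (hff : f - f0 ∈ Ideal.span {b i}) : UU p b l i e f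
  | stepb {i e : ℕ} {f0 f1 : R} (hi : i + 1 < l) (h0 : f0 ∈ p * Aa b l ^ (e + 1))
      (h : UU p b l i e f1) : UU p b l i (e + 1) (f0 + b i * f1)

lemma UU.mem {p : Ideal R} {b : ℕ → R} {l i e : ℕ} {f : R} (h : UU p b l i e f) :
    f ∈ Aa b l ^ e := by
  induction h with
  | base hi hr => exact Ideal.mul_mem_left _ _ (Ideal.pow_mem_pow (mem_Aa b (by omega)) _)
  | stepa hi h hf hff ih => exact hf
  | stepb hi h0 h ih =>
    refine Ideal.add_mem _ (Ideal.mul_le_right h0) ?_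
    rw [pow_succ']
    exact Ideal.mul_mem_mul (mem_Aa b (by omega)) ih

variable [IsLocalRing R] [IsNoetherianRing R] [IsDomain R] {I : Ideal R} {l d : ℕ} {b : ℕ → R}

lemma Ch.FR (h : Ch I l d b) {p : Ideal R} (hp : p.IsPrime) (hpl : (l : ℕ∞) ≤ p.height)
    {i e : ℕ} {f : R} (hU : UU p b l i e f) : ∀ (n : ℕ) (y : R),
    (∀ r ∈ p, r * y ∈ Kk I b i ⊔ Aa b l ^ n) → f * y ∈ Kk I b i ⊔ Aa b l ^ (n + e) →
    ∃ σ, σ ∉ p ∧ σ * y ∈ Kk I b i ⊔ Aa b l ^ n := by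
  have h1p : (1 : R) ∉ p := (Ideal.ne_top_iff_one p).mp hp.ne_top
  induction hU with
  | @base i e r hi hr =>
    intro n y _ hfy
    refine ⟨r, hr, h.cancel_pow (by omega) e ?_⟩
    convert hfy using 1
    ring
  | @stepb i e f0 f1 hi h0 hU ih =>
    intro n y hpy hfy
    refine ih n y hpy (h.cancel (i := i) (by omega) ?_)
    have h1 : f0 * y ∈ Kk I b i ⊔ Aa b l ^ (n + (e + 1)) := by
      revert h0
      suffices p * Aa b l ^ (e + 1) ≤ Submodule.colon (Kk I b i ⊔ Aa b l ^ (n + (e + 1)))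
          (Ideal.span {y}) from
        fun h0 => mem_col.mp (this h0) y (Ideal.mem_span_singleton_self _)
      rw [Ideal.mul_le]
      intro r hr s hs
      refine mem_col.mpr fun z hz => ?_
      obtain ⟨z, rfl⟩ := Ideal.mem_span_singleton'.mp hz
      obtain ⟨κ, hκ, w, hw, e1⟩ := Submodule.mem_sup.mp (hpy r hr)
      have : r * s * (z * y) = z * s * κ + z * (w * s) := by linear_combination -(z * s) * e1
      rw [this, pow_add]
      exact Submodule.add_mem_sup (Ideal.mul_mem_left _ _ hκ)
        (Ideal.mul_mem_left _ _ (Ideal.mul_mem_mul hw hs))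
    rw [add_mul, Ideal.add_mem_iff_right _ h1, mul_assoc] at hfy
    exact hfy
  | @stepa i e f f0 hi hU hf hff ih =>
    have hil : i < l := by omega
    intro n
    induction n with
    | zero =>
      intro y _ _
      exact ⟨1, h1p, by simp⟩
    | succ n ihn =>
      intro y hpy hfy
      have hle : Kk I b i ⊔ Aa b l ^ (n + 1) ≤ Kk I b (i + 1) ⊔ Aa b l ^ (n + 1) :=
        sup_le_sup_right (Kk_mono I b (by omega)) _
      have hle2 : Kk I b i ⊔ Aa b l ^ (n + 1 + e) ≤ Kk I b (i + 1) ⊔ Aa b l ^ (n + 1 + e) :=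
        sup_le_sup_right (Kk_mono I b (by omega)) _
      have hbK : b i ∈ Kk I b (i + 1) := Aa_le_Kk I b _ (mem_Aa b (by omega))
      obtain ⟨σ, hσ, hσy⟩ := ih (n + 1) y (fun r hr => hle (hpy r hr)) (by
        obtain ⟨v, hv⟩ := Ideal.mem_span_singleton'.mp hff
        have : f0 * y = f * y - v * y * b i := by linear_combination y * hv
        rw [this]
        exact Ideal.sub_mem _ (hle2 hfy) (Submodule.mem_sup_left (Ideal.mul_mem_left _ _ hbK)))
      obtain ⟨κ, hκ, w, hw, e1⟩ := Submodule.mem_sup.mp hσy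
      -- find τ
      obtain ⟨τ, hτ, hτκ⟩ : ∃ τ, τ ∉ p ∧ τ * κ ∈ Kk I b i ⊔ Ideal.span {b i} := by
        by_contra hcon
        push Not at hcon
        have hAP : AP (Kk I b i ⊔ Ideal.span {b i}) p := by
          refine ⟨hp, κ, fun r => ⟨fun hr => ?_, fun hr => ?_⟩⟩
          · have h2 : r * κ ∈ Kk I b i ⊔ Aa b l ^ (n + 1) := by
              have : r * κ = σ * (r * y) - r * w := by linear_combination r * e1
              rw [this]
              exact Ideal.sub_mem _ (Ideal.mul_mem_left _ _ (hpy r hr))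
                (Submodule.mem_sup_right (Ideal.mul_mem_left _ _ hw))
            obtain ⟨κ', hκ', w', hw', e2⟩ := Submodule.mem_sup.mp h2
            have hw'K : w' ∈ Kk I b (i + 1) := by
              have : w' = r * κ - κ' := by rw [← e2]; ring
              rw [this]
              exact Ideal.sub_mem _ (Ideal.mul_mem_left _ _ hκ) (Kk_mono I b (by omega) hκ')
            have h3 := Ideal.mul_le_left (h.ds (i := i + 1) hil (fun _ => hw'K) hw')
            rw [Aa_succ] at h3
            have hle3 : Aa b i ⊔ Ideal.span {b i} ≤ Kk I b i ⊔ Ideal.span {b i} :=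
              sup_le_sup_right (Aa_le_Kk I b i) _
            rw [← e2]
            exact Ideal.add_mem _ (Submodule.mem_sup_left hκ') (hle3 h3)
          · by_contra hrp
            exact hcon r hrp hr
        have := hpl.trans (h.ass hil hAP)
        have : l ≤ i + 1 := by exact_mod_cast this
        omega
      obtain ⟨κ1, hκ1, v, hv, e2⟩ := Submodule.mem_sup.mp hτκ
      obtain ⟨y1, rfl⟩ := Ideal.mem_span_singleton'.mp hv
      have e3 : b i * y1 = τ * σ * y - (κ1 + τ * w) := by linear_combination e2 + τ * e1
      obtain ⟨σ2, hσ2, hσ2y⟩ := ihn y1 (fun r hr => by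
          apply h.cancel hil
          have : b i * (r * y1) = τ * σ * (r * y) - r * (κ1 + τ * w) := by
            linear_combination r * e3
          rw [this]
          exact Ideal.sub_mem _ (Ideal.mul_mem_left _ _ (hpy r hr)) (Ideal.mul_mem_left _ _
            (Submodule.add_mem_sup hκ1 (Ideal.mul_mem_left _ _ hw))))
        (by
          apply h.cancel hil
          have : b i * (f * y1) = τ * σ * (f * y) - (f * κ1 + τ * (w * f)) := by
            linear_combination f * e3
          rw [this, show n + e + 1 = n + 1 + e by omega]
          refine Ideal.sub_mem _ (Ideal.mul_mem_left _ _ hfy)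
            (Submodule.add_mem_sup (Ideal.mul_mem_left _ _ hκ1) (Ideal.mul_mem_left _ _ ?_))
          rw [pow_add]
          exact Ideal.mul_mem_mul hw hf)
      refine ⟨σ2 * (τ * σ), ?_, ?_⟩
      · intro hh
        rcases hp.mem_or_mem hh with hh | hh
        · exact hσ2 hh
        · exact (hp.mem_or_mem hh).elim hτ hσ
      · have : σ2 * (τ * σ) * y = b i * (σ2 * y1) + σ2 * (κ1 + τ * w) := by
          linear_combination -σ2 * e3
        rw [this]
        refine Ideal.add_mem _ ((h.cancel_iff hil).mpr hσ2y) (Ideal.mul_mem_left _ _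
            (Submodule.add_mem_sup hκ1 (Ideal.mul_mem_left _ _ hw)))

end USec

section Poly
variable {R : Type u} [CommRing R] {l : ℕ}
open MvPolynomial

lemma eval_mem_mul {p J : Ideal R} {b : Fin l → R} (hb : ∀ k, b k ∈ J) {e : ℕ}
    {F : MvPolynomial (Fin l) R} (hF : ∀ m, F.coeff m ≠ 0 → ∑ k, m k = e)
    (hp : ∀ m, F.coeff m ∈ p) : eval b F ∈ p * J ^ e := by
  rw [eval_eq']
  refine sum_mem fun m hm => Ideal.mul_mem_mul (hp m) ?_
  rw [← hF m (mem_support_iff.mp hm), ← Finset.prod_pow_eq_pow_sum]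
  exact Ideal.prod_mem_prod fun k _ => Ideal.pow_mem_pow (hb k) _

lemma UU_of_poly {p : Ideal R} {b : ℕ → R} (hp : p.IsPrime) : ∀ (t i : ℕ), i + t + 1 = l → ∀ (e : ℕ)
    (F : MvPolynomial (Fin l) R),
    (∀ m, F.coeff m ≠ 0 → (∀ k : Fin l, (k : ℕ) < i → m k = 0) ∧ ∑ k, m k = e) →
    (∃ m, F.coeff m ∉ p) → UU p b l i e (eval (fun k : Fin l => b k) F) := by
  intro t
  induction t with
  | zero =>
    rintro i hi e F hF ⟨m, hm⟩
    have hil : i < l := by omega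
    have hall : ∀ m, F.coeff m ≠ 0 → m = Finsupp.single ⟨i, hil⟩ e := by
      intro m hm
      obtain ⟨h1, h2⟩ := hF m hm
      have h3 : ∀ k : Fin l, k ≠ ⟨i, hil⟩ → m k = 0 := fun k hk => h1 k (by
        have := k.2
        have : (k : ℕ) ≠ i := fun h => hk (Fin.ext h)
        omega)
      ext k
      by_cases hk : k = ⟨i, hil⟩
      · subst hk
        rw [Finsupp.single_eq_same, ← h2]
        exact (Finset.sum_eq_single _ (fun k _ hk => h3 k hk) (by simp)).symm
      · rw [h3 k hk, Finsupp.single_eq_of_ne hk]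
    have hm0 : F.coeff m ≠ 0 := fun h => hm (h ▸ p.zero_mem)
    have hFe : F = monomial (Finsupp.single ⟨i, hil⟩ e) (F.coeff m) := by
      ext m'
      rw [coeff_monomial]
      split_ifs with hh
      · rw [← hh, hall m hm0]
      · by_contra hne
        exact hh (hall m' hne).symm
    rw [hFe, eval_monomial]
    simp only [Finsupp.prod_single_index, pow_zero]
    exact UU.base (by omega) hm
  | succ t iht =>
    intro i hi e
    have hil : i < l := by omega
    have hb : ∀ k : Fin l, b k ∈ Aa b l := fun k => mem_Aa b k.2
    induction e with
    | zero =>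
      rintro F hF hex
      refine UU.stepa (f0 := eval (fun k : Fin l => b k) F) (by omega)
        (iht (i + 1) (by omega) 0 F (fun m hm => ⟨fun k _ => ?_, (hF m hm).2⟩) hex) (by simp) (by simp)
      have := (hF m hm).2
      exact Finset.sum_eq_zero_iff.mp this k (Finset.mem_univ _)
    | succ e ihe =>
      rintro F hF hex
      set F1 := F.divMonomial (Finsupp.single (⟨i, hil⟩ : Fin l) 1) with hF1
      set F0 := F.modMonomial (Finsupp.single (⟨i, hil⟩ : Fin l) 1) with hF0
      have hsum : X ⟨i, hil⟩ * F1 + F0 = F := divMonomial_add_modMonomial_single F _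
      have hle : ∀ m : Fin l →₀ ℕ, Finsupp.single (⟨i, hil⟩ : Fin l) 1 ≤ m ↔ m ⟨i, hil⟩ ≠ 0 := by
        intro m
        rw [Finsupp.single_le_iff]; omega
      have h0F : ∀ m, F0.coeff m ≠ 0 → F.coeff m ≠ 0 ∧ m ⟨i, hil⟩ = 0 := by
        intro m hm
        by_cases hh : Finsupp.single (⟨i, hil⟩ : Fin l) 1 ≤ m
        · exact absurd (coeff_modMonomial_of_le F hh) hm
        · rw [hF0, coeff_modMonomial_of_not_le F hh] at hm
          rw [hle] at hh
          exact ⟨hm, by omega⟩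
      have hev : eval (fun k : Fin l => b k) F =
          eval (fun k : Fin l => b k) F0 + b i * eval (fun k : Fin l => b k) F1 := by
        rw [← hsum]; simp [add_comm]
      have h1F : ∀ m, F1.coeff m = F.coeff (Finsupp.single (⟨i, hil⟩ : Fin l) 1 + m) :=
        fun m => coeff_divMonomial _ _ _
      by_cases hc : ∃ m, F0.coeff m ∉ p
      · refine UU.stepa (by omega) (iht (i + 1) (by omega) (e + 1) F0 (fun m hm => ?_) hc) ?_ ?_
        · obtain ⟨h1, h2⟩ := h0F m hm
          refine ⟨fun k hk => ?_, (hF m h1).2⟩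
          obtain hk | hk := (by omega : (k : ℕ) < i ∨ (k : ℕ) = i)
          · exact (hF m h1).1 k hk
          · rw [← h2]; congr 1; exact Fin.ext hk
        · have := eval_mem_mul (p := ⊤) hb (F := F) (fun m hm => (hF m hm).2) (by simp)
          rwa [Ideal.top_mul] at this
        · rw [hev]
          exact Ideal.mem_span_singleton'.mpr ⟨eval (fun k : Fin l => b k) F1, by ring⟩
      · push Not at hc
        rw [hev]
        refine UU.stepb (by omega) (eval_mem_mul hb (fun m hm => (hF m (h0F m hm).1).2) hc)
          (ihe F1 (fun m hm => ?_) ?_)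
        · rw [h1F] at hm
          obtain ⟨h1, h2⟩ := hF _ hm
          refine ⟨fun k hk => ?_, ?_⟩
          · have := h1 k hk
            simp at this
            exact this.2
          · simp [Finset.sum_add_distrib, Finsupp.single_apply] at h2
            omega
        · obtain ⟨m, hm⟩ := hex
          have hh : Finsupp.single (⟨i, hil⟩ : Fin l) 1 ≤ m := by
            by_contra hh
            apply hm
            rw [← coeff_modMonomial_of_not_le F hh]
            exact hc m
          refine ⟨m - Finsupp.single (⟨i, hil⟩ : Fin l) 1, ?_⟩
          rw [h1F, add_tsub_cancel_of_le hh]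
          exact hm

end Poly

section ReesClosed
open Polynomial
variable {R : Type u} [CommRing R] [IsNoetherianRing R] [IsDomain R]

lemma red_of_almost {A : Ideal R} {c g : R} (hc : c ≠ 0) (h : ∀ k : ℕ, c * g ^ k ∈ A ^ k) :
    IsReduction A (A ⊔ Ideal.span {g}) := by
  have h1 : IsAlmostIntegral (reesAlgebra A) (monomial 1 g : R[X]) := by
    refine ⟨algebraMap R (reesAlgebra A) c, ?_, fun n => ?_⟩
    · rw [mem_nonZeroDivisors_iff_ne_zero]
      intro h0
      apply hc
      have := congrArg (fun z : reesAlgebra A => (z : R[X]).coeff 0) h0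
      simpa using this
    · refine ⟨⟨monomial n (c * g ^ n), reesAlgebra.monomial_mem.mpr (h n)⟩, ?_⟩
      rw [Algebra.smul_def, monomial_pow, one_mul]
      change monomial n (c * g ^ n) = C c * monomial n (g ^ n)
      rw [C_mul_monomial]
  obtain ⟨q, hq, hq0⟩ := h1.isIntegral
  have hD : 0 < q.natDegree := by
    rw [Nat.pos_iff_ne_zero]
    intro h0
    rw [hq.natDegree_eq_zero.mp h0] at hq0
    simp at hq0
  obtain ⟨D, hD⟩ : ∃ D, q.natDegree = D + 1 := ⟨q.natDegree - 1, by omega⟩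
  rw [eval₂_eq_sum_range, hD] at hq0
  have hco := congrArg (fun z : R[X] => z.coeff (D + 1)) hq0
  simp only [finset_sum_coeff, coeff_zero] at hco
  have hterm : ∀ i ∈ Finset.range (D + 1 + 1),
      ((algebraMap (reesAlgebra A) R[X]) (q.coeff i) * (monomial 1 g) ^ i).coeff (D + 1) =
      ((q.coeff i : reesAlgebra A) : R[X]).coeff (D + 1 - i) * g ^ i := by
    intro i hi
    have hi' := Finset.mem_range.mp hi
    rw [monomial_pow, one_mul]
    have e : D + 1 = (D + 1 - i) + i := by omega
    conv_lhs => rw [e]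
    rw [coeff_mul_monomial]
    rfl
  rw [Finset.sum_congr rfl hterm, Finset.sum_range_succ] at hco
  have hlead : q.coeff (D + 1) = 1 := by rw [← hD]; exact hq
  rw [hlead] at hco
  apply red_of_pow_mem (m := D)
  have e : g ^ (D + 1) = - ∑ i ∈ Finset.range (D + 1),
      ((q.coeff i : reesAlgebra A) : R[X]).coeff (D + 1 - i) * g ^ i := by
    simp at hco
    linear_combination hco
  rw [e]
  refine neg_mem (sum_mem fun i hi => ?_)
  have hi' := Finset.mem_range.mp hi
  have h2 : ((q.coeff i : reesAlgebra A) : R[X]).coeff (D + 1 - i) ∈ A ^ (D + 1 - i) :=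
    (q.coeff i).2 _
  have h3 : A * (A ⊔ Ideal.span {g}) ^ D = A * (A ⊔ Ideal.span {g}) ^ (D - i) *
      (A ⊔ Ideal.span {g}) ^ i := by
    rw [mul_assoc, ← pow_add]; congr 2; omega
  rw [h3]
  refine Ideal.mul_mem_mul ?_ (Ideal.pow_mem_pow
    (Submodule.mem_sup_right (Ideal.mem_span_singleton_self _)) _)
  rw [show D + 1 - i = D - i + 1 by omega, pow_succ'] at h2
  rw [show D + 1 - i = D - i + 1 by omega]
  exact Ideal.mul_mono_right (Ideal.pow_right_mono le_sup_left _) h2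

lemma rees_closed {I : Ideal R} (hI : I ≠ ⊥) (hnI : IsNormalIdeal I) : ∀ (N : ℕ) (g : R[X]),
    g.support.card ≤ N → IsIntegral (reesAlgebra I) g → g ∈ reesAlgebra I := by
  intro N
  induction N with
  | zero =>
    intro g hg _
    have : g = 0 := by simpa using hg
    rw [this]; exact zero_mem _
  | succ N ih =>
    intro g hg hintg
    by_cases hg0 : g = 0
    · rw [hg0]; exact zero_mem _
    set n := g.natDegree with hn
    have hlead : g.leadingCoeff ∈ I ^ n := by
      obtain ⟨x, hx, hx0⟩ := Submodule.exists_mem_ne_zero_of_ne_bot hI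
      have hal := hintg.isAlmostIntegral_of_exists_smul_mem_range
        ⟨algebraMap R (reesAlgebra I) (x ^ n), by
          rw [mem_nonZeroDivisors_iff_ne_zero]
          intro h0
          apply pow_ne_zero n hx0
          have := congrArg (fun z : reesAlgebra I => (z : R[X]).coeff 0) h0
          change (C (x ^ n) : R[X]).coeff 0 = 0 at this
          rwa [coeff_C_zero] at this, by
          refine ⟨⟨C (x ^ n) * g, fun k => ?_⟩, ?_⟩
          · rw [coeff_C_mul]
            by_cases hk : k ≤ n
            · exact Ideal.mul_mem_right _ _ (Ideal.pow_le_pow_right hk (Ideal.pow_mem_pow hx n))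
            · rw [coeff_eq_zero_of_natDegree_lt (by omega), mul_zero]
              exact zero_mem _
          · rw [Algebra.smul_def]; rfl⟩
      obtain ⟨r, hr, hrk⟩ := hal
      rw [mem_nonZeroDivisors_iff_ne_zero] at hr
      have hr0 : (r : R[X]) ≠ 0 := fun h => hr (Subtype.ext h)
      have key : ∀ k : ℕ, (r : R[X]).leadingCoeff * g.leadingCoeff ^ k ∈ (I ^ n) ^ k := by
        intro k
        obtain ⟨z, hz⟩ := hrk k
        have hz' : (z : R[X]) = (r : R[X]) * g ^ k := by
          rw [Algebra.smul_def] at hz; exact hz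
        have h1 := z.2 ((r : R[X]).natDegree + n * k)
        have h2 : ((r : R[X]) * g ^ k).coeff ((r : R[X]).natDegree + n * k) =
            (r : R[X]).leadingCoeff * g.leadingCoeff ^ k := by
          rw [← leadingCoeff_pow, ← leadingCoeff_mul, leadingCoeff,
            natDegree_mul hr0 (pow_ne_zero _ hg0), natDegree_pow, mul_comm k]
        rw [hz', h2] at h1
        rw [← pow_mul]
        exact Ideal.pow_le_pow_right (by omega) h1
      have h3 := hnI n _ (red_of_almost (leadingCoeff_ne_zero.mpr hr0) key)
      rw [← h3]
      exact Submodule.mem_sup_right (Ideal.mem_span_singleton_self _)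
    have hmon : monomial n g.leadingCoeff ∈ reesAlgebra I := reesAlgebra.monomial_mem.mpr hlead
    rw [← eraseLead_add_monomial_natDegree_leadingCoeff g]
    refine add_mem (ih _ ?_ ?_) hmon
    · have := eraseLead_support_card_lt hg0
      omega
    · have e : g.eraseLead = g - monomial n g.leadingCoeff := by
        rw [← self_sub_monomial_natDegree_leadingCoeff]
      rw [e]
      exact hintg.sub (isIntegral_algebraMap (x := (⟨_, hmon⟩ : reesAlgebra I)))

lemma rees_intClosed [IsIntegrallyClosed R] {I : Ideal R} (hI : I ≠ ⊥) (hnI : IsNormalIdeal I) :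
    IsIntegrallyClosed (reesAlgebra I) := by
  let L := FractionRing R[X]
  haveI : IsFractionRing (reesAlgebra I) L := by
    haveI : FaithfulSMul (reesAlgebra I) L := by
      rw [faithfulSMul_iff_algebraMap_injective, IsScalarTower.algebraMap_eq (reesAlgebra I) R[X] L]
      exact (IsFractionRing.injective R[X] L).comp Subtype.val_injective
    refine IsFractionRing.of_field _ _ fun z => ?_
    obtain ⟨x, y, _, rfl⟩ := IsFractionRing.div_surjective R[X] z
    obtain ⟨c, hc, hc0⟩ := Submodule.exists_mem_ne_zero_of_ne_bot hI
    have hmem : ∀ (f : R[X]) (N : ℕ), f.natDegree ≤ N → C (c ^ N) * f ∈ reesAlgebra I := by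
      intro f N hN k
      rw [coeff_C_mul]
      by_cases hk : k ≤ N
      · exact Ideal.mul_mem_right _ _ (Ideal.pow_le_pow_right hk (Ideal.pow_mem_pow hc N))
      · rw [coeff_eq_zero_of_natDegree_lt (by omega), mul_zero]
        exact zero_mem _
    let N := max x.natDegree y.natDegree
    refine ⟨⟨_, hmem x N (le_max_left _ _)⟩, ⟨_, hmem y N (le_max_right _ _)⟩, ?_⟩
    have h1 : algebraMap R[X] L (C (c ^ N)) ≠ 0 := by
      rw [Ne, FaithfulSMul.algebraMap_eq_zero_iff, C_eq_zero]
      exact pow_ne_zero _ hc0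
    have h2 : ∀ w : reesAlgebra I, algebraMap (reesAlgebra I) L w = algebraMap R[X] L (w : R[X]) :=
      fun w => rfl
    rw [h2, h2, map_mul, map_mul, mul_div_mul_left _ _ h1]
  rw [isIntegrallyClosed_iff L]
  intro z hz
  have hz' : IsIntegral R[X] z := hz.tower_top
  obtain ⟨g, rfl⟩ := IsIntegrallyClosed.isIntegral_iff.mp hz'
  have hg : IsIntegral (reesAlgebra I) g :=
    (isIntegral_algebraMap_iff (IsFractionRing.injective R[X] L)).mp hz
  exact ⟨⟨g, rees_closed hI hnI _ g le_rfl hg⟩, rfl⟩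

end ReesClosed

section HSec
set_option linter.unusedSectionVars false
open MvPolynomial

variable {R : Type u} [CommRing R] {l : ℕ}

lemma mapC_prime {σ : Type} {p : Ideal R} (hp : p.IsPrime) :
    (Ideal.map (C : R →+* MvPolynomial σ R) p).IsPrime := by
  have := Ideal.Quotient.isDomain p
  have h := RingHom.ker_isPrime (MvPolynomial.map (σ := σ) (Ideal.Quotient.mk p))
  rwa [MvPolynomial.ker_map, Ideal.mk_ker] at h

lemma mapC_height {σ : Type} [Finite σ] [IsNoetherianRing R] {p : Ideal R} (hp : p.IsPrime) :
    (Ideal.map (C : R →+* MvPolynomial σ R) p).height ≤ p.height := by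
  classical
  obtain ⟨s, hs, hc⟩ := p.exists_finset_card_eq_height_of_isNoetherianRing
  have h1 : Ideal.map (C : R →+* MvPolynomial σ R) p ∈
      (Ideal.span ((s.image C : Finset (MvPolynomial σ R)) : Set (MvPolynomial σ R))).minimalPrimes := by
    refine ⟨⟨mapC_prime hp, ?_⟩, ?_⟩
    · rw [Finset.coe_image, ← Ideal.map_span]
      exact Ideal.map_mono hs.1.2
    · rintro P ⟨hP, hsP⟩ hle
      rw [Finset.coe_image, ← Ideal.map_span, Ideal.map_le_iff_le_comap] at hsP
      rw [Ideal.map_le_iff_le_comap]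
      refine hs.2 ⟨hP.comap _, hsP⟩ fun x hx => ?_
      have h2 := mem_map_C_iff.mp (hle hx) 0
      simpa using h2
  refine (Ideal.height_le_card_of_mem_minimalPrimes_span_finset h1).trans ?_
  rw [← hc]
  exact_mod_cast Finset.card_image_le

/-- partial substitution -/
noncomputable def chi (b : ℕ → R) (l i : ℕ) :
    MvPolynomial (Fin l) R →ₐ[R] MvPolynomial (Option (Fin l)) R :=
  aeval fun k => if (k : ℕ) ≤ i then b k • X none else X (some k)

lemma ker_chi_le (b : ℕ → R) (l i : ℕ) :
    RingHom.ker (chi b l i) ≤ RingHom.ker (chi b l (i + 1)) := by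
  have : chi b l (i + 1) = (aeval (fun o : Option (Fin l) => o.elim (X none)
      fun k => if (k : ℕ) ≤ i + 1 then b k • X none else X (some k))).comp (chi b l i) := by
    refine MvPolynomial.algHom_ext fun k => ?_
    simp only [chi, aeval_X, AlgHom.comp_apply]
    by_cases h1 : (k : ℕ) ≤ i
    · simp [h1, show (k : ℕ) ≤ i + 1 by omega]
    · simp [h1]
  intro x hx
  rw [RingHom.mem_ker] at hx ⊢
  rw [this, AlgHom.comp_apply, hx, map_zero]

lemma ker_chi_height [IsDomain R] {b : ℕ → R} (hb : b 0 ≠ 0) : ∀ i, i < l →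
    (i : ℕ∞) ≤ (RingHom.ker (chi b l i)).height := by
  intro i
  induction i with
  | zero => intro _; simp
  | succ i ih =>
    intro hi
    have := RingHom.ker_isPrime (chi b l i)
    have := RingHom.ker_isPrime (chi b l (i + 1))
    have hlt : RingHom.ker (chi b l i) < RingHom.ker (chi b l (i + 1)) := by
      refine lt_of_le_not_ge (ker_chi_le b l i) fun hle => ?_
      have h1 : (b 0 • X ⟨i + 1, hi⟩ - b (i + 1) • X ⟨0, by omega⟩ : MvPolynomial (Fin l) R) ∈
          RingHom.ker (chi b l (i + 1)) := by
        rw [RingHom.mem_ker]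
        simp [chi, smul_smul, mul_comm]
      have h2 := hle h1
      rw [RingHom.mem_ker] at h2
      have h3 := congrArg (coeff (Finsupp.single (some ⟨i + 1, hi⟩) 1)) h2
      simp [chi, coeff_X, Finsupp.single_left_inj] at h3
      exact hb h3
    have h4 := Ideal.height_add_one_le_of_lt_of_isPrime hlt
    refine le_trans ?_ h4
    push_cast
    gcongr
    exact ih (by omega)

lemma ker_psi_height [IsDomain R] {b : ℕ → R} (hb : b 0 ≠ 0) (hl : 0 < l) :
    ((l - 1 : ℕ) : ℕ∞) ≤ (RingHom.ker (psi fun k : Fin l => b k)).height := by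
  refine (ker_chi_height hb (l - 1) (by omega)).trans (Ideal.height_mono ?_)
  have : psi (fun k : Fin l => b k) = (aeval (fun o : Option (Fin l) => o.elim Polynomial.X
      fun k => (0 : Polynomial R))).comp (chi b l (l - 1)) := by
    refine MvPolynomial.algHom_ext fun k => ?_
    have hk : (k : ℕ) ≤ l - 1 := by have := k.2; omega
    simp [chi, psi, hk, ← Polynomial.smul_X_eq_monomial]
  intro x hx
  rw [RingHom.mem_ker] at hx ⊢
  rw [this, AlgHom.comp_apply, hx, map_zero]

end HSec

section DSec
variable {A B : Type*} [CommRing A] [CommRing B]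

lemma dedek [IsDomain B] [IsNoetherianRing B] [IsIntegrallyClosed B] (φ : A →+* B)
    (hφ : φ.IsIntegral) (Q : Ideal A) [Q.IsPrime] (hker : RingHom.ker φ ≤ Q)
    (hht : ∀ P : Ideal A, P.IsPrime → RingHom.ker φ < P → P ≤ Q → P = Q) :
    IsDedekindDomain (Localization (Q.primeCompl.map φ)) := by
  set M := Q.primeCompl.map φ with hM
  have hM0 : M ≤ nonZeroDivisors B := by
    rintro _ ⟨a, ha, rfl⟩
    rw [mem_nonZeroDivisors_iff_ne_zero]
    intro h0
    exact ha (hker h0)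
  have hdom : IsDomain (Localization M) := IsLocalization.isDomain_localization hM0
  have hnoe : IsNoetherianRing (Localization M) := IsLocalization.isNoetherianRing M _ inferInstance
  have hic : IsIntegrallyClosed (Localization M) :=
    isIntegrallyClosed_of_isLocalization _ M hM0
  let := φ.toAlgebra
  have hintg : Algebra.IsIntegral A B := ⟨hφ⟩
  have key : ∀ P : Ideal (Localization M), P.IsPrime → P ≠ ⊥ →
      (P.comap (algebraMap B (Localization M))).comap φ = Q := by
    intro P hP hP0
    have hPB : (⊥ : Ideal B) < P.comap (algebraMap B (Localization M)) := by
      rw [bot_lt_iff_ne_bot]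
      intro h0
      apply hP0
      rw [← IsLocalization.map_under M (Localization M) P, Ideal.under, h0, Ideal.map_bot]
    have hlt := Ideal.IsIntegral.comap_lt_comap (R := A) hPB
    refine hht _ ((hP.comap _).comap _) hlt fun a ha => ?_
    by_contra haQ
    refine hP.ne_top (Ideal.eq_top_of_isUnit_mem _ ha ?_)
    exact IsLocalization.map_units (Localization M) (⟨φ a, a, haQ, rfl⟩ : M)
  have hdim : Ring.DimensionLEOne (Localization M) := by
    refine ⟨fun {P} hP0 hP => ?_⟩
    obtain ⟨P2, hP2, hle⟩ := P.exists_le_maximal hP.ne_top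
    have hP2' := hP2.isPrime
    have hP20 : P2 ≠ ⊥ := fun h => hP0 (le_bot_iff.mp (h ▸ hle))
    have e1 := key P hP hP0
    have e2 := key P2 hP2' hP20
    rcases hle.lt_or_eq with hlt | heq
    · exfalso
      have hlt' : P.comap (algebraMap B (Localization M)) < P2.comap (algebraMap B (Localization M)) := by
        refine lt_of_le_not_ge (Ideal.comap_mono hle) fun h => hlt.not_ge ?_
        rw [← IsLocalization.map_under M (Localization M) P,
          ← IsLocalization.map_under M (Localization M) P2]
        exact Ideal.map_mono h
      have hPc := hP.comap (algebraMap B (Localization M))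
      have := Ideal.IsIntegral.comap_lt_comap (R := A) hlt'
      change Ideal.comap φ _ < Ideal.comap φ _ at this
      rw [e1, e2] at this
      exact lt_irrefl _ this
    · rwa [heq]
  have hded : IsDedekindRing (Localization M) :=
    { hnoe, hdim, (inferInstance : IsIntegralClosure (Localization M) (Localization M) (FractionRing (Localization M))) with }
  exact { hdom, hded with }

end DSec

section SSec
set_option linter.unusedSectionVars false
open MvPolynomial

variable {R : Type u} [CommRing R] [IsNoetherianRing R] [IsDomain R] {I : Ideal R}

lemma red_le (hnI : IsNormalIdeal I) {K N : Ideal R} {n : ℕ} (h : IsReduction (K * I ^ n) N) :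
    N ≤ I ^ n := by
  intro y hy
  by_cases hy0 : y = 0
  · rw [hy0]; exact zero_mem _
  obtain ⟨_, r, hr⟩ := h
  have key : ∀ k : ℕ, y ^ r * y ^ k ∈ (I ^ n) ^ k := by
    intro k
    have h1 : y ^ r * y ^ k ∈ N ^ (r + k) := by
      rw [← pow_add]; exact Ideal.pow_mem_pow hy _
    rw [red_pow hr k] at h1
    exact Ideal.pow_right_mono Ideal.mul_le_right k (Ideal.mul_le_left h1)
  have h3 := hnI n _ (red_of_almost (pow_ne_zero r hy0) key)
  rw [← h3]
  exact Submodule.mem_sup_right (Ideal.mem_span_singleton_self _)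

variable [IsLocalRing R] {l d : ℕ} {b : ℕ → R}

lemma ded_red {W : Type*} [CommRing W] (hW : IsDedekindDomain W) (θ : R →+* W)
    (hθinj : Function.Injective θ) {L N : Ideal R} (hN : IsReduction L N) (hN0 : N ≠ ⊥) :
    Ideal.map θ N = Ideal.map θ L := by
  obtain ⟨_, r, hr⟩ := hN
  have hN0 : Ideal.map θ N ≠ 0 := by
    intro h0
    apply hN0
    rw [eq_bot_iff]
    intro y hyN
    have h1 : θ y ∈ Ideal.map θ N := Ideal.mem_map_of_mem _ hyN
    rw [h0] at h1
    exact hθinj (by rw [map_zero]; exact h1)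
  have h1 := congrArg (Ideal.map θ) hr
  rw [Ideal.map_pow, pow_succ', Ideal.map_mul, Ideal.map_pow] at h1
  exact mul_right_cancel₀ (pow_ne_zero r hN0) h1

lemma Ch.b0 (h : Ch I l d b) (hl : 0 < l) : b 0 ≠ 0 := by
  intro h0
  have h1 := h.reg hl 1 (by rw [h0, zero_mul]; exact zero_mem _)
  exact h.ne 0 hl ((Ideal.eq_top_iff_one _).mpr h1)

lemma Ch.FRpoly (h : Ch I l d b) (hl : 0 < l) {p : Ideal R} (hp : p.IsPrime)
    (hpl : (l : ℕ∞) ≤ p.height) {n : ℕ} {y : R} (hy : ∀ r, r ∈ p ↔ r * y ∈ Aa b l ^ n)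
    {F : MvPolynomial (Fin l) R} (hF : F ∉ Ideal.map (C : R →+* MvPolynomial (Fin l) R) p) :
    ∃ e, eval (fun k : Fin l => b k) (homogeneousComponent e F) * y ∉ Aa b l ^ (n + e) := by
  rw [mem_map_C_iff] at hF
  push Not at hF
  obtain ⟨m, hm⟩ := hF
  refine ⟨m.degree, fun hmem => ?_⟩
  have hU := UU_of_poly (b := b) hp (l - 1) 0 (by omega) m.degree (homogeneousComponent m.degree F)
    (fun m' hm' => ⟨fun k hk => absurd hk (by omega), by
      rw [coeff_homogeneousComponent] at hm'
      by_cases hd : m'.degree = m.degree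
      · rw [← hd, Finsupp.degree_eq_sum]
      · simp [hd] at hm'⟩) ⟨m, by rwa [coeff_homogeneousComponent, if_pos rfl]⟩
  have h0 := h.K0
  obtain ⟨σ, hσ, hσy⟩ := h.FR hp hpl hU n y
    (fun r hr => Submodule.mem_sup_right ((hy r).mp hr)) (Submodule.mem_sup_right hmem)
  rw [h0, bot_sup_eq] at hσy
  exact hσ ((hy σ).mpr hσy)

lemma Ch.step1 [IsIntegrallyClosed R] (h : Ch I l d b) (hl : 0 < l)
    (hred : IsReduction (Aa b l) I) (hnI : IsNormalIdeal I)
    (hKJ : ∀ j, Kk I b l * I ^ j = Kk I b l * Aa b l ^ j) {N : Ideal R} {n : ℕ}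
    (hN : IsReduction (Kk I b l * I ^ n) N) : N ≤ Aa b l ^ n := by
  by_contra hcon
  have hNI := red_le hnI hN
  obtain ⟨p, hp, y, hyN, hyJ, hy⟩ := AP_exists hcon
  -- `K ≤ p`
  have hKp : Kk I b l ≤ p := by
    intro σ hσ
    have h1 : σ ^ n * y ∈ Aa b l ^ n := by
      have h2 : σ ^ n * y ∈ Kk I b l ^ n * I ^ n :=
        Ideal.mul_mem_mul (Ideal.pow_mem_pow hσ n) (hNI hyN)
      rw [← mul_pow] at h2
      exact Ideal.pow_right_mono (Kk_mul_le I b l) n h2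
    exact hp.mem_of_pow_mem n ((hy _).mpr h1)
  have hpl : (l : ℕ∞) ≤ p.height := (h.pp l le_rfl).2.1 p hp hKp
  have hpu : p.height ≤ l := h.assJ hl ⟨hp, y, hy⟩
  have hb0 := h.b0 hl
  have hf : ∀ k : Fin l, b k ∈ I := fun k => h.mem k
  let φ := psiB hf
  set Q : Ideal (MvPolynomial (Fin l) R) := Ideal.map C p with hQ
  have hQp : Q.IsPrime := mapC_prime hp
  have hcoef : ∀ F, ∀ e, ((φ F : reesAlgebra I) : Polynomial R).coeff e =
      eval (fun k : Fin l => b k) (homogeneousComponent e F) := fun F e => psi_coeff _ F e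
  have hkerpsi : RingHom.ker φ.toRingHom = RingHom.ker (psi fun k : Fin l => b k) := by
    ext F
    rw [RingHom.mem_ker, RingHom.mem_ker]
    exact Subtype.ext_iff
  have hker : RingHom.ker φ.toRingHom ≤ Q := by
    intro F hF
    by_contra hFQ
    obtain ⟨e, he⟩ := h.FRpoly hl hp hpl hy hFQ
    apply he
    have h0 : φ F = 0 := hF
    rw [← hcoef, h0]
    simp
  have hded : IsDedekindDomain (Localization (Q.primeCompl.map φ.toRingHom)) := by
    have := rees_intClosed h.Ine hnI
    refine dedek φ.toRingHom (psiB_isIntegral hf (by rw [Aa_range]; exact hred) h.Ine) Q hker ?_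
    intro P hP hlt hle
    rw [hkerpsi] at hlt
    have hkp := RingHom.ker_isPrime (psi fun k : Fin l => b k)
    have h1 := ker_psi_height (l := l) hb0 hl
    have h2 := Ideal.height_add_one_le_of_lt_of_isPrime hlt
    rcases hle.lt_or_eq with hlt2 | heq
    · exfalso
      have h3 := Ideal.height_add_one_le_of_lt_of_isPrime hlt2
      have h4 : Q.height ≤ l := (mapC_height hp).trans hpu
      have h5 : ((l - 1 + 1 + 1 : ℕ) : ℕ∞) ≤ l := by
        rw [Nat.cast_add, Nat.cast_add, Nat.cast_one]
        refine le_trans ?_ (h3.trans h4)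
        gcongr
        refine le_trans ?_ h2
        gcongr
      have h6 := Nat.cast_le.mp h5
      omega
    · exact heq
  set M := Q.primeCompl.map φ.toRingHom with hM
  let θ : R →+* Localization M := (algebraMap (reesAlgebra I) (Localization M)).comp
    (algebraMap R (reesAlgebra I))
  -- `b 0 X` is a unit
  have hX : (X ⟨0, hl⟩ : MvPolynomial (Fin l) R) ∉ Q := by
    intro hX
    have := mem_map_C_iff.mp hX (Finsupp.single ⟨0, hl⟩ 1)
    rw [coeff_X_same] at this
    exact hp.ne_top ((Ideal.eq_top_iff_one _).mpr this)
  have hunit : IsUnit (algebraMap (reesAlgebra I) (Localization M) (φ (X ⟨0, hl⟩))) :=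
    IsLocalization.map_units (Localization M) (⟨φ (X ⟨0, hl⟩), _, hX, rfl⟩ : M)
  have hIW : Ideal.map θ I ≤ Ideal.span {θ (b 0)} := by
    rw [Ideal.map_le_iff_le_comap]
    intro x hx
    rw [Ideal.mem_comap, ← Ideal.unit_mul_mem_iff_mem _ hunit]
    have e : φ (X ⟨0, hl⟩) * algebraMap R (reesAlgebra I) x =
        (⟨Polynomial.monomial 1 x, reesAlgebra.monomial_mem.mpr (by simpa using hx)⟩ : reesAlgebra I)
          * algebraMap R (reesAlgebra I) (b 0) := by
      apply Subtype.ext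
      change psi _ (X _) * Polynomial.C x = Polynomial.monomial 1 x * Polynomial.C (b 0)
      simp [psi, mul_comm]
    change _ * algebraMap (reesAlgebra I) (Localization M) (algebraMap R (reesAlgebra I) x) ∈ _
    rw [← map_mul, e, map_mul]
    exact Ideal.mul_mem_left _ _ (Ideal.mem_span_singleton_self _)
  have hθinj : Function.Injective θ := by
    refine (IsLocalization.injective (Localization M) (M := M) ?_).comp ?_
    · rintro _ ⟨a, ha, rfl⟩
      rw [mem_nonZeroDivisors_iff_ne_zero]
      exact fun h0 => ha (hker h0)
    · intro x z hxz
      have := congrArg (fun w : reesAlgebra I => (w : Polynomial R).coeff 0) hxz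
      change (Polynomial.C x).coeff 0 = (Polynomial.C z).coeff 0 at this
      simpa using this
  have hNW : Ideal.map θ N = Ideal.map θ (Kk I b l * I ^ n) :=
    ded_red hded θ hθinj hN (fun h0 => hcon (h0 ▸ bot_le))
  have hyW : algebraMap (reesAlgebra I) (Localization M) (algebraMap R (reesAlgebra I) y) ∈
      Ideal.map (algebraMap (reesAlgebra I) (Localization M))
        (Ideal.map (algebraMap R (reesAlgebra I)) (Ideal.span {b 0 ^ n} * Kk I b l)) := by
    rw [Ideal.map_map]
    change θ y ∈ Ideal.map θ _
    have h1 : θ y ∈ Ideal.map θ N := Ideal.mem_map_of_mem _ hyN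
    rw [hNW, Ideal.map_mul, Ideal.map_pow] at h1
    rw [mul_comm, Ideal.map_mul, Ideal.map_span, Set.image_singleton, map_pow,
      ← Ideal.span_singleton_pow]
    exact Ideal.mul_mono_right (Ideal.pow_right_mono hIW n) h1
  obtain ⟨m, ⟨F, hFQ, hFm⟩, hmy⟩ := (IsLocalization.algebraMap_mem_map_algebraMap_iff M _ _ _).mp hyW
  obtain ⟨e, he⟩ := h.FRpoly hl hp hpl hy hFQ
  apply he
  have h1 := coeff_mem_of_map hmy e
  have h2 : ((m * algebraMap R (reesAlgebra I) y : reesAlgebra I) : Polynomial R).coeff e =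
      eval (fun k : Fin l => b k) (homogeneousComponent e F) * y := by
    rw [← hFm, ← hcoef]
    change ((φ F : reesAlgebra I) * Polynomial.C y : Polynomial R).coeff e = _
    rw [Polynomial.coeff_mul_C]
  rw [h2, mul_assoc, hKJ, ← mul_assoc, mul_right_comm, mul_comm] at h1
  have h3 := Ideal.mul_le_right h1
  rw [pow_add]
  refine Ideal.mul_mono_left ?_ h3
  rw [Ideal.span_singleton_le_iff_mem]
  exact Ideal.pow_mem_pow (mem_Aa b hl) n

end SSec

section FSec
set_option linter.unusedSectionVars false

variable {R : Type u} [CommRing R] [IsNoetherianRing R] [IsDomain R] [IsLocalRing R] {I : Ideal R}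
  {l d : ℕ} {b : ℕ → R}

lemma ne_bot_of_ht (hht : (0 : WithBot ℕ∞) < ht I) : I ≠ ⊥ := by
  rintro rfl
  have h1 : ht (⊥ : Ideal R) ≤ 0 := by
    refine (iInf₂_le (⟨⊥, Ideal.isPrime_bot⟩ : PrimeSpectrum R) bot_le).trans ?_
    rw [rDim_loc]
    simp
  exact absurd hht (not_lt.mpr h1)

lemma Ch.final [IsIntegrallyClosed R] (h : Ch I l d b) (hl : 0 < l)
    (hred : IsReduction (Aa b l) I) (hnI : IsNormalIdeal I)
    (hKJ : ∀ j, Kk I b l * I ^ j = Kk I b l * Aa b l ^ j) (j : ℕ) :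
    IsIntClosedIdeal (Kk I b l * I ^ j) := by
  intro N hN
  refine le_antisymm (fun x hx => ?_) hN.1
  have h1 := h.step1 hl hred hnI hKJ hN
  have h2 : IsReduction (Kk I b l * I ^ (j + 1)) (N * I) := by
    obtain ⟨hle, r, hr⟩ := hN
    refine ⟨?_, r, ?_⟩
    · rw [pow_succ, ← mul_assoc]; exact Ideal.mul_mono_left hle
    · rw [mul_pow, mul_pow, hr, pow_succ I j, pow_succ I r]
      ring
  have h3 := h.step1 hl hred hnI hKJ h2
  rw [hKJ]
  exact h.two hl (h1 hx) fun c hc => h3 (Ideal.mul_mem_mul hx hc)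

end FSec

/-- Theorem 2.11(2): if moreover `R` is normal and `I` is a normal ideal, then
`(J : I)I^j` is integrally closed for every `j ≥ 0`; in particular `J : I` and
`core I` are integrally closed. -/
theorem statement9 {R : Type u} [CommRing R] [IsNoetherianRing R] [IsLocalRing R]
    (hCM : IsCMLocalRing R) (hres : Infinite (ResidueField R))
    (I : Ideal R) (l : ℕ) (hl : fiberDim I = (l : WithBot ℕ∞))
    (hht : (0 : WithBot ℕ∞) < ht I)
    (hG : Gcond I l) (hAN : ANminus I (l - 1)) (hS2 : UnivWeaklyResS2 I (l - 1))
    (hbal : ∀ J₁ J₂, IsMinimalReduction J₁ I → IsMinimalReduction J₂ I →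
      Submodule.colon J₁ I = Submodule.colon J₂ I)
    (hdom : IsDomain R) (hic : IsIntegrallyClosed R) (hnI : IsNormalIdeal I) :
    ∀ J, IsMinimalReduction J I →
      (∀ j : ℕ, IsIntClosedIdeal (Submodule.colon J I * I ^ j)) ∧
      IsIntClosedIdeal (Submodule.colon J I) ∧ IsIntClosedIdeal (core I) := by
  intro J hJ
  by_cases hItop : I = ⊤
  · subst hItop
    have htop : ∀ J' : Ideal R, IsMinimalReduction J' ⊤ → J' = ⊤ := by
      rintro J' ⟨⟨_, r, hr⟩, _⟩
      simpa [Ideal.top_pow, eq_comm] using hr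
    have hcl : IsIntClosedIdeal (⊤ : Ideal R) := fun N hN => top_le_iff.mp hN.1
    have hJt := htop J hJ
    have hK : Submodule.colon J ((⊤ : Ideal R) : Set R) = ⊤ := by
      rw [hJt]; exact top_le_iff.mp le_col
    have hcore : core (⊤ : Ideal R) = ⊤ := by
      rw [core, sInf_eq_top]
      exact htop
    rw [hK, hcore]
    refine ⟨fun j => ?_, hcl, hcl⟩
    rw [Ideal.top_pow, Ideal.top_mul]
    exact hcl
  have hIm : I ≤ maximalIdeal R := le_maximalIdeal hItop
  have hI := ne_bot_of_ht hht
  obtain ⟨a₁, ha₁⟩ := Y hJ hI hl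
  have hlpos : 0 < l := by
    rcases Nat.eq_zero_or_pos l with rfl | h
    · exfalso
      obtain ⟨_, r, hr⟩ := hJ.1
      have : J = ⊥ := by rw [← ha₁]; simp
      rw [this, Ideal.bot_mul] at hr
      exact pow_ne_zero (r + 1) hI hr
    · exact h
  let a₀ : ℕ → R := fun k => if hk : k < l then a₁ ⟨k, hk⟩ else 0
  have hmem₁ : ∀ k, a₁ k ∈ I := fun k => hJ.1.1 (ha₁ ▸ Ideal.subset_span ⟨k, rfl⟩)
  have ha₀ : ∀ k, a₀ k ∈ I := by
    intro k
    by_cases hk : k < l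
    · simp only [a₀, hk, dite_true]; exact hmem₁ _
    · simp only [a₀, hk, dite_false]; exact zero_mem _
  have hr₀ : IsReduction (Ideal.span (a₀ '' Set.Iio l)) I := by
    have e : Ideal.span (a₀ '' Set.Iio l) = J := by
      change Aa a₀ l = J
      rw [← Aa_range, ← ha₁]
      congr 2
      funext k
      simp [a₀]
    rw [e]; exact hJ.1
  obtain ⟨a, ha, hred, hpp⟩ := build hG hI ha₀ hr₀ l le_rfl
  obtain ⟨d, hd⟩ : ∃ d : ℕ, ringKrullDim R = d := by
    have h1 := IsLocalRing.maximalIdeal_height_eq_ringKrullDim (R := R)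
    have h2 := Ideal.height_ne_top (I := maximalIdeal R) (Ideal.IsPrime.ne_top inferInstance)
    obtain ⟨d, hd⟩ := ENat.ne_top_iff_exists.mp h2
    exact ⟨d, by rw [← h1, ← hd]; rfl⟩
  have hDp : Dp (⊥ : Ideal R) d := by
    refine Dp_of_depth bot_ne_top ?_
    have h1 : ringKrullDim R = (qDepth R (⊥ : Ideal R) : WithBot ℕ∞) := hCM
    rw [hd] at h1
    exact (WithBot.coe_inj.mp h1).le
  have hCh : Ch I l d a := mkCh hIm hI hd hDp hAN hl ha hpp 1 (fun k hk => hk)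
  have hAa : IsMinimalReduction (Aa a l) I := Mn hI hl hred
  have hcore := core_le hIm hI hd hDp hAN hl ha hred hpp
  have hKI : Kk I a l * I ≤ core I := by
    refine le_sInf fun J' hJ' => ?_
    rw [Kk, hbal _ _ hAa hJ', Ideal.mul_le]
    intro r hr x hx
    exact mem_col.mp hr x hx
  have hKJI : Kk I a l * Aa a l ≤ Kk I a l * I := Ideal.mul_mono_right hred.1
  have e1 : Kk I a l * I = Kk I a l * Aa a l := le_antisymm (hKI.trans hcore) hKJI
  have e2 : core I = Kk I a l * I := le_antisymm (hcore.trans hKJI) hKI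
  have hKJ : ∀ j, Kk I a l * I ^ j = Kk I a l * Aa a l ^ j := by
    intro j
    induction j with
    | zero => simp
    | succ j ih => rw [pow_succ, ← mul_assoc, ih, mul_right_comm, e1, mul_assoc, ← pow_succ']
  have hfin := hCh.final hlpos hred hnI hKJ
  have hK : Submodule.colon J (I : Set R) = Kk I a l := hbal _ _ hJ hAa
  rw [hK]
  refine ⟨hfin, ?_, ?_⟩
  · simpa using hfin 0
  · rw [e2]; simpa using hfin 1

end CPU
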